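/- Let 𝕋_4 denote the 4-uniform generalized triangle. There exist constants N_0 and c > 0 such that for all integers n ≥ N_0 and all integers t with 0 ≤ t ≤ c·n, one has EX(n,(t+1)𝕋_4) = { K_t^4 ⋈ T_4(n−t,4) }. -/

import Mathlib

open Filter

namespace DensityCH

/-- An `r`-uniform hypergraph with vertices in `ℕ`:
a finite vertex set together with a set of `r`-element edges. -/
structure HGraph (r : ℕ) where
  verts : Finset ℕ
  edges : Finset (Finset ℕ)
  edges_sub : ∀ e ∈ edges, e ⊆ verts
  edges_card : ∀ e ∈ edges, e.card = r

namespace HGraph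

/-- Build an `r`-graph from a vertex set and a set of candidate edges,
keeping exactly the well-formed candidates. -/
def ofEdges (r : ℕ) (V : Finset ℕ) (E : Finset (Finset ℕ)) : HGraph r where
  verts := V
  edges := E.filter fun e => e ⊆ V ∧ e.card = r
  edges_sub := fun e he => ((Finset.mem_filter.mp he).2).1
  edges_card := fun e he => ((Finset.mem_filter.mp he).2).2

variable {r : ℕ}

/-- `H` contains a copy of `F`, i.e. a subgraph isomorphic to `F`. -/
def IsCopyIn (F H : HGraph r) : Prop :=
  ∃ f : ℕ → ℕ, Set.InjOn f ↑F.verts ∧ (∀ v ∈ F.verts, f v ∈ H.verts) ∧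
    ∀ e ∈ F.edges, e.image f ∈ H.edges

/-- The subgraph of `H` induced on `S`. -/
def induce (H : HGraph r) (S : Finset ℕ) : HGraph r :=
  ofEdges r (H.verts ∩ S) (H.edges.filter fun e => e ⊆ S)

/-- Delete a vertex from `H`. -/
def deleteVert (H : HGraph r) (v : ℕ) : HGraph r :=
  ofEdges r (H.verts.erase v) (H.edges.filter fun e => v ∉ e)

/-- The degree of a vertex. -/
def deg (H : HGraph r) (v : ℕ) : ℕ := (H.edges.filter fun e => v ∈ e).card

/-- The maximum degree `Δ(H)`. -/
def maxDeg (H : HGraph r) : ℕ := H.verts.sup H.deg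

/-- The minimum degree `δ(H)`. -/
def minDeg (H : HGraph r) : ℕ :=
  if h : H.verts.Nonempty then H.verts.inf' h H.deg else 0

/-- The average degree `d(H) = r·|E(H)|/|V(H)|`. -/
noncomputable def avgDeg (H : HGraph r) : ℝ :=
  (r : ℝ) * (H.edges.card : ℝ) / (H.verts.card : ℝ)

/-- `H` contains `k` pairwise vertex-disjoint copies of `F`, i.e. `ν(F,H) ≥ k`. -/
def HasMatching (F H : HGraph r) (k : ℕ) : Prop :=
  ∃ S : Fin k → Finset ℕ,
    (∀ i, S i ⊆ H.verts ∧ (S i).card = F.verts.card) ∧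
    (∀ i j, i ≠ j → Disjoint (S i) (S j)) ∧
    ∀ i, F.IsCopyIn (H.induce (S i))

/-- Isomorphism of hypergraphs. -/
def Iso (G H : HGraph r) : Prop :=
  ∃ f : ℕ → ℕ, Set.BijOn f ↑G.verts ↑H.verts ∧
    ∀ e ∈ Finset.powersetCard r G.verts, (e ∈ G.edges ↔ e.image f ∈ H.edges)

/-- The join `G ⋈ H`: all edges of `G`, all edges of `H`, and all `r`-sets meeting
both vertex sets. -/
def join (G H : HGraph r) : HGraph r :=
  ofEdges r (G.verts ∪ H.verts)
    (G.edges ∪ H.edges ∪ ((Finset.powersetCard r (G.verts ∪ H.verts)).filter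
      fun e => (e ∩ G.verts).Nonempty ∧ (e ∩ H.verts).Nonempty))

end HGraph

/-- The complete `r`-graph on a vertex set `S`. -/
def completeOn (r : ℕ) (S : Finset ℕ) : HGraph r :=
  HGraph.ofEdges r S (Finset.powersetCard r S)

/-- The `r`-graph on `V` with no edges. -/
def emptyOn (r : ℕ) (V : Finset ℕ) : HGraph r := HGraph.ofEdges r V ∅

/-- The Turán number `ex(n,F)`. -/
noncomputable def exN (r n : ℕ) (F : HGraph r) : ℕ :=
  sSup {m | ∃ H : HGraph r, H.verts.card = n ∧ ¬ F.IsCopyIn H ∧ H.edges.card = m}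

/-- `d(n,F) = r·ex(n,F)/n`. -/
noncomputable def dN (r n : ℕ) (F : HGraph r) : ℝ := (r : ℝ) * (exN r n F : ℝ) / (n : ℝ)

/-- `δ(n,F) = ex(n,F) − ex(n−1,F)` (as a real number). -/
noncomputable def deltaN (r n : ℕ) (F : HGraph r) : ℝ := (exN r n F : ℝ) - (exN r (n-1) F : ℝ)

/-- `x` is the Turán density `π(F)`, i.e. the limit of `ex(n,F)/C(n,r)`. -/
def HasTuranDensity (r : ℕ) (F : HGraph r) (x : ℝ) : Prop :=
  Tendsto (fun n : ℕ => (exN r n F : ℝ) / (n.choose r : ℝ)) atTop (nhds x)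

/-- `ex(n,(t+1)F)`: the maximum number of edges of an `n`-vertex `r`-graph with no
`t+1` pairwise vertex-disjoint copies of `F`. -/
noncomputable def exMatchN (r n t : ℕ) (F : HGraph r) : ℕ :=
  sSup {m | ∃ H : HGraph r, H.verts.card = n ∧ ¬ F.HasMatching H (t+1) ∧ H.edges.card = m}

/-- `H ∈ EX(n,F)`. -/
def IsExtremalFree (r n : ℕ) (F H : HGraph r) : Prop :=
  H.verts.card = n ∧ ¬ F.IsCopyIn H ∧ H.edges.card = exN r n F

/-- `H ∈ EX(n,(t+1)F)`. -/
def IsExtremalMatchingFree (r n t : ℕ) (F H : HGraph r) : Prop :=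
  H.verts.card = n ∧ ¬ F.HasMatching H (t+1) ∧ H.edges.card = exMatchN r n t F

/-- `F` is `(f1, f2)`-bounded at `n`. -/
def BoundedAt (r n : ℕ) (F : HGraph r) (f1 f2 : ℝ) : Prop :=
  ∀ H : HGraph r, H.verts.card = n → ¬ F.IsCopyIn H →
    dN r n F - f1 ≤ H.avgDeg → (H.maxDeg : ℝ) ≤ dN r n F + f2

/-- `ex(·,F)` is `g`-smooth at `n`: `|δ(n,F) − d(n−1,F)| ≤ g(n)`. -/
def SmoothAt (r n : ℕ) (F : HGraph r) (g : ℝ) : Prop :=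
  |deltaN r n F - dN r (n-1) F| ≤ g

/-- The collection `H 0, …, H t` (on a common vertex set) has a rainbow `F`-matching. -/
def HasRainbowMatching (r t : ℕ) (F : HGraph r) (H : Fin (t+1) → HGraph r) : Prop :=
  ∃ S : Fin (t+1) → Finset ℕ,
    (∀ i, S i ⊆ (H i).verts ∧ (S i).card = F.verts.card) ∧
    (∀ i j, i ≠ j → Disjoint (S i) (S j)) ∧
    ∀ i, F.IsCopyIn ((H i).induce (S i))

/-!  Patterns -/

/-- An `r`-uniform pattern: a finite index set together with a collection of
`r`-multisets on it. -/
structure Pattern (r : ℕ) where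
  idx : Finset ℕ
  mE : Finset (Multiset ℕ)
  card_eq : ∀ s ∈ mE, Multiset.card s = r
  mem_idx : ∀ s ∈ mE, ∀ i ∈ s, i ∈ idx

namespace Pattern

variable {r : ℕ}

/-- The pattern `P − i`. -/
def erase (P : Pattern r) (i : ℕ) : Pattern r where
  idx := P.idx.erase i
  mE := P.mE.filter fun s => i ∉ s
  card_eq := fun s hs => P.card_eq s (Finset.mem_filter.mp hs).1
  mem_idx := by
    intro s hs j hj
    have h1 := Finset.mem_filter.mp hs
    refine Finset.mem_erase.mpr ⟨?_, P.mem_idx s h1.1 j hj⟩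
    rintro rfl
    exact h1.2 hj

/-- `H` is a `P`-construction: a blowup of the pattern `P`. -/
def IsConstruction (P : Pattern r) (H : HGraph r) : Prop :=
  ∃ part : ℕ → ℕ, (∀ v ∈ H.verts, part v ∈ P.idx) ∧
    ∀ e : Finset ℕ, e ∈ H.edges ↔ (e ⊆ H.verts ∧ e.card = r ∧ Multiset.map part e.val ∈ P.mE)

/-- `H` is a `P`-subconstruction: a subgraph of a `P`-construction. -/
def IsSubconstruction (P : Pattern r) (H : HGraph r) : Prop :=
  ∃ G : HGraph r, P.IsConstruction G ∧ H.verts ⊆ G.verts ∧ H.edges ⊆ G.edges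

end Pattern

/-- `Λ(P,n)`: the maximum number of edges of an `n`-vertex `P`-construction. -/
noncomputable def patEx (r : ℕ) (P : Pattern r) (n : ℕ) : ℕ :=
  sSup {m | ∃ H : HGraph r, P.IsConstruction H ∧ H.verts.card = n ∧ H.edges.card = m}

/-- The Lagrangian `λ(P) = lim Λ(P,n)/C(n,r)`. -/
noncomputable def patLagrangian (r : ℕ) (P : Pattern r) : ℝ :=
  limUnder atTop fun n : ℕ => (patEx r P n : ℝ) / (n.choose r : ℝ)

/-- The pattern `P` is minimal: `λ(P−i) < λ(P)` for all `i`. -/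
def Pattern.Minimal {r : ℕ} (P : Pattern r) : Prop :=
  ∀ i ∈ P.idx, patLagrangian r (P.erase i) < patLagrangian r P

/-- `(F,P)` is a Turán pair. -/
def IsTuranPair (r : ℕ) (F : HGraph r) (P : Pattern r) : Prop :=
  (∀ H : HGraph r, P.IsConstruction H → ¬ F.IsCopyIn H) ∧
  (∀ H : HGraph r, ¬ F.IsCopyIn H → H.edges.card = exN r H.verts.card F →
    P.IsConstruction H)

/-- `F` is edge-stable with respect to `P` (with Turán density `π`). -/
def EdgeStable (r : ℕ) (F : HGraph r) (P : Pattern r) (π : ℝ) : Prop :=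
  ∀ δ : ℝ, 0 < δ → ∃ N₀ : ℕ, ∃ ζ : ℝ, 0 < ζ ∧
    ∀ H : HGraph r, N₀ ≤ H.verts.card → ¬ F.IsCopyIn H →
      (π - ζ) * (H.verts.card.choose r : ℝ) ≤ (H.edges.card : ℝ) →
      ∃ H' : HGraph r, H'.verts ⊆ H.verts ∧ H'.edges ⊆ H.edges ∧
        (π - δ) * (H.verts.card.choose r : ℝ) ≤ (H'.edges.card : ℝ) ∧
        P.IsSubconstruction H'

/-- `F` is weakly vertex-extendable with respect to `P` (with Turán density `π`). -/
def WeaklyVertexExtendable (r : ℕ) (F : HGraph r) (P : Pattern r) (π : ℝ) : Prop :=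
  ∀ δ : ℝ, 0 < δ → ∃ N₀ : ℕ, ∃ ζ : ℝ, 0 < ζ ∧
    ∀ H : HGraph r, N₀ ≤ H.verts.card → ¬ F.IsCopyIn H →
      (π - ζ) * (((H.verts.card - 1).choose (r-1) : ℕ) : ℝ) ≤ (H.minDeg : ℝ) →
      ∀ v ∈ H.verts, P.IsSubconstruction (H.deleteVert v) →
        (H.deg v : ℝ) ≤ (π + δ) * (((H.verts.card - 1).choose (r-1) : ℕ) : ℝ)

/-- `F` is degree-stable with respect to `P` (with Turán density `π`). -/
def DegreeStable (r : ℕ) (F : HGraph r) (P : Pattern r) (π : ℝ) : Prop :=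
  ∃ ζ : ℝ, 0 < ζ ∧ ∃ N₀ : ℕ,
    ∀ H : HGraph r, N₀ ≤ H.verts.card → ¬ F.IsCopyIn H →
      (π - ζ) * (((H.verts.card - 1).choose (r-1) : ℕ) : ℝ) ≤ (H.minDeg : ℝ) →
      P.IsSubconstruction H

/-!  Concrete constructions -/

/-- The generalized Turán graph `T_r(·,ℓ)` on vertex set `V` (parts are residue
classes mod `ℓ`; on an interval these are balanced). -/
def turanOn (r ℓ : ℕ) (V : Finset ℕ) : HGraph r :=
  HGraph.ofEdges r V ((Finset.powersetCard r V).filter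
    fun e => ∀ u ∈ e, ∀ v ∈ e, u % ℓ = v % ℓ → u = v)

/-- The `r`-graph on `V₁ ∪ V₂` whose edges are all `r`-sets meeting both parts. -/
def crossOn (r : ℕ) (V₁ V₂ : Finset ℕ) : HGraph r :=
  HGraph.ofEdges r (V₁ ∪ V₂) ((Finset.powersetCard r (V₁ ∪ V₂)).filter
    fun e => (e ∩ V₁).Nonempty ∧ (e ∩ V₂).Nonempty)

/-- The `r`-graph on `V₁ ∪ V₂` whose edges are all `r`-sets meeting `V₁` in an odd
number of vertices. -/
def oddCross (r : ℕ) (V₁ V₂ : Finset ℕ) : HGraph r :=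
  HGraph.ofEdges r (V₁ ∪ V₂) ((Finset.powersetCard r (V₁ ∪ V₂)).filter
    fun e => Odd (e ∩ V₁).card)

/-- The Fano plane. -/
def fano : HGraph 3 :=
  HGraph.ofEdges 3 (Finset.Icc 1 7)
    {({1,2,3} : Finset ℕ), {3,4,5}, {5,6,1}, {1,7,4}, {2,7,5}, {3,7,6}, {2,4,6}}

/-- The generalized triangle `𝕋_r`, with edges `{1,…,r}`, `{1,…,r−1,r+1}` and
`{r,…,2r−1}`. -/
def genTri (r : ℕ) : HGraph r :=
  HGraph.ofEdges r (Finset.Icc 1 (2*r - 1))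
    {Finset.Icc 1 r, Finset.Icc 1 (r-1) ∪ {r+1}, Finset.Icc r (2*r - 1)}

/-- `G` is a blowup of the `r`-graph `W` (viewing `W` as a pattern). -/
def IsBlowupOf {r : ℕ} (W G : HGraph r) : Prop :=
  ∃ part : ℕ → ℕ, (∀ v ∈ G.verts, part v ∈ W.verts) ∧
    ∀ e : Finset ℕ, e ∈ G.edges ↔
      (e ⊆ G.verts ∧ e.card = r ∧ ∃ f ∈ W.edges, Multiset.map part e.val = f.val)

/-- The expansion `H^F` of an `r`-graph `F`: for every pair of vertices not covered
by an edge of `F`, add an edge consisting of this pair plus `r−2` new vertices,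
these sets of new vertices being pairwise disjoint. -/
def HGraph.expansion {r : ℕ} (F : HGraph r) : HGraph r :=
  HGraph.ofEdges r
    (F.verts ∪ (((F.verts ×ˢ F.verts).filter fun p =>
        p.1 < p.2 ∧ ∀ e ∈ F.edges, ¬ (p.1 ∈ e ∧ p.2 ∈ e)).biUnion fun p =>
      (Finset.range (r-2)).image fun s =>
        (F.verts.sup id + 1) + (p.1 * (F.verts.sup id + 1) + p.2) * r + s))
    (F.edges ∪ (((F.verts ×ˢ F.verts).filter fun p =>
        p.1 < p.2 ∧ ∀ e ∈ F.edges, ¬ (p.1 ∈ e ∧ p.2 ∈ e)).image fun p =>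
      insert p.1 (insert p.2 ((Finset.range (r-2)).image fun s =>
        (F.verts.sup id + 1) + (p.1 * (F.verts.sup id + 1) + p.2) * r + s))))

/-- A `2`-graph is a tree on `k` vertices: `k` vertices, `k−1` edges, connected. -/
def IsTreeGraph (k : ℕ) (T : HGraph 2) : Prop :=
  T.verts.card = k ∧ T.edges.card = k - 1 ∧
  ∀ S : Finset ℕ, S ⊆ T.verts → S.Nonempty → S ≠ T.verts →
    ∃ e ∈ T.edges, (e ∩ S).Nonempty ∧ (e \ S).Nonempty

/-- `T` satisfies the Erdős–Sós property for `k`: every graph with average degree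
greater than `k−2` contains `T`. -/
def ErdosSos (k : ℕ) (T : HGraph 2) : Prop :=
  ∀ G : HGraph 2, ((k : ℝ) - 2) * (G.verts.card : ℝ) < 2 * (G.edges.card : ℝ) →
    T.IsCopyIn G

/-- The `(r−2)`-expansion `Exp(T)` of a `2`-graph `T`: enlarge every edge by one
common fixed set of `r−2` new vertices. -/
def expTree (r : ℕ) (T : HGraph 2) : HGraph r :=
  HGraph.ofEdges r
    (T.verts ∪ ((Finset.range (r-2)).image fun s => T.verts.sup id + 1 + s))
    (T.edges.image fun e =>
      e ∪ ((Finset.range (r-2)).image fun s => T.verts.sup id + 1 + s))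

/-- The chromatic number of a `2`-graph. -/
noncomputable def chrom (F : HGraph 2) : ℕ :=
  sInf {k | ∃ c : ℕ → ℕ, (∀ v ∈ F.verts, c v < k) ∧
    ∀ e ∈ F.edges, ∀ u ∈ e, ∀ v ∈ e, u ≠ v → c u ≠ c v}

/-- A graph is edge-critical if deleting some edge lowers its chromatic number. -/
def EdgeCritical (F : HGraph 2) : Prop :=
  ∃ e ∈ F.edges, chrom (HGraph.ofEdges 2 F.verts (F.edges.erase e)) < chrom F

/-- `H` is semibipartite: the vertex set splits into `V₁ ∪ V₂` so that every edge
has exactly one vertex in `V₁`. -/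
def Semibipartite (r : ℕ) (H : HGraph r) : Prop :=
  ∃ V₁ ⊆ H.verts, ∀ e ∈ H.edges, (e ∩ V₁).card = 1

/-- `H` is a `K_ℓ^r`-subconstruction, i.e. an `ℓ`-partite `r`-graph. -/
def IsKlSub (r ℓ : ℕ) (H : HGraph r) : Prop :=
  ∃ f : ℕ → ℕ, (∀ v ∈ H.verts, f v < ℓ) ∧
    ∀ e ∈ H.edges, ∀ u ∈ e, ∀ v ∈ e, f u = f v → u = v

/-- The Lagrangian `λ(W)` of an `r`-graph `W`, viewing `W` as a pattern. -/
noncomputable def hgLagrangian (r : ℕ) (W : HGraph r) : ℝ :=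
  limUnder atTop fun n : ℕ =>
    ((sSup {m | ∃ G : HGraph r, IsBlowupOf W G ∧ G.verts.card = n ∧ G.edges.card = m} : ℕ) : ℝ)
      / (n.choose r : ℝ)

/-- The `r`-graph `B(r,ℓ+1)`. -/
def BGraph (r ℓ : ℕ) : HGraph r :=
  HGraph.ofEdges r (Finset.Icc 1 (ℓ+1))
    (insert (Finset.Icc 1 r)
      ((Finset.powersetCard r (Finset.Icc 2 (ℓ+1))).filter
        fun e => (e ∩ Finset.Icc 2 r).card ≤ 1))

/-- The `r`-uniform matching of size two, `M_2^r`. -/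
def matching2 (r : ℕ) : HGraph r :=
  HGraph.ofEdges r (Finset.Icc 1 (2*r)) {Finset.Icc 1 r, Finset.Icc (r+1) (2*r)}

/-- The expanded triangle `𝓒_3^{2r}`. -/
def expandedTriangle (r : ℕ) : HGraph (2*r) :=
  HGraph.ofEdges (2*r) (Finset.Icc 1 (3*r))
    {Finset.Icc 1 (2*r), Finset.Icc (r+1) (3*r), Finset.Icc 1 r ∪ Finset.Icc (2*r+1) (3*r)}

/-- The `4`-graph `𝔽_{4,3}`. -/
def F43 : HGraph 4 :=
  HGraph.ofEdges 4 (Finset.Icc 1 7)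
    {({1,2,3,4} : Finset ℕ), {1,2,3,5}, {1,2,3,6}, {1,2,3,7}, {4,5,6,7}}

/-- The `3`-graph `𝔽_{3,2}`. -/
def F32 : HGraph 3 :=
  HGraph.ofEdges 3 (Finset.Icc 1 5)
    {({1,2,3} : Finset ℕ), {1,2,4}, {1,2,5}, {3,4,5}}

/-- `H` contains pairwise vertex-disjoint copies of `F i`, `ts i` many of each. -/
def HasMixedMatching (r k : ℕ) (F : Fin k → HGraph r) (ts : Fin k → ℕ)
    (H : HGraph r) : Prop :=
  ∃ S : (i : Fin k) → Fin (ts i) → Finset ℕ,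
    (∀ i j, S i j ⊆ H.verts ∧ (S i j).card = (F i).verts.card) ∧
    (∀ p q : Σ i : Fin k, Fin (ts i), p ≠ q → Disjoint (S p.1 p.2) (S q.1 q.2)) ∧
    ∀ i j, (F i).IsCopyIn (H.induce (S i j))

/-- `ex(n, ⊔ᵢ tᵢ Fᵢ)`. -/
noncomputable def exMixedN (r k : ℕ) (F : Fin k → HGraph r) (ts : Fin k → ℕ)
    (n : ℕ) : ℕ :=
  sSup {m | ∃ H : HGraph r, H.verts.card = n ∧ ¬ HasMixedMatching r k F ts H ∧
    H.edges.card = m}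

/-- `ex(n, {F₁,…,F_k})`. -/
noncomputable def exFamN (r k : ℕ) (F : Fin k → HGraph r) (n : ℕ) : ℕ :=
  sSup {m | ∃ H : HGraph r, H.verts.card = n ∧ (∀ i, ¬ (F i).IsCopyIn H) ∧
    H.edges.card = m}

/-
Stability. Among the triangle-free 4-graphs, symmetrization (replacing a vertex by a twin of another
one) leads to one whose twin classes form a linear triple system inside the link of each class. The
Lagrangian of such a system is maximized by a single triple, so a triangle-free 4-graph of nearly
maximal size has four parts carrying almost all transversal edges. Away from few vertices of low
degree, the link of every vertex then determines its part, so the 4-graph is genuinely 4-partite;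
this rigidity carries the conclusion back through the symmetrization steps.

Exactness. Deleting a vertex of low degree raises the excess over the Turán number; if this went on,
the excess would eventually exceed the number of 4-sets. Hence the extremal 4-graphs are Turán.

Matchings. Induct on `t`. If deleting some vertex leaves no `t` disjoint triangles, then that vertex
is a cone vertex and the rest is extremal for `t - 1`. Otherwise every vertex has small degree, and
deleting the few vertices of a maximal matching leaves too many edges for a triangle-free 4-graph.
-/

section LinearTripleSystem

open Finset

lemma prod_le_sum_div_card_pow {ι : Type*} (s : Finset ι) {f : ι → ℝ} (hf : ∀ i ∈ s, 0 ≤ f i) :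
    ∏ i ∈ s, f i ≤ ((∑ i ∈ s, f i) / #s) ^ #s := by
  obtain rfl | hs := s.eq_empty_or_nonempty
  · simp
  have hprod : 0 ≤ ∏ i ∈ s, f i := prod_nonneg hf
  have amgm := Real.geom_mean_le_arith_mean s (fun _ ↦ 1) f (fun _ _ ↦ zero_le_one)
    (by simpa using hs) hf
  simp only [Real.rpow_one, sum_const, nsmul_eq_mul, mul_one, one_mul] at amgm
  calc ∏ i ∈ s, f i = ((∏ i ∈ s, f i) ^ (#s : ℝ)⁻¹) ^ #s :=
        (Real.rpow_inv_natCast_pow hprod hs.card_ne_zero).symm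
    _ ≤ ((∑ i ∈ s, f i) / #s) ^ #s := by gcongr

variable {ι : Type*}

lemma sum_offDiag_mul {R : Type*} [CommRing R] (s : Finset ι) (f g : ι → R) :
    ∑ p ∈ s.offDiag, f p.1 * g p.2 = (∑ i ∈ s, f i) * (∑ i ∈ s, g i) - ∑ i ∈ s, f i * g i := by
  classical
  rw [sum_mul_sum, ← sum_product', ← diag_union_offDiag, sum_union (disjoint_diag_offDiag s),
    sum_diag]
  ring

lemma sum_sum_offDiag_le {κ : Type*} [DecidableEq ι] {G : Finset κ} {s : κ → Finset ι}
    {I : Finset ι} (hsub : ∀ T ∈ G, s T ⊆ I)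
    (hlin : (G : Set κ).Pairwise fun S T ↦ #(s S ∩ s T) ≤ 1)
    {F : ι × ι → ℝ} (hF : ∀ p ∈ I.offDiag, 0 ≤ F p) :
    ∑ T ∈ G, ∑ p ∈ (s T).offDiag, F p ≤ ∑ p ∈ I.offDiag, F p := by
  classical
  have hdisj : (G : Set κ).PairwiseDisjoint fun T ↦ (s T).offDiag := by
    intro S hS T hT hne
    refine disjoint_left.2 fun p hpS hpT ↦ ?_
    rw [mem_offDiag] at hpS hpT
    exact hpS.2.2 <| card_le_one.1 (hlin hS hT hne) _ (mem_inter.2 ⟨hpS.1, hpT.1⟩) _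
      (mem_inter.2 ⟨hpS.2.1, hpT.2.1⟩)
  rw [← sum_biUnion hdisj]
  exact sum_le_sum_of_subset_of_nonneg (biUnion_subset.2 fun T hT ↦ offDiag_mono (hsub T hT))
    fun p hp _ ↦ hF p hp

section Triple

variable {T : Finset ι} {y : ι → ℝ}

lemma six_mul_prod_le_sum_offDiag (hT : #T = 3) (hy : ∀ i ∈ T, 0 ≤ y i) :
    6 * ∏ i ∈ T, y i ≤ ∑ p ∈ T.offDiag, y p.1 ^ 2 * y p.2 := by
  classical
  rw [sum_offDiag_mul T (y · ^ 2) y]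
  obtain ⟨p, q, z, hpq, hpz, hqz, rfl⟩ := card_eq_three.1 hT
  simp only [mem_insert, mem_singleton, forall_eq_or_imp, forall_eq] at hy
  obtain ⟨hp, hq, hz⟩ := hy
  simp only [sum_insert, prod_insert, mem_insert, mem_singleton, hpq, hpz, hqz, or_self,
    not_false_eq_true, sum_singleton, prod_singleton]
  nlinarith [mul_nonneg hp (sq_nonneg (y q - y z)), mul_nonneg hq (sq_nonneg (y p - y z)),
    mul_nonneg hz (sq_nonneg (y p - y q))]

lemma eighteen_mul_prod_le (hT : #T = 3) (hy : ∀ i ∈ T, 0 ≤ y i) :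
    18 * ∏ i ∈ T, y i ≤ (∑ i ∈ T, y i) * ∑ p ∈ T.offDiag, y p.1 * y p.2 := by
  classical
  rw [sum_offDiag_mul T y y]
  obtain ⟨p, q, z, hpq, hpz, hqz, rfl⟩ := card_eq_three.1 hT
  simp only [mem_insert, mem_singleton, forall_eq_or_imp, forall_eq] at hy
  obtain ⟨hp, hq, hz⟩ := hy
  simp only [sum_insert, prod_insert, mem_insert, mem_singleton, hpq, hpz, hqz, or_self,
    not_false_eq_true, sum_singleton, prod_singleton]
  nlinarith [mul_nonneg hp (sq_nonneg (y q - y z)), mul_nonneg hq (sq_nonneg (y p - y z)),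
    mul_nonneg hz (sq_nonneg (y p - y q))]

lemma prod_le_half_mul_sum_offDiag {a : ℝ} {S : Finset ι} (hT : #T = 3) (hST : S ⊆ T)
    (hS : 2 ≤ #S) (hy : ∀ i ∈ T, 0 ≤ y i) (hya : ∀ i ∈ T, y i ≤ a) :
    ∏ i ∈ T, y i ≤ a / 2 * ∑ p ∈ S.offDiag, y p.1 * y p.2 := by
  classical
  obtain ⟨p, hp, q, hq, hpq⟩ := one_lt_card.1 hS
  have hp0 := hy p (hST hp)
  have hq0 := hy q (hST hq)
  have ha : 0 ≤ a := hp0.trans (hya p (hST hp))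
  have hqT : q ∈ T.erase p := mem_erase.2 ⟨hpq.symm, hST hq⟩
  obtain ⟨z, hz⟩ : ∃ z, (T.erase p).erase q = {z} := by
    rw [← card_eq_one, card_erase_of_mem hqT, card_erase_of_mem (hST hp), hT]
  have hzT : z ∈ T := mem_of_mem_erase (mem_of_mem_erase (hz ▸ mem_singleton_self z))
  have hpair : {(p, q), (q, p)} ⊆ S.offDiag := by
    simp [insert_subset_iff, hp, hq, hpq, hpq.symm]
  calc ∏ i ∈ T, y i = y p * y q * y z := by
        rw [← mul_prod_erase T y (hST hp), ← mul_prod_erase _ y hqT, hz, prod_singleton, mul_assoc]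
    _ ≤ y p * y q * a := mul_le_mul_of_nonneg_left (hya z hzT) (mul_nonneg hp0 hq0)
    _ = a / 2 * ∑ p ∈ {(p, q), (q, p)}, y p.1 * y p.2 := by
        rw [sum_pair (by simp [hpq])]
        ring
    _ ≤ a / 2 * ∑ p ∈ S.offDiag, y p.1 * y p.2 := by
        refine mul_le_mul_of_nonneg_left
          (sum_le_sum_of_subset_of_nonneg hpair fun x hx _ ↦ ?_) (by linarith)
        exact mul_nonneg (hy _ (hST (mem_offDiag.1 hx).1)) (hy _ (hST (mem_offDiag.1 hx).2.1))

end Triple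

section Sums

variable [DecidableEq ι] {I T₀ : Finset ι} {y : ι → ℝ} {G : Finset (Finset ι)}

lemma six_mul_sum_prod_le (hy : ∀ i, 0 ≤ y i) (hG : G ⊆ I.powersetCard 3)
    (hlin : (G : Set (Finset ι)).Pairwise fun S T ↦ #(S ∩ T) ≤ 1) :
    6 * ∑ T ∈ G, ∏ i ∈ T, y i ≤ ∑ i ∈ I, y i * (y i * (∑ j ∈ I, y j - y i)) := by
  calc 6 * ∑ T ∈ G, ∏ i ∈ T, y i ≤ ∑ T ∈ G, ∑ p ∈ T.offDiag, y p.1 ^ 2 * y p.2 := by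
        rw [mul_sum]
        exact sum_le_sum fun T hT ↦
          six_mul_prod_le_sum_offDiag (mem_powersetCard.1 (hG hT)).2 fun i _ ↦ hy i
    _ ≤ ∑ p ∈ I.offDiag, y p.1 ^ 2 * y p.2 :=
        sum_sum_offDiag_le (fun T hT ↦ (mem_powersetCard.1 (hG hT)).1) hlin
          fun p _ ↦ mul_nonneg (sq_nonneg _) (hy _)
    _ = ∑ i ∈ I, y i * (y i * (∑ j ∈ I, y j - y i)) := by
        rw [sum_offDiag_mul I (y · ^ 2) y, sum_mul, ← sum_sub_distrib]
        exact sum_congr rfl fun i _ ↦ by ring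

lemma sum_prod_le_of_forall_sum_le (hy : ∀ i, 0 ≤ y i) (hG : G ⊆ I.powersetCard 3)
    (hlin : (G : Set (Finset ι)).Pairwise fun S T ↦ #(S ∩ T) ≤ 1) (hT₀ : T₀ ∈ G)
    (hmax : ∀ T ∈ G, ∑ i ∈ T, y i ≤ ∑ i ∈ T₀, y i) :
    ∑ T ∈ G, ∏ i ∈ T, y i ≤
      (∑ i ∈ T₀, y i) / 18 * ((∑ i ∈ I, y i) ^ 2 - (∑ i ∈ T₀, y i) ^ 2 / 3) := by
  obtain ⟨hT₀I, hT₀3⟩ := mem_powersetCard.1 (hG hT₀)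
  have hu : 0 ≤ ∑ i ∈ T₀, y i := sum_nonneg fun i _ ↦ hy i
  have hpair : ∀ p : ι × ι, 0 ≤ y p.1 * y p.2 := fun p ↦ mul_nonneg (hy _) (hy _)
  have hsq : (∑ i ∈ T₀, y i) ^ 2 / 3 ≤ ∑ i ∈ I, y i * y i := by
    have hcs := sq_sum_le_card_mul_sum_sq (s := T₀) (f := y)
    have hmono : ∑ i ∈ T₀, y i ^ 2 ≤ ∑ i ∈ I, y i ^ 2 :=
      sum_le_sum_of_subset_of_nonneg hT₀I fun i _ _ ↦ sq_nonneg _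
    rw [hT₀3] at hcs
    simp only [← sq]
    push_cast at hcs
    linarith
  calc ∑ T ∈ G, ∏ i ∈ T, y i
      ≤ ∑ T ∈ G, (∑ i ∈ T₀, y i) / 18 * ∑ p ∈ T.offDiag, y p.1 * y p.2 := by
        refine sum_le_sum fun T hT ↦ ?_
        have h18 := eighteen_mul_prod_le (mem_powersetCard.1 (hG hT)).2 fun i _ ↦ hy i
        have := mul_le_mul_of_nonneg_right (hmax T hT)
          (sum_nonneg fun p (_ : p ∈ T.offDiag) ↦ hpair p)
        linarith
    _ ≤ (∑ i ∈ T₀, y i) / 18 * ∑ p ∈ I.offDiag, y p.1 * y p.2 := by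
        rw [← mul_sum]
        gcongr
        exact sum_sum_offDiag_le (fun T hT ↦ (mem_powersetCard.1 (hG hT)).1) hlin
          fun p _ ↦ hpair p
    _ ≤ _ := by
        rw [sum_offDiag_mul, ← sq]
        gcongr

lemma sum_prod_le_prod_add {a : ℝ} (hy : ∀ i, 0 ≤ y i) (hya : ∀ i ∈ I, y i ≤ a) (ha : 0 ≤ a)
    (hG : G ⊆ I.powersetCard 3)
    (hlin : (G : Set (Finset ι)).Pairwise fun S T ↦ #(S ∩ T) ≤ 1) (hT₀ : T₀ ∈ G) :
    ∑ T ∈ G, ∏ i ∈ T, y i ≤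
      ∏ i ∈ T₀, y i + a * (∑ i ∈ I, y i - ∑ i ∈ T₀, y i) ^ 2 / 2 := by
  have hGI : ∀ T ∈ G, T ⊆ I ∧ #T = 3 := fun T hT ↦ mem_powersetCard.1 (hG hT)
  have hrest : ∑ i ∈ I \ T₀, y i = ∑ i ∈ I, y i - ∑ i ∈ T₀, y i :=
    eq_sub_of_add_eq (sum_sdiff (hGI T₀ hT₀).1)
  have hoff : ∑ T ∈ G.erase T₀, ∏ i ∈ T, y i ≤ a / 2 * (∑ i ∈ I \ T₀, y i) ^ 2 := by
    calc ∑ T ∈ G.erase T₀, ∏ i ∈ T, y i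
        ≤ ∑ T ∈ G.erase T₀, a / 2 * ∑ p ∈ (T \ T₀).offDiag, y p.1 * y p.2 := by
          refine sum_le_sum fun T hT ↦ ?_
          obtain ⟨hne, hTG⟩ := mem_erase.1 hT
          have hcard : 2 ≤ #(T \ T₀) := by
            have := card_sdiff_add_card_inter T T₀
            have := hlin hTG hT₀ hne
            have := (hGI T hTG).2
            lia
          exact prod_le_half_mul_sum_offDiag (hGI T hTG).2 sdiff_subset hcard (fun i _ ↦ hy i)
            fun i hi ↦ hya i ((hGI T hTG).1 hi)
      _ ≤ a / 2 * ∑ p ∈ (I \ T₀).offDiag, y p.1 * y p.2 := by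
          rw [← mul_sum]
          gcongr
          refine sum_sum_offDiag_le
            (fun T hT ↦ sdiff_subset_sdiff (hGI T (mem_of_mem_erase hT)).1 subset_rfl)
            (fun S hS T hT hne ↦ ?_) fun p _ ↦ mul_nonneg (hy _) (hy _)
          exact (card_le_card (inter_subset_inter sdiff_subset sdiff_subset)).trans
            (hlin (mem_of_mem_erase hS) (mem_of_mem_erase hT) hne)
      _ ≤ a / 2 * (∑ i ∈ I \ T₀, y i) ^ 2 := by
          rw [sum_offDiag_mul, ← sq]
          gcongr
          exact sub_le_self _ (sum_nonneg fun i _ ↦ mul_nonneg (hy i) (hy i))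
  rw [← add_sum_erase G _ hT₀, ← hrest]
  linarith

end Sums

section Numerics

variable {a u L pr : ℝ}

lemma maxWeight_mem_Icc (ha1 : a ≤ 1) (hL : 1 / 64 - 1 / 10 ^ 10 ≤ L)
    (hlarge : 6 * L ≤ (1 - a) ^ 3 / 4)
    (hsmall : a ≤ 1 / 3 → 6 * L ≤ a * (1 - a) * (1 - 2 * a)) :
    a ∈ Set.Icc 0.172 (1 / 4 + 1 / 10 ^ 8) := by
  have hthird : a ≤ 1 / 3 := by
    by_contra! h
    have : (1 - a) ^ 3 ≤ (2 / 3) ^ 3 := by gcongr; linarith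
    norm_num at *
    linarith
  have hpoly := hsmall hthird
  constructor
  · by_contra! h
    have : 0 ≤ (a - 0.172) ^ 2 * (3 - 2 * a - 4 * 0.172) :=
      mul_nonneg (sq_nonneg _) (by linarith)
    have : a * (1 - a) * (1 - 2 * a) ≤ 0.0935 := by nlinarith
    norm_num at *
    linarith
  · by_contra! h
    have : a * (1 - a) * (1 - 2 * a) ≤ 6 / 64 - (a - 1 / 4) / 8 := by
      nlinarith [mul_nonneg (sq_nonneg (a - 1 / 4)) (sub_nonneg.2 hthird), sq_nonneg (a - 1 / 4)]
    norm_num at *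
    linarith

lemma le_maxTripleWeight (h1 : 0.172 ≤ a) (h2 : a ≤ 0.2501) (hu0 : 0 ≤ u) (hua : u ≤ 1 - a)
    (hL : 1 / 64 - 1 / 10 ^ 10 ≤ L) (hLu : L ≤ u / 18 * ((1 - a) ^ 2 - u ^ 2 / 3)) :
    0.1955 + 1.5 * a ≤ u := by
  by_contra! hlt
  set u₀ := 0.1955 + 1.5 * a with hu₀
  have hmono : u / 18 * ((1 - a) ^ 2 - u ^ 2 / 3) ≤ u₀ / 18 * ((1 - a) ^ 2 - u₀ ^ 2 / 3) := by
    have hquad : u₀ ^ 2 + u₀ * u + u ^ 2 ≤ 3 * (1 - a) ^ 2 := by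
      have hu₀a : u₀ ≤ 1 - a := by rw [hu₀]; linarith
      have : u₀ ^ 2 ≤ (1 - a) ^ 2 := by gcongr
      have : u ^ 2 ≤ (1 - a) ^ 2 := by gcongr
      have : u₀ * u ≤ (1 - a) * (1 - a) := by gcongr; linarith
      linarith
    have := mul_nonneg (sub_nonneg.2 hlt.le) (sub_nonneg.2 hquad)
    linarith
  have hlo := sub_nonneg.2 h1
  have hhi := sub_nonneg.2 h2
  have : u₀ / 18 * ((1 - a) ^ 2 - u₀ ^ 2 / 3) ≤ 0.998 / 64 := by
    rw [hu₀]
    nlinarith [mul_nonneg hlo hhi, sq_nonneg (a - 0.2), mul_nonneg (mul_nonneg hlo hhi) hhi,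
      mul_nonneg (mul_nonneg hlo hhi) hlo, mul_nonneg hlo (sq_nonneg (a - 0.21)),
      mul_nonneg hhi (sq_nonneg (a - 0.21))]
  norm_num at *
  linarith

lemma convexOn_cube_add_sq {A : ℝ} (hA : 0 ≤ A) (B k : ℝ) :
    ConvexOn ℝ (Set.Ici 0) fun u : ℝ ↦ (u / 3) ^ 3 + A * (B - u) ^ 2 / 2 + k * (B - u) := by
  have hcube : ConvexOn ℝ (Set.Ici (0 : ℝ)) fun u ↦ (1 / 27 : ℝ) • u ^ 3 :=
    (convexOn_pow 3).smul (by norm_num)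
  have hsq : ConvexOn ℝ (Set.Ici (0 : ℝ)) fun u ↦ (A / 2) • u ^ 2 :=
    (convexOn_pow 2).smul (by linarith)
  have hlin := (LinearMap.mulLeft ℝ (-(A * B + k))).convexOn (convex_Ici 0)
  refine ((hcube.add (hsq.add hlin)).add_const (A * B ^ 2 / 2 + k * B)).congr fun u _ ↦ ?_
  simp only [Pi.add_apply, smul_eq_mul, LinearMap.mulLeft_apply]
  ring

lemma cube_add_sq_le (h1 : 0.172 ≤ a) (h2 : a ≤ 0.2501) (hlow : 0.1955 + 1.5 * a ≤ u)
    (hu3 : u ≤ 3 * a) (hua : u ≤ 1 - a) :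
    (u / 3) ^ 3 + a * (1 - a - u) ^ 2 / 2 + 1 / 10000 * (1 - a - u) ≤ 1 / 64 := by
  have hconv := convexOn_cube_add_sq (by linarith : 0 ≤ a) (1 - a) (1 / 10000)
  have hleft : ((0.1955 + 1.5 * a) / 3) ^ 3 + a * (1 - a - (0.1955 + 1.5 * a)) ^ 2 / 2 +
      1 / 10000 * (1 - a - (0.1955 + 1.5 * a)) ≤ 1 / 64 := by
    have hlo := sub_nonneg.2 h1
    have hhi := sub_nonneg.2 h2
    nlinarith [mul_nonneg hlo hhi, sq_nonneg (a - 0.2), mul_nonneg (mul_nonneg hlo hhi) hhi,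
      mul_nonneg (mul_nonneg hlo hhi) hlo]
  have hmax {v : ℝ} (huv : u ≤ v)
      (hv : (v / 3) ^ 3 + a * (1 - a - v) ^ 2 / 2 + 1 / 10000 * (1 - a - v) ≤ 1 / 64) :
      (u / 3) ^ 3 + a * (1 - a - u) ^ 2 / 2 + 1 / 10000 * (1 - a - u) ≤ 1 / 64 :=
    (hconv.le_max_of_mem_Icc (Set.mem_Ici.2 (by linarith)) (Set.mem_Ici.2 (by linarith))
      ⟨hlow, huv⟩).trans (max_le hleft hv)
  rcases le_total a (1 / 4) with h | h
  · refine hmax hu3 ?_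
    have : (1 - 4 * a) * (-3 + 11 * (1 - 4 * a) - 9 * (1 - 4 * a) ^ 2 + 64 / 10000) ≤ 0 :=
      mul_nonpos_of_nonneg_of_nonpos (by linarith) (by nlinarith)
    nlinarith
  · refine hmax hua ?_
    have : ((1 - a) / 3) ^ 3 ≤ (1 / 4) ^ 3 :=
      pow_le_pow_left₀ (by linarith) (by linarith) 3
    norm_num at *
    linarith

lemma le_maxWeight_mul_prod (ha : a ∈ Set.Icc 0.172 (1 / 4 + 1 / 10 ^ 8)) (hu0 : 0 ≤ u)
    (hu3 : u ≤ 3 * a) (hua : u ≤ 1 - a) (hL : 1 / 64 - 1 / 10 ^ 10 ≤ L)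
    (hLu : L ≤ u / 18 * ((1 - a) ^ 2 - u ^ 2 / 3))
    (hLpr : L ≤ pr + a * (1 - a - u) ^ 2 / 2) (hpr : pr ≤ (u / 3) ^ 3) :
    1 / 256 - 1 / 10 ^ 8 ≤ a * pr := by
  obtain ⟨hlo, hhi⟩ := ha
  have hhi' : a ≤ 0.2501 := by norm_num at *; linarith
  have hconv := cube_add_sq_le hlo hhi' (le_maxTripleWeight hlo hhi' hu0 hua hL hLu) hu3 hua
  have hrest : 1 - a - u ≤ 1 / 10 ^ 6 := by norm_num at *; linarith
  have ha4 : 1 / 4 - 1 / (4 * 10 ^ 6) ≤ a := by norm_num at *; linarith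
  have hpr1 : 1 / 64 - 1 / 10 ^ 9 ≤ pr := by
    have : a * (1 - a - u) ^ 2 ≤ 1 * (1 / 10 ^ 6) ^ 2 := by gcongr; linarith
    norm_num at *
    linarith
  calc (1 / 256 - 1 / 10 ^ 8 : ℝ)
      ≤ (1 / 4 - 1 / (4 * 10 ^ 6)) * (1 / 64 - 1 / 10 ^ 9) := by norm_num
    _ ≤ a * pr := mul_le_mul ha4 hpr1 (by norm_num) (by linarith)

end Numerics

/- The hypothesis bounds the link of a vertex of maximal weight `a`; the two estimates `6L ≤ …` pin
down `a`, and then the triple of maximal total weight has to carry almost all of the link. -/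
theorem exists_triple_of_sum_prod_ge [DecidableEq ι] {I : Finset ι} {y : ι → ℝ} {a : ℝ}
    {G : Finset (Finset ι)} (hy : ∀ i, 0 ≤ y i) (ha0 : 0 ≤ a) (ha1 : a ≤ 1) (hya : ∀ i ∈ I, y i ≤ a)
    (hsum : ∑ i ∈ I, y i = 1 - a) (hG : G ⊆ I.powersetCard 3)
    (hlin : (G : Set (Finset ι)).Pairwise fun S T ↦ #(S ∩ T) ≤ 1)
    (hL : 1 / 64 - 1 / 10 ^ 10 ≤ ∑ T ∈ G, ∏ i ∈ T, y i) :
    ∃ T ∈ G, 1 / 256 - 1 / 10 ^ 8 ≤ a * ∏ i ∈ T, y i := by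
  have hne : G.Nonempty := by
    rw [nonempty_iff_ne_empty]
    rintro rfl
    norm_num at hL
  obtain ⟨T₀, hT₀, hmax⟩ := exists_max_image G (fun T ↦ ∑ i ∈ T, y i) hne
  obtain ⟨hT₀I, hT₀3⟩ := mem_powersetCard.1 (hG hT₀)
  have hu3 : ∑ i ∈ T₀, y i ≤ 3 * a := by
    simpa [hT₀3] using sum_le_card_nsmul T₀ y a fun i hi ↦ hya i (hT₀I hi)
  have hua : ∑ i ∈ T₀, y i ≤ 1 - a :=
    hsum ▸ sum_le_sum_of_subset_of_nonneg hT₀I fun i _ _ ↦ hy i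
  have hpr : ∏ i ∈ T₀, y i ≤ ((∑ i ∈ T₀, y i) / 3) ^ 3 := by
    simpa [hT₀3] using prod_le_sum_div_card_pow T₀ fun i _ ↦ hy i
  have hbound {c : ℝ} (hc : ∀ i ∈ I, y i * (1 - a - y i) ≤ c) :
      6 * ∑ T ∈ G, ∏ i ∈ T, y i ≤ (1 - a) * c := by
    refine (six_mul_sum_prod_le hy hG hlin).trans ?_
    rw [hsum, ← hsum, sum_mul, hsum]
    exact sum_le_sum fun i hi ↦ mul_le_mul_of_nonneg_left (hc i hi) (hy i)
  have ha : a ∈ Set.Icc 0.172 (1 / 4 + 1 / 10 ^ 8) := by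
    refine maxWeight_mem_Icc ha1 hL ?_ fun ha ↦ ?_
    · refine (hbound (c := (1 - a) ^ 2 / 4) fun i _ ↦ ?_).trans_eq (by ring)
      nlinarith [sq_nonneg (1 - a - 2 * y i)]
    · refine (hbound (c := a * (1 - a - a)) fun i hi ↦ ?_).trans_eq (by ring)
      have hi' := hya i hi
      nlinarith [mul_nonneg (sub_nonneg.2 hi') (by linarith : 0 ≤ 1 - a - a - y i)]
  refine ⟨T₀, hT₀, le_maxWeight_mul_prod ha (sum_nonneg fun i _ ↦ hy i) hu3 hua hL ?_ ?_ hpr⟩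
  · exact hsum ▸ sum_prod_le_of_forall_sum_le hy hG hlin hT₀ hmax
  · exact hsum ▸ sum_prod_le_prod_add hy hya ha0 hG hlin hT₀

end LinearTripleSystem

section Degree

open Finset

variable {α : Type*} [DecidableEq α] {E F : Finset (Finset α)} {X : Finset α} {r : ℕ}

/-- The degree of the vertex `v`: the number of edges of `E` containing it. -/
def degree (E : Finset (Finset α)) (v : α) : ℕ := #{e ∈ E | v ∈ e}

/-- The codegree of the vertices `u` and `w`: the number of edges of `E` containing both. -/
def codegree (E : Finset (Finset α)) (u w : α) : ℕ := #{e ∈ E | u ∈ e ∧ w ∈ e}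

lemma card_filter_superset_le (hE : E ⊆ X.powersetCard r) (A : Finset α) :
    #{e ∈ E | A ⊆ e} ≤ #X ^ (r - #A) := by
  calc #{e ∈ E | A ⊆ e} ≤ #(X.powersetCard (r - #A)) := by
        refine card_le_card_of_injOn (· \ A) (fun e he ↦ ?_) fun e he f hf hef ↦ ?_
        · obtain ⟨heE, hAe⟩ := mem_filter.1 he
          obtain ⟨heX, her⟩ := mem_powersetCard.1 (hE heE)
          exact mem_powersetCard.2
            ⟨sdiff_subset.trans heX, by rw [card_sdiff_of_subset hAe, her]⟩
        · rw [← sdiff_union_of_subset (mem_filter.1 he).2,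
            ← sdiff_union_of_subset (mem_filter.1 hf).2]
          exact congrArg (· ∪ A) hef
    _ ≤ #X ^ (r - #A) := by
        rw [card_powersetCard]
        exact Nat.choose_le_pow _ _

lemma degree_le (hE : E ⊆ X.powersetCard r) (v : α) : degree E v ≤ #X ^ (r - 1) := by
  simpa [degree] using card_filter_superset_le hE {v}

lemma codegree_le (hE : E ⊆ X.powersetCard r) {u w : α} (huw : u ≠ w) :
    codegree E u w ≤ #X ^ (r - 2) := by
  simpa [codegree, insert_subset_iff, card_pair huw] using card_filter_superset_le hE {u, w}

lemma card_filter_meets_le (hE : E ⊆ X.powersetCard r) (B : Finset α) (v : α) :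
    #{e ∈ E | v ∈ e ∧ ∃ w ∈ B, w ≠ v ∧ w ∈ e} ≤ #B * #X ^ (r - 2) := by
  have hsub : {e ∈ E | v ∈ e ∧ ∃ w ∈ B, w ≠ v ∧ w ∈ e} ⊆
      (B.erase v).biUnion fun w ↦ {e ∈ E | v ∈ e ∧ w ∈ e} := by
    intro e he
    obtain ⟨heE, hv, w, hwB, hwv, hwe⟩ := mem_filter.1 he
    exact mem_biUnion.2 ⟨w, mem_erase.2 ⟨hwv, hwB⟩, mem_filter.2 ⟨heE, hv, hwe⟩⟩
  calc #{e ∈ E | v ∈ e ∧ ∃ w ∈ B, w ≠ v ∧ w ∈ e} ≤ #(B.erase v) * #X ^ (r - 2) :=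
        (card_le_card hsub).trans <| card_biUnion_le_card_mul _ _ _ fun w hw ↦
          codegree_le hE (ne_of_mem_erase hw).symm
    _ ≤ #B * #X ^ (r - 2) := by gcongr; exact erase_subset _ _

lemma sum_degree (hE : E ⊆ X.powersetCard r) : ∑ v ∈ X, degree E v = r * #E := by
  calc ∑ v ∈ X, degree E v = ∑ e ∈ E, #{v ∈ X | v ∈ e} :=
        sum_card_bipartiteAbove_eq_sum_card_bipartiteBelow _
    _ = ∑ _ ∈ E, r := by
        refine sum_congr rfl fun e he ↦ ?_
        obtain ⟨heX, her⟩ := mem_powersetCard.1 (hE he)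
        rw [filter_mem_eq_inter, inter_eq_right.2 heX, her]
    _ = r * #E := by rw [sum_const, smul_eq_mul, mul_comm]

lemma card_le_card_filter_sdiff_add (hE : ∀ e ∈ E, e ⊆ X) (Z : Finset α) :
    #E ≤ #{e ∈ E | e ⊆ X \ Z} + ∑ v ∈ Z, degree E v := by
  have hsub : E ⊆ {e ∈ E | e ⊆ X \ Z} ∪ Z.biUnion fun v ↦ {e ∈ E | v ∈ e} := by
    intro e he
    by_cases hZ : Disjoint e Z
    · exact mem_union_left _ (mem_filter.2 ⟨he, subset_sdiff.2 ⟨hE e he, hZ⟩⟩)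
    · obtain ⟨v, hve, hvZ⟩ := not_disjoint_iff.1 hZ
      exact mem_union_right _ (mem_biUnion.2 ⟨v, hvZ, mem_filter.2 ⟨he, hve⟩⟩)
  exact (card_le_card hsub).trans <| (card_union_le _ _).trans <|
    Nat.add_le_add_left card_biUnion_le _

/-- `E` contains no generalized triangle: no two edges `S ∪ {x}`, `S ∪ {y}` with `x ≠ y` such that
some edge contains `x` and `y` and is disjoint from `S`. -/
def TriangleFree (E : Finset (Finset α)) : Prop :=
  ∀ ⦃S : Finset α⦄ ⦃x y : α⦄ ⦃e : Finset α⦄, insert x S ∈ E → insert y S ∈ E → e ∈ E → x ≠ y →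
    x ∈ e → y ∈ e → ¬Disjoint S e

/-- `E` contains no two edges `S ∪ {x}`, `S ∪ {y}` with `x ≠ y` outside `S` such that some edge
contains `x` and `y`, whether or not it meets `S`. Unlike `TriangleFree` this survives cloning of
vertices. -/
def SigmaFree (E : Finset (Finset α)) : Prop :=
  ∀ ⦃S : Finset α⦄ ⦃x y : α⦄ ⦃e : Finset α⦄, insert x S ∈ E → insert y S ∈ E → e ∈ E → x ≠ y →
    x ∉ S → y ∉ S → x ∈ e → y ∉ e

lemma SigmaFree.triangleFree (h : SigmaFree E) : TriangleFree E :=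
  fun _ _ _ _ hx hy he hxy hxe hye hdisj ↦ h hx hy he hxy
    (fun hxS ↦ disjoint_left.1 hdisj hxS hxe) (fun hyS ↦ disjoint_left.1 hdisj hyS hye) hxe hye

lemma TriangleFree.mono (h : TriangleFree E) (hF : F ⊆ E) : TriangleFree F :=
  fun _ _ _ _ hx hy he ↦ h (hF hx) (hF hy) (hF he)

/- Two vertices with a large common link inside `𝓕` have a common link member avoiding the rest of
any edge that contains both of them, which would give a generalized triangle. -/
lemma TriangleFree.notMem_of_card_lt (hfree : TriangleFree E) (hE : E ⊆ X.powersetCard (r + 2))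
    (𝓕 : Finset (Finset α)) {v w : α} (hvw : v ≠ w)
    (hcard : #𝓕 + r * #X ^ r <
      #{e ∈ E | v ∈ e ∧ e.erase v ∈ 𝓕} + #{e ∈ E | w ∈ e ∧ e.erase w ∈ 𝓕})
    {e : Finset α} (he : e ∈ E) (hv : v ∈ e) : w ∉ e := by
  intro hw
  let L (u : α) : Finset (Finset α) := {f ∈ E | u ∈ f ∧ f.erase u ∈ 𝓕}.image (·.erase u)
  have hL {u : α} {S : Finset α} (hS : S ∈ L u) : u ∉ S ∧ insert u S ∈ E ∧ S ∈ 𝓕 := by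
    obtain ⟨f, hf, rfl⟩ := mem_image.1 hS
    obtain ⟨hfE, huf, hf𝓕⟩ := mem_filter.1 hf
    exact ⟨notMem_erase _ _, by rwa [insert_erase huf], hf𝓕⟩
  have hLcard (u : α) : #(L u) = #{f ∈ E | u ∈ f ∧ f.erase u ∈ 𝓕} := by
    refine card_image_of_injOn fun f hf g hg hfg ↦ ?_
    rw [← insert_erase (mem_filter.1 hf).2.1, ← insert_erase (mem_filter.1 hg).2.1]
    exact congrArg (insert u) hfg
  have hLuni : L v ⊆ X.powersetCard (r + 1) := by
    intro S hS
    obtain ⟨hvS, hvE, -⟩ := hL hS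
    obtain ⟨hX, hr⟩ := mem_powersetCard.1 (hE hvE)
    rw [card_insert_of_notMem hvS] at hr
    exact mem_powersetCard.2 ⟨(subset_insert _ _).trans hX, by lia⟩
  have hunion : #(L v ∪ L w) ≤ #𝓕 :=
    card_le_card (union_subset (fun S hS ↦ (hL hS).2.2) fun S hS ↦ (hL hS).2.2)
  have hsub : L v ∩ L w ⊆ ((e.erase v).erase w).biUnion fun z ↦ {S ∈ L v | {z} ⊆ S} := by
    intro S hS
    obtain ⟨hSv, hSw⟩ := mem_inter.1 hS
    obtain ⟨hvS, hvE, -⟩ := hL hSv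
    obtain ⟨hwS, hwE, -⟩ := hL hSw
    obtain ⟨z, hzS, hze⟩ := not_disjoint_iff.1 (hfree hvE hwE he hvw hv hw)
    exact mem_biUnion.2 ⟨z, mem_erase.2 ⟨ne_of_mem_of_not_mem hzS hwS,
      mem_erase.2 ⟨ne_of_mem_of_not_mem hzS hvS, hze⟩⟩, by simpa using ⟨hSv, hzS⟩⟩
  have hrest : #((e.erase v).erase w) = r := by
    rw [card_erase_of_mem (mem_erase.2 ⟨hvw.symm, hw⟩), card_erase_of_mem hv,
      (mem_powersetCard.1 (hE he)).2]
    lia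
  have hinter : #(L v ∩ L w) ≤ r * #X ^ r := by
    refine (card_le_card hsub).trans ((card_biUnion_le_card_mul _ _ (#X ^ r) fun z _ ↦ ?_).trans_eq
      (by rw [hrest]))
    simpa using card_filter_superset_le hLuni {z}
  have := card_union_add_card_inter (L v) (L w)
  rw [hLcard, hLcard] at this
  lia

end Degree

section Transversal

open Finset

variable {ι α : Type*} [DecidableEq α] {P Q : ι → Finset α} {J : Finset ι}
  {S : Finset α}

open Classical in
/-- The sets obtained by choosing one vertex from each of the parts `P j`, `j ∈ J`. -/
noncomputable def transversals (P : ι → Finset α) (J : Finset ι) : Finset (Finset α) :=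
  {S ∈ (J.biUnion P).powerset | ∃ f : ι → α, (∀ j ∈ J, f j ∈ P j) ∧ J.image f = S}

lemma mem_transversals :
    S ∈ transversals P J ↔ ∃ f : ι → α, (∀ j ∈ J, f j ∈ P j) ∧ J.image f = S := by
  classical
  refine mem_filter.trans (and_iff_right_of_imp ?_)
  rintro ⟨f, hf, rfl⟩
  exact mem_powerset.2 (image_subset_iff.2 fun j hj ↦ mem_biUnion.2 ⟨j, hj, hf j hj⟩)

lemma transversals_mono (hPQ : ∀ j, P j ⊆ Q j) : transversals P J ⊆ transversals Q J := by
  intro S hS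
  obtain ⟨f, hf, hfS⟩ := mem_transversals.1 hS
  exact mem_transversals.2 ⟨f, fun j hj ↦ hPQ j (hf j hj), hfS⟩

lemma card_transversals_le : #(transversals P J) ≤ ∏ j ∈ J, #(P j) := by
  classical
  rw [← card_pi]
  refine card_le_card_of_surjOn (fun f ↦ J.attach.image fun j ↦ f j.1 j.2) fun S hS ↦ ?_
  obtain ⟨f, hf, rfl⟩ := mem_transversals.1 hS
  refine ⟨fun j _ ↦ f j, mem_pi.2 hf, ?_⟩
  ext x
  simp

lemma mem_transversals_image_of_injOn [DecidableEq ι] [Nonempty α] {χ : α → ι} (hχ : Set.InjOn χ S)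
    (hS : ∀ v ∈ S, v ∈ P (χ v)) : S ∈ transversals P (S.image χ) := by
  have hinv : ∀ v ∈ S, Function.invFunOn χ S (χ v) = v := fun v hv ↦ hχ.leftInvOn_invFunOn hv
  refine mem_transversals.2 ⟨Function.invFunOn χ S, forall_mem_image.2 fun v hv ↦ ?_, ?_⟩
  · rw [hinv v hv]
    exact hS v hv
  · rw [image_image]
    exact (image_congr (g := id) hinv).trans image_id

variable [Fintype ι] [DecidableEq ι]

/-- The number of edges through `v` whose other vertices form a transversal of the parts other than
`P i`. -/
noncomputable def crossDegree (E : Finset (Finset α)) (P : ι → Finset α) (i : ι) (v : α) : ℕ :=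
  #{e ∈ E | v ∈ e ∧ e.erase v ∈ transversals P {i}ᶜ}

variable {E : Finset (Finset α)} {i : ι} {v : α}

lemma crossDegree_le_degree : crossDegree E P i v ≤ degree E v :=
  card_le_card (monotone_filter_right _ fun _ _ he ↦ he.1)

lemma crossDegree_le_prod : crossDegree E P i v ≤ ∏ j ∈ {i}ᶜ, #(P j) := by
  refine (card_le_card_of_injOn (·.erase v) (fun e he ↦ (mem_filter.1 he).2.2)
    fun e he f hf hef ↦ ?_).trans card_transversals_le
  rw [← insert_erase (mem_filter.1 he).2.1, ← insert_erase (mem_filter.1 hf).2.1]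
  exact congrArg (insert v) hef

lemma card_inter_transversals_le_sum_crossDegree (hE : ∀ e ∈ E, #e = Fintype.card ι) :
    #(E ∩ transversals P univ) ≤ ∑ v ∈ P i, crossDegree E P i v := by
  have hsub : E ∩ transversals P univ ⊆
      (P i).biUnion fun v ↦ {e ∈ E | v ∈ e ∧ e.erase v ∈ transversals P {i}ᶜ} := by
    intro e he
    obtain ⟨heE, heP⟩ := mem_inter.1 he
    obtain ⟨f, hf, rfl⟩ := mem_transversals.1 heP
    have hinj : Function.Injective f := by
      simpa using card_image_iff.1 ((hE _ heE).trans card_univ.symm)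
    refine mem_biUnion.2 ⟨f i, hf i (mem_univ i), mem_filter.2
      ⟨heE, mem_image_of_mem f (mem_univ i), mem_transversals.2
        ⟨f, fun j _ ↦ hf j (mem_univ j), ?_⟩⟩⟩
    rw [← image_erase hinj, compl_singleton]
  exact (card_le_card hsub).trans card_biUnion_le

end Transversal

section BalancedWeights

open Finset

variable {x : Fin 4 → ℝ}

lemma prod_le_pow_four (hx : ∀ i, 0 ≤ x i) : ∏ i, x i ≤ ((∑ i, x i) / 4) ^ 4 := by
  simpa using prod_le_sum_div_card_pow univ fun i _ ↦ hx i

lemma prod_compl_le_pow_three (hx : ∀ i, 0 ≤ x i) (i : Fin 4) :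
    ∏ j ∈ {i}ᶜ, x j ≤ ((∑ j ∈ {i}ᶜ, x j) / 3) ^ 3 := by
  simpa [card_compl] using prod_le_sum_div_card_pow ({i}ᶜ : Finset (Fin 4)) fun j _ ↦ hx j

variable (hx : ∀ i, 0 ≤ x i) (hsum : ∑ i, x i ≤ 1) (hprod : 1 / 256 - 1 / 10 ^ 8 ≤ ∏ i, x i)
include hx hsum hprod

lemma mem_Icc_of_prod_ge (i : Fin 4) : x i ∈ Set.Icc 0.2485 0.2515 := by
  have hrest : ∏ j ∈ {i}ᶜ, x j ≤ ((1 - x i) / 3) ^ 3 := by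
    refine (prod_compl_le_pow_three hx i).trans ?_
    have := Fintype.sum_eq_add_sum_compl i x
    have := sum_nonneg fun j (_ : j ∈ ({i}ᶜ : Finset (Fin 4))) ↦ hx j
    gcongr
    linarith
  have hmul := mul_le_mul_of_nonneg_left hrest (hx i)
  rw [← Fintype.prod_eq_mul_prod_compl i x] at hmul
  have hdev : (x i - 1 / 4) ^ 2 * (1 / 8) ≤ 27 / 10 ^ 8 := by
    calc (x i - 1 / 4) ^ 2 * (1 / 8)
        ≤ (x i - 1 / 4) ^ 2 * (x i ^ 2 - 5 / 2 * x i + 27 / 16) := by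
          gcongr
          nlinarith [sq_nonneg (x i - 5 / 4)]
      _ = 27 * (1 / 256 - x i * ((1 - x i) / 3) ^ 3) := by ring
      _ ≤ 27 / 10 ^ 8 := by linarith
  have habs : |x i - 1 / 4| ≤ 0.0015 :=
    abs_le_of_sq_le_sq (by norm_num at *; linarith) (by norm_num)
  obtain ⟨hlo, hhi⟩ := abs_le.1 habs
  constructor <;> linarith

omit hsum in
lemma le_sum_of_prod_ge : 1 - 1 / 10 ^ 6 ≤ ∑ i, x i := by
  by_contra! hlt
  have : ((∑ i, x i) / 4) ^ 4 ≤ ((1 - 1 / 10 ^ 6) / 4) ^ 4 := by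
    have := sum_nonneg fun i (_ : i ∈ univ) ↦ hx i
    gcongr
  have := prod_le_pow_four hx
  norm_num at *
  linarith

end BalancedWeights

section DensePartition

open Finset

variable {α : Type*} [DecidableEq α] {E F : Finset (Finset α)} {X : Finset α}
  {P : Fin 4 → Finset α}

/-- `P` consists of four disjoint parts of `X` such that `E` contains almost the maximal possible
number `(#X / 4) ^ 4` of transversals of `P`. -/
structure IsDensePartition (E : Finset (Finset α)) (X : Finset α) (P : Fin 4 → Finset α) :
    Prop where
  subset (i : Fin 4) : P i ⊆ X
  pairwise_disjoint : Pairwise fun i j ↦ Disjoint (P i) (P j)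
  dense : (1 / 256 - 1 / 10 ^ 8) * (#X : ℝ) ^ 4 ≤ #(E ∩ transversals P univ)

/-- The vertices of `P i` whose `crossDegree` is almost the maximal possible one. -/
noncomputable def typicalPart (E : Finset (Finset α)) (X : Finset α) (P : Fin 4 → Finset α)
    (i : Fin 4) : Finset α :=
  {v ∈ P i | ∏ j ∈ {i}ᶜ, (#(P j) : ℝ) - 0.0001 * (#X : ℝ) ^ 3 ≤ crossDegree E P i v}

lemma typicalPart_subset (i : Fin 4) : typicalPart E X P i ⊆ P i := filter_subset _ _

namespace IsDensePartition

lemma mono (hP : IsDensePartition E X P) (hEF : E ⊆ F) : IsDensePartition F X P :=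
  ⟨hP.subset, hP.pairwise_disjoint, hP.dense.trans <| mod_cast card_le_card
    (inter_subset_inter_right hEF)⟩

lemma sum_card_le (hP : IsDensePartition E X P) : ∑ i, (#(P i) : ℝ) ≤ #X := by
  have : #(univ.biUnion P) ≤ #X := card_le_card (biUnion_subset.2 fun i _ ↦ hP.subset i)
  rw [card_biUnion fun i _ j _ hij ↦ hP.pairwise_disjoint hij] at this
  exact_mod_cast this

lemma le_prod_card (hP : IsDensePartition E X P) :
    (1 / 256 - 1 / 10 ^ 8) * (#X : ℝ) ^ 4 ≤ ∏ i, (#(P i) : ℝ) :=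
  hP.dense.trans <| mod_cast (card_le_card inter_subset_right).trans card_transversals_le

section PartSizes

variable (hP : IsDensePartition E X P) (hX : X.Nonempty)
include hP hX

lemma div_card_bounds : (∀ i, 0 ≤ (#(P i) : ℝ) / #X) ∧ ∑ i, (#(P i) : ℝ) / #X ≤ 1 ∧
    1 / 256 - 1 / 10 ^ 8 ≤ ∏ i, (#(P i) : ℝ) / #X := by
  have hn : (0 : ℝ) < #X := mod_cast hX.card_pos
  refine ⟨fun i ↦ by positivity, ?_, ?_⟩
  · rw [← sum_div]
    exact (div_le_one hn).2 hP.sum_card_le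
  · rw [prod_div_distrib, prod_const, card_univ, Fintype.card_fin, le_div_iff₀ (by positivity)]
    exact hP.le_prod_card

lemma card_mem_Icc (i : Fin 4) : (#(P i) : ℝ) ∈ Set.Icc (0.2485 * #X : ℝ) (0.2515 * #X) := by
  have hn : (0 : ℝ) < #X := mod_cast hX.card_pos
  obtain ⟨h0, h1, h2⟩ := hP.div_card_bounds hX
  simpa only [Set.mem_Icc, le_div_iff₀ hn, div_le_iff₀ hn] using mem_Icc_of_prod_ge h0 h1 h2 i

lemma le_sum_card : (1 - 1 / 10 ^ 6) * (#X : ℝ) ≤ ∑ i, (#(P i) : ℝ) := by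
  have hn : (0 : ℝ) < #X := mod_cast hX.card_pos
  obtain ⟨h0, -, h2⟩ := hP.div_card_bounds hX
  simpa only [← sum_div, le_div_iff₀ hn] using le_sum_of_prod_ge h0 h2

lemma prod_card_compl_mem_Icc (i : Fin 4) :
    ∏ j ∈ {i}ᶜ, (#(P j) : ℝ) ∈ Set.Icc (0.0153 * (#X : ℝ) ^ 3) (0.01591 * (#X : ℝ) ^ 3) := by
  have hconst (c : ℝ) : ∏ _j ∈ ({i}ᶜ : Finset (Fin 4)), c = c ^ 3 := by simp [card_compl]
  constructor
  · calc 0.0153 * (#X : ℝ) ^ 3 ≤ (0.2485 * #X) ^ 3 := by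
          rw [mul_pow]; gcongr; norm_num
      _ ≤ ∏ j ∈ {i}ᶜ, (#(P j) : ℝ) := by
          rw [← hconst]
          exact prod_le_prod (fun _ _ ↦ by positivity) fun j _ ↦ (hP.card_mem_Icc hX j).1
  · calc ∏ j ∈ {i}ᶜ, (#(P j) : ℝ) ≤ (0.2515 * #X) ^ 3 := by
          rw [← hconst]
          exact prod_le_prod (fun _ _ ↦ by positivity) fun j _ ↦ (hP.card_mem_Icc hX j).2
      _ ≤ 0.01591 * (#X : ℝ) ^ 3 := by
          rw [mul_pow]; gcongr; norm_num

end PartSizes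

section Typical

variable (hP : IsDensePartition E X P) (hE : E ⊆ X.powersetCard 4)
include hP hE

lemma sum_sub_crossDegree_le (i : Fin 4) :
    ∑ v ∈ P i, (∏ j ∈ {i}ᶜ, (#(P j) : ℝ) - crossDegree E P i v) ≤ 1 / 10 ^ 8 * (#X : ℝ) ^ 4 := by
  have hcross : (#(E ∩ transversals P univ) : ℝ) ≤ ∑ v ∈ P i, (crossDegree E P i v : ℝ) :=
    mod_cast card_inter_transversals_le_sum_crossDegree fun e he ↦ by
      simpa using (mem_powersetCard.1 (hE he)).2
  have hprod : (#(P i) : ℝ) * ∏ j ∈ {i}ᶜ, (#(P j) : ℝ) ≤ (#X : ℝ) ^ 4 / 256 := by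
    calc (#(P i) : ℝ) * ∏ j ∈ {i}ᶜ, (#(P j) : ℝ) = ∏ j, (#(P j) : ℝ) :=
          (Fintype.prod_eq_mul_prod_compl i fun j ↦ (#(P j) : ℝ)).symm
      _ ≤ ((∑ j, (#(P j) : ℝ)) / 4) ^ 4 := prod_le_pow_four fun j ↦ by positivity
      _ ≤ ((#X : ℝ) / 4) ^ 4 := by gcongr; exact hP.sum_card_le
      _ = (#X : ℝ) ^ 4 / 256 := by ring
  rw [sum_sub_distrib, sum_const, nsmul_eq_mul]
  linarith [hP.dense]

variable (hX : X.Nonempty)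
include hX

lemma card_le_card_typicalPart_add (i : Fin 4) :
    (#(P i) : ℝ) ≤ #(typicalPart E X P i) + 0.0001 * #X := by
  have : (0 : ℝ) < #X := mod_cast hX.card_pos
  have hdefect : #(P i \ typicalPart E X P i) * (0.0001 * (#X : ℝ) ^ 3) ≤
      0.0001 * #X * (0.0001 * (#X : ℝ) ^ 3) := by
    calc #(P i \ typicalPart E X P i) * (0.0001 * (#X : ℝ) ^ 3)
        ≤ ∑ v ∈ P i \ typicalPart E X P i,
            (∏ j ∈ {i}ᶜ, (#(P j) : ℝ) - crossDegree E P i v) := by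
          rw [← nsmul_eq_mul]
          refine card_nsmul_le_sum _ _ _ fun v hv ↦ ?_
          obtain ⟨hvP, hatyp⟩ := mem_sdiff.1 hv
          have := not_le.1 fun h ↦ hatyp (mem_filter.2 ⟨hvP, h⟩)
          linarith
      _ ≤ ∑ v ∈ P i, (∏ j ∈ {i}ᶜ, (#(P j) : ℝ) - crossDegree E P i v) := by
          refine sum_le_sum_of_subset_of_nonneg sdiff_subset fun v _ _ ↦ ?_
          have : (crossDegree E P i v : ℝ) ≤ ∏ j ∈ {i}ᶜ, (#(P j) : ℝ) :=
            mod_cast crossDegree_le_prod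
          linarith
      _ ≤ 1 / 10 ^ 8 * (#X : ℝ) ^ 4 := hP.sum_sub_crossDegree_le hE i
      _ = 0.0001 * #X * (0.0001 * (#X : ℝ) ^ 3) := by ring
  have hsdiff : (#(P i \ typicalPart E X P i) : ℝ) ≤ 0.0001 * #X :=
    le_of_mul_le_mul_right hdefect (by positivity)
  have : (#(P i \ typicalPart E X P i) : ℝ) + #(typicalPart E X P i) = #(P i) :=
    mod_cast card_sdiff_add_card_eq_card (typicalPart_subset i)
  linarith

lemma card_sdiff_typical_le :
    (#(X \ univ.biUnion (typicalPart E X P)) : ℝ) ≤ 0.0005 * #X := by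
  have hdisj : #(univ.biUnion (typicalPart E X P)) = ∑ i, #(typicalPart E X P i) :=
    card_biUnion fun i _ j _ hij ↦
      (hP.pairwise_disjoint hij).mono (typicalPart_subset i) (typicalPart_subset j)
  have hsub : univ.biUnion (typicalPart E X P) ⊆ X :=
    biUnion_subset.2 fun i _ ↦ (typicalPart_subset i).trans (hP.subset i)
  have hadd : (#(X \ univ.biUnion (typicalPart E X P)) : ℝ) + ∑ i, (#(typicalPart E X P i) : ℝ) =
      #X := by
    rw [← card_sdiff_add_card_eq_card hsub, hdisj]
    push_cast
    rfl
  have hparts : ∑ i, (#(P i) : ℝ) ≤ ∑ i, ((#(typicalPart E X P i) : ℝ) + 0.0001 * #X) :=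
    sum_le_sum fun i _ ↦ hP.card_le_card_typicalPart_add hE hX i
  rw [sum_add_distrib, sum_const, card_univ, Fintype.card_fin, nsmul_eq_mul] at hparts
  have := hP.le_sum_card hX
  norm_num at *
  linarith

end Typical

section Extension

variable (hP : IsDensePartition E X P) (hE : E ⊆ X.powersetCard 4) (hfree : TriangleFree E)
  (hX : 10 ^ 6 ≤ #X)
include hP hE hfree hX

omit hP in
lemma notMem_of_crossDegree_add_ge {i : Fin 4} {v w : α} (hvw : v ≠ w)
    (hcross : ∏ j ∈ {i}ᶜ, (#(P j) : ℝ) + 0.00001 * (#X : ℝ) ^ 3 ≤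
      crossDegree E P i v + crossDegree E P i w) {e : Finset α} (he : e ∈ E) (hv : v ∈ e) :
    w ∉ e := by
  refine hfree.notMem_of_card_lt hE (transversals P {i}ᶜ) hvw ?_ he hv
  have hprod : (#(transversals P {i}ᶜ) : ℝ) ≤ ∏ j ∈ {i}ᶜ, (#(P j) : ℝ) :=
    mod_cast card_transversals_le
  have hn : (10 : ℝ) ^ 6 ≤ #X := mod_cast hX
  have hsq : (#X : ℝ) ^ 2 * 10 ^ 6 ≤ (#X : ℝ) ^ 3 := by
    rw [pow_succ _ 2]
    gcongr
  have : (0 : ℝ) < (#X : ℝ) ^ 2 := by positivity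
  suffices #(transversals P {i}ᶜ) + 2 * (#X : ℝ) ^ 2 <
      crossDegree E P i v + crossDegree E P i w by
    exact_mod_cast this
  norm_num at *
  linarith

lemma notMem_of_mem_typicalPart {i : Fin 4} {v w : α} (hv : v ∈ typicalPart E X P i)
    (hw : w ∈ typicalPart E X P i) (hvw : v ≠ w) {e : Finset α} (he : e ∈ E) (hve : v ∈ e) :
    w ∉ e := by
  refine notMem_of_crossDegree_add_ge (P := P) (i := i) hE hfree hX hvw ?_ he hve
  have := (hP.prod_card_compl_mem_Icc (card_pos.1 (by lia)) i).1
  have := (mem_filter.1 hv).2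
  have := (mem_filter.1 hw).2
  have : (0 : ℝ) ≤ (#X : ℝ) ^ 3 := by positivity
  linarith

lemma exists_erase_mem_transversals {v : α} {e : Finset α} (he : e ∈ E) (hv : v ∈ e)
    (htyp : ∀ w ∈ e, w ≠ v → ∃ i, w ∈ typicalPart E X P i) :
    ∃ i, e.erase v ∈ transversals (typicalPart E X P) {i}ᶜ := by
  choose! κ hκ using htyp
  have hκ' : ∀ w ∈ e.erase v, w ∈ typicalPart E X P (κ w) := fun w hw ↦
    hκ w (mem_of_mem_erase hw) (ne_of_mem_erase hw)
  have hinj : Set.InjOn κ (e.erase v) := by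
    intro w hw w' hw' heq
    by_contra hne
    exact hP.notMem_of_mem_typicalPart hE hfree hX (hκ' w hw) (heq ▸ hκ' w' hw') hne he
      (mem_of_mem_erase hw) (mem_of_mem_erase hw')
  obtain ⟨i, hi⟩ : ∃ i, ((e.erase v).image κ)ᶜ = {i} := by
    rw [← card_eq_one, card_compl, card_image_of_injOn hinj, card_erase_of_mem hv,
      (mem_powersetCard.1 (hE he)).2, Fintype.card_fin]
  have : Nonempty α := ⟨v⟩
  exact ⟨i, by simpa only [← hi, compl_compl] using mem_transversals_image_of_injOn hinj hκ'⟩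

lemma degree_le_card_filter_add (v : α) :
    (degree E v : ℝ) ≤
      #{e ∈ E | v ∈ e ∧ ∃ i, e.erase v ∈ transversals (typicalPart E X P) {i}ᶜ} +
        0.0005 * (#X : ℝ) ^ 3 := by
  classical
  set B := X \ univ.biUnion (typicalPart E X P)
  have hsub : {e ∈ E | v ∈ e} ⊆
      {e ∈ E | v ∈ e ∧ ∃ i, e.erase v ∈ transversals (typicalPart E X P) {i}ᶜ} ∪
        {e ∈ E | v ∈ e ∧ ∃ w ∈ B, w ≠ v ∧ w ∈ e} := by
    intro e he
    obtain ⟨he, hv⟩ := mem_filter.1 he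
    by_cases hB : ∃ w ∈ B, w ≠ v ∧ w ∈ e
    · exact mem_union_right _ (mem_filter.2 ⟨he, hv, hB⟩)
    refine mem_union_left _ (mem_filter.2 ⟨he, hv, ?_⟩)
    refine hP.exists_erase_mem_transversals hE hfree hX he hv fun w hw hwv ↦ ?_
    by_contra! hatyp
    refine hB ⟨w, mem_sdiff.2 ⟨(mem_powersetCard.1 (hE he)).1 hw, ?_⟩, hwv, hw⟩
    simpa using hatyp
  have hmeets : (#{e ∈ E | v ∈ e ∧ ∃ w ∈ B, w ≠ v ∧ w ∈ e} : ℝ) ≤ 0.0005 * (#X : ℝ) ^ 3 := by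
    calc (#{e ∈ E | v ∈ e ∧ ∃ w ∈ B, w ≠ v ∧ w ∈ e} : ℝ) ≤ #B * (#X : ℝ) ^ 2 :=
          mod_cast card_filter_meets_le hE B v
      _ ≤ 0.0005 * #X * (#X : ℝ) ^ 2 := by
          gcongr
          exact hP.card_sdiff_typical_le hE (card_pos.1 (by lia))
      _ = 0.0005 * (#X : ℝ) ^ 3 := by ring
  have hcard : (degree E v : ℝ) ≤
      (#{e ∈ E | v ∈ e ∧ ∃ i, e.erase v ∈ transversals (typicalPart E X P) {i}ᶜ} +
        #{e ∈ E | v ∈ e ∧ ∃ w ∈ B, w ≠ v ∧ w ∈ e} : ℕ) :=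
    mod_cast (card_le_card hsub).trans (card_union_le _ _)
  push_cast at hcard
  linarith

lemma degree_le_crossDegree_add {i : Fin 4} {v : α}
    (hv : 0.0002 * (#X : ℝ) ^ 3 ≤ crossDegree E P i v) :
    (degree E v : ℝ) ≤ crossDegree E P i v + 0.0005 * (#X : ℝ) ^ 3 := by
  refine (hP.degree_le_card_filter_add hE hfree hX v).trans ?_
  gcongr
  refine card_le_card fun e he ↦ ?_
  obtain ⟨he, hve, j, hj⟩ := mem_filter.1 he
  refine mem_filter.2 ⟨he, hve, ?_⟩
  obtain rfl | hij := eq_or_ne i j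
  · exact transversals_mono typicalPart_subset hj
  exfalso
  obtain ⟨f, hf, himage⟩ := mem_transversals.1 hj
  have hi : i ∈ ({j}ᶜ : Finset (Fin 4)) := by simpa using hij
  have hfi : f i ∈ e.erase v := himage ▸ mem_image_of_mem f hi
  refine notMem_of_crossDegree_add_ge (P := P) (i := i) hE hfree hX (ne_of_mem_erase hfi).symm ?_
    he hve (mem_of_mem_erase hfi)
  have := (mem_filter.1 (hf i hi)).2
  have : (0 : ℝ) ≤ (#X : ℝ) ^ 3 := by positivity
  linarith

lemma degree_le_of_crossDegree_lt {v : α}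
    (hv : ∀ i, crossDegree E P i v < 0.0002 * (#X : ℝ) ^ 3) :
    (degree E v : ℝ) ≤ 0.0013 * (#X : ℝ) ^ 3 := by
  classical
  have hsub : {e ∈ E | v ∈ e ∧ ∃ i, e.erase v ∈ transversals (typicalPart E X P) {i}ᶜ} ⊆
      univ.biUnion fun i ↦ {e ∈ E | v ∈ e ∧ e.erase v ∈ transversals P {i}ᶜ} := by
    intro e he
    obtain ⟨he, hve, i, hi⟩ := mem_filter.1 he
    exact mem_biUnion.2 ⟨i, mem_univ i,
      mem_filter.2 ⟨he, hve, transversals_mono typicalPart_subset hi⟩⟩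
  have hcross : (#{e ∈ E | v ∈ e ∧ ∃ i, e.erase v ∈ transversals (typicalPart E X P) {i}ᶜ} : ℝ) ≤
      ∑ i, (crossDegree E P i v : ℝ) :=
    mod_cast (card_le_card hsub).trans card_biUnion_le
  have hsum : ∑ i, (crossDegree E P i v : ℝ) ≤ ∑ _i : Fin 4, 0.0002 * (#X : ℝ) ^ 3 :=
    sum_le_sum fun i _ ↦ (hv i).le
  rw [sum_const, card_univ, Fintype.card_fin, nsmul_eq_mul] at hsum
  have := hP.degree_le_card_filter_add hE hfree hX v
  norm_num at *
  linarith

lemma degree_le (v : α) : (degree E v : ℝ) ≤ 0.02 * (#X : ℝ) ^ 3 := by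
  have hn : (0 : ℝ) ≤ (#X : ℝ) ^ 3 := by positivity
  by_cases hv : ∃ i, 0.0002 * (#X : ℝ) ^ 3 ≤ crossDegree E P i v
  · obtain ⟨i, hi⟩ := hv
    have hle : (crossDegree E P i v : ℝ) ≤ ∏ j ∈ {i}ᶜ, (#(P j) : ℝ) :=
      mod_cast crossDegree_le_prod
    have := (hP.prod_card_compl_mem_Icc (card_pos.1 (by lia)) i).2
    have := hP.degree_le_crossDegree_add hE hfree hX hi
    linarith
  · push Not at hv
    have := hP.degree_le_of_crossDegree_lt hE hfree hX hv
    linarith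

lemma exists_coloring : ∃ χ : α → Fin 4,
    ∀ e ∈ E, (∀ v ∈ e, (#X : ℝ) ^ 3 / 100 ≤ degree E v) → Set.InjOn χ e := by
  have hn : (0 : ℝ) < (#X : ℝ) ^ 3 := by
    have := card_pos.1 (by lia : 0 < #X)
    positivity
  have hex (v : α) : ∃ i, (#X : ℝ) ^ 3 / 100 ≤ degree E v →
      0.0095 * (#X : ℝ) ^ 3 ≤ crossDegree E P i v := by
    by_cases hv : ∃ i, 0.0002 * (#X : ℝ) ^ 3 ≤ crossDegree E P i v
    · obtain ⟨i, hi⟩ := hv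
      have := hP.degree_le_crossDegree_add hE hfree hX hi
      exact ⟨i, fun hdeg ↦ by linarith⟩
    · push Not at hv
      have := hP.degree_le_of_crossDegree_lt hE hfree hX hv
      exact ⟨0, fun hdeg ↦ by linarith⟩
  choose χ hχ using hex
  refine ⟨χ, fun e he hdeg v hv w hw heq ↦ ?_⟩
  by_contra hvw
  refine notMem_of_crossDegree_add_ge (P := P) (i := χ v) hE hfree hX hvw ?_ he hv hw
  have := hχ v (hdeg v hv)
  have := heq ▸ hχ w (hdeg w hw)
  have := (hP.prod_card_compl_mem_Icc (card_pos.1 (by lia)) (χ v)).2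
  linarith

end Extension

section LowDegree

variable (hP : IsDensePartition E X P) (hE : E ⊆ X.powersetCard 4) (hX : X.Nonempty)
include hP hE hX

lemma card_filter_degree_lt_le :
    (#{v ∈ X | (degree E v : ℝ) < (#X : ℝ) ^ 3 / 100} : ℝ) ≤ 0.0005 * #X := by
  refine le_trans ?_ (hP.card_sdiff_typical_le hE hX)
  gcongr
  intro v hv
  obtain ⟨hvX, hdeg⟩ := mem_filter.1 hv
  refine mem_sdiff.2 ⟨hvX, fun hmem ↦ ?_⟩
  obtain ⟨i, -, hi⟩ := mem_biUnion.1 hmem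
  have hcross : (crossDegree E P i v : ℝ) ≤ degree E v := mod_cast crossDegree_le_degree
  have := (mem_filter.1 hi).2
  have := (hP.prod_card_compl_mem_Icc hX i).1
  have : (0 : ℝ) ≤ (#X : ℝ) ^ 3 := by positivity
  linarith

end LowDegree
end IsDensePartition
end DensePartition

section ColorClass

open Finset

variable {α ι : Type*} [DecidableEq ι]

/-- The fibre over `i` of a colouring `χ` restricted to `U`. -/
def colorClass (χ : α → ι) (U : Finset α) (i : ι) : Finset α :=
  {v ∈ U | χ v = i}

variable (χ : α → ι)

lemma colorClass_subset (U : Finset α) (i : ι) : colorClass χ U i ⊆ U := filter_subset _ _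

lemma pairwise_disjoint_colorClass (U : Finset α) :
    Pairwise fun i j ↦ Disjoint (colorClass χ U i) (colorClass χ U j) := fun _ _ hij ↦
  disjoint_left.2 fun _ hi hj ↦ hij ((mem_filter.1 hi).2.symm.trans (mem_filter.1 hj).2)

variable [Fintype ι]

lemma sum_card_colorClass (U : Finset α) : ∑ i, #(colorClass χ U i) = #U :=
  (card_eq_sum_card_fiberwise fun _ _ ↦ mem_coe.2 (mem_univ _)).symm

variable {χ}

lemma mem_transversals_colorClass [DecidableEq α] {U e : Finset α} :
    e ∈ transversals (colorClass χ U) univ ↔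
      e ∈ U.powersetCard (Fintype.card ι) ∧ Set.InjOn χ e := by
  constructor
  · intro he
    obtain ⟨f, hf, rfl⟩ := mem_transversals.1 he
    have hfU (i : ι) : f i ∈ U ∧ χ (f i) = i := mem_filter.1 (hf i (mem_univ i))
    have hinv : Function.LeftInverse χ f := fun i ↦ (hfU i).2
    refine ⟨mem_powersetCard.2 ⟨image_subset_iff.2 fun i _ ↦ (hfU i).1, ?_⟩, ?_⟩
    · rw [card_image_of_injective _ hinv.injective, card_univ]
    · simp only [coe_image, coe_univ, Set.image_univ]
      rintro _ ⟨i, rfl⟩ _ ⟨j, rfl⟩ h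
      rw [hinv, hinv] at h
      rw [h]
  · rintro ⟨he, hχ⟩
    obtain ⟨heU, hcard⟩ := mem_powersetCard.1 he
    obtain rfl | ⟨v, -⟩ := e.eq_empty_or_nonempty
    · have := Fintype.card_eq_zero_iff.1 hcard.symm
      exact mem_transversals.2 ⟨isEmptyElim, fun j ↦ isEmptyElim j, by simp⟩
    have : Nonempty α := ⟨v⟩
    have himage : e.image χ = univ := eq_univ_of_card _ (by rw [card_image_of_injOn hχ, hcard])
    exact himage ▸ mem_transversals_image_of_injOn hχ fun v hv ↦ mem_filter.2 ⟨heU hv, rfl⟩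

end ColorClass

section NearlyFourPartite

open Finset

variable {α : Type*} [DecidableEq α] {E : Finset (Finset α)} {X U : Finset α}

/-- The vertices of `X` of degree less than `(#X) ^ 3 / 100`; in a Turán 4-graph every vertex has
degree about `(#X) ^ 3 / 64`. -/
noncomputable def lowDegree (E : Finset (Finset α)) (X : Finset α) : Finset α :=
  {v ∈ X | (degree E v : ℝ) < (#X : ℝ) ^ 3 / 100}

/-- After deleting the few vertices of low degree, the hypergraph `E` is 4-partite. -/
def NearlyFourPartite (E : Finset (Finset α)) (X : Finset α) : Prop :=
  (∃ χ : α → Fin 4, ∀ e ∈ E, e ⊆ X \ lowDegree E X → Set.InjOn χ e) ∧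
    (#(lowDegree E X) : ℝ) ≤ #X / 20

lemma filter_subset_inter_transversals (hE : E ⊆ X.powersetCard 4) {χ : α → Fin 4}
    (hχ : ∀ e ∈ E, e ⊆ U → Set.InjOn χ e) :
    {e ∈ E | e ⊆ U} ⊆ E ∩ transversals (colorClass χ U) univ := by
  intro e he
  obtain ⟨he, heU⟩ := mem_filter.1 he
  exact mem_inter.2 ⟨he, mem_transversals_colorClass.2
    ⟨mem_powersetCard.2 ⟨heU, (mem_powersetCard.1 (hE he)).2⟩, hχ e he heU⟩⟩

lemma card_filter_subset_le (hE : E ⊆ X.powersetCard 4) {χ : α → Fin 4}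
    (hχ : ∀ e ∈ E, e ⊆ U → Set.InjOn χ e) : (#{e ∈ E | e ⊆ U} : ℝ) ≤ ((#U : ℝ) / 4) ^ 4 := by
  calc (#{e ∈ E | e ⊆ U} : ℝ) ≤ ∏ i, (#(colorClass χ U i) : ℝ) :=
        mod_cast (card_le_card ((filter_subset_inter_transversals hE hχ).trans
          inter_subset_right)).trans card_transversals_le
    _ ≤ ((∑ i, (#(colorClass χ U i) : ℝ)) / 4) ^ 4 := prod_le_pow_four fun i ↦ by positivity
    _ = ((#U : ℝ) / 4) ^ 4 := by rw [← sum_card_colorClass χ U]; push_cast; rfl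

lemma IsDensePartition.nearlyFourPartite {P : Fin 4 → Finset α} (hP : IsDensePartition E X P)
    (hE : E ⊆ X.powersetCard 4) (hfree : TriangleFree E) (hX : 10 ^ 6 ≤ #X) :
    NearlyFourPartite E X := by
  obtain ⟨χ, hχ⟩ := hP.exists_coloring hE hfree hX
  refine ⟨⟨χ, fun e he hsub ↦ hχ e he fun v hv ↦ ?_⟩, ?_⟩
  · obtain ⟨hvX, hlow⟩ := mem_sdiff.1 (hsub hv)
    by_contra! hlt
    exact hlow (mem_filter.2 ⟨hvX, hlt⟩)
  · have : (0 : ℝ) ≤ #X := by positivity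
    have hlow : (#(lowDegree E X) : ℝ) ≤ 0.0005 * #X :=
      hP.card_filter_degree_lt_le hE (card_pos.1 (by lia))
    linarith

namespace NearlyFourPartite

variable (hG : NearlyFourPartite E X) (hE : E ⊆ X.powersetCard 4)
  (hcard : (1 / 256 - 1 / 10 ^ 11) * (#X : ℝ) ^ 4 ≤ #E)
include hG hE hcard

lemma card_lowDegree_le (hX : X.Nonempty) : (#(lowDegree E X) : ℝ) ≤ 1 / (4 * 10 ^ 8) * #X := by
  obtain ⟨⟨χ, hχ⟩, hlow⟩ := hG
  have hn : (0 : ℝ) < #X := mod_cast hX.card_pos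
  have hdeg : ∑ v ∈ lowDegree E X, (degree E v : ℝ) ≤
      #(lowDegree E X) * ((#X : ℝ) ^ 3 / 100) := by
    rw [← nsmul_eq_mul]
    exact sum_le_card_nsmul _ _ _ fun v hv ↦ (mem_filter.1 hv).2.le
  have hsplit : (#E : ℝ) ≤
      #{e ∈ E | e ⊆ X \ lowDegree E X} + ∑ v ∈ lowDegree E X, (degree E v : ℝ) :=
    mod_cast card_le_card_filter_sdiff_add (fun e he ↦ (mem_powersetCard.1 (hE he)).1) _
  have hcardU : (#(X \ lowDegree E X) : ℝ) = #X - #(lowDegree E X) :=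
    cast_card_sdiff (filter_subset _ _)
  have hU := card_filter_subset_le hE hχ
  rw [hcardU] at hU
  set n : ℝ := (#X : ℝ)
  set z : ℝ := (#(lowDegree E X) : ℝ)
  have hz : 0 ≤ z := by positivity
  have hpow : ((n - z) / 4) ^ 4 ≤ n ^ 4 / 256 - z * n ^ 3 * (3.7 / 256) := by
    have hsq : n ^ 2 * (6 * z ^ 2) ≤ n ^ 2 * (0.3 * n * z) := by
      refine mul_le_mul_of_nonneg_left ?_ (by positivity)
      nlinarith
    have hcube : z ^ 3 * z ≤ z ^ 3 * (4 * n) := by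
      gcongr
      linarith
    linear_combination (hsq + hcube) / 256
  have hz4 : z * 0.004 * n ^ 3 ≤ 1 / 10 ^ 11 * n * n ^ 3 := by
    have : 0 ≤ z * n ^ 3 := by positivity
    linarith
  have := le_of_mul_le_mul_right hz4 (by positivity)
  norm_num at *
  linarith

lemma exists_isDensePartition (hX : 10 ^ 11 ≤ #X) (u : α) :
    ∃ P, IsDensePartition E X P ∧ ∀ i, u ∉ P i := by
  have hlow := hG.card_lowDegree_le hE hcard (card_pos.1 (by lia))
  obtain ⟨⟨χ, hχ⟩, -⟩ := hG
  set U := X \ insert u (lowDegree E X)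
  have hUX : U ⊆ X := sdiff_subset
  refine ⟨colorClass χ U, ⟨fun i ↦ (colorClass_subset χ U i).trans hUX,
    pairwise_disjoint_colorClass χ U, ?_⟩, fun i hi ↦ ?_⟩
  · have hsplit : (#E : ℝ) ≤
        #{e ∈ E | e ⊆ U} + ∑ v ∈ insert u (lowDegree E X), (degree E v : ℝ) :=
      mod_cast card_le_card_filter_sdiff_add (fun e he ↦ (mem_powersetCard.1 (hE he)).1) _
    have hrainbow : (#{e ∈ E | e ⊆ U} : ℝ) ≤ #(E ∩ transversals (colorClass χ U) univ) :=
      mod_cast card_le_card <| filter_subset_inter_transversals hE fun e he heU ↦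
        hχ e he (heU.trans (sdiff_subset_sdiff Subset.rfl (subset_insert _ _)))
    have hdeg : ∑ v ∈ insert u (lowDegree E X), (degree E v : ℝ) ≤
        (#X : ℝ) ^ 3 + #(lowDegree E X) * (#X : ℝ) ^ 3 := by
      have hle (v : α) : (degree E v : ℝ) ≤ (#X : ℝ) ^ 3 := mod_cast degree_le hE v
      calc ∑ v ∈ insert u (lowDegree E X), (degree E v : ℝ)
          ≤ #(insert u (lowDegree E X)) * (#X : ℝ) ^ 3 := by
            rw [← nsmul_eq_mul]
            exact sum_le_card_nsmul _ _ _ fun v _ ↦ hle v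
        _ ≤ (#(lowDegree E X) + 1 : ℕ) * (#X : ℝ) ^ 3 := by
            gcongr
            exact card_insert_le _ _
        _ = (#X : ℝ) ^ 3 + #(lowDegree E X) * (#X : ℝ) ^ 3 := by push_cast; ring
    have hn : (10 : ℝ) ^ 11 ≤ #X := mod_cast hX
    have hlow4 : #(lowDegree E X) * (#X : ℝ) ^ 3 ≤ 1 / (4 * 10 ^ 8) * #X * (#X : ℝ) ^ 3 := by gcongr
    have hn4 : 10 ^ 11 * (#X : ℝ) ^ 3 ≤ #X * (#X : ℝ) ^ 3 := by gcongr
    have : 0 ≤ (#X : ℝ) ^ 4 := by positivity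
    linarith
  · exact (mem_sdiff.1 (colorClass_subset χ U i hi)).2 (mem_insert_self _ _)

end NearlyFourPartite
end NearlyFourPartite

section Clone

open Finset

variable {α β : Type*} [DecidableEq α] [DecidableEq β] {E : Finset (Finset α)} {X e : Finset α}
  {u w p : α} {r : ℕ}

lemma card_memberSubfamily_eq_degree (E : Finset (Finset α)) (v : α) :
    #(E.memberSubfamily v) = degree E v := by
  refine card_image_of_injOn fun e he f hf hef ↦ ?_
  rw [← insert_erase (mem_filter.1 he).2, ← insert_erase (mem_filter.1 hf).2]
  exact congrArg (insert v) hef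

/-- The hypergraph obtained from `E` by deleting the vertex `u` and putting a copy of the vertex `w`
in its place. -/
def clone (E : Finset (Finset α)) (u w : α) : Finset (Finset α) :=
  E.nonMemberSubfamily u ∪ ((E.nonMemberSubfamily u).memberSubfamily w).image (insert u)

lemma mem_clone (huw : u ≠ w) :
    e ∈ clone E u w ↔ (u ∉ e ∧ e ∈ E) ∨ (u ∈ e ∧ w ∉ e ∧ insert w (e.erase u) ∈ E) := by
  simp only [clone, mem_union, mem_nonMemberSubfamily, mem_image, mem_memberSubfamily, mem_insert,
    huw, false_or]
  refine or_congr and_comm ⟨?_, fun ⟨hu, hw, he⟩ ↦ ?_⟩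
  · rintro ⟨S, ⟨⟨hS, huS⟩, hwS⟩, rfl⟩
    exact ⟨mem_insert_self _ _, by simp [huw.symm, hwS], by rwa [erase_insert huS]⟩
  · exact ⟨e.erase u, ⟨⟨he, notMem_erase _ _⟩, fun h ↦ hw (mem_of_mem_erase h)⟩, insert_erase hu⟩

lemma mem_clone_of_notMem (huw : u ≠ w) (hu : u ∉ e) : e ∈ clone E u w ↔ e ∈ E := by
  simp [mem_clone huw, hu]

lemma clone_subset_powersetCard (hE : E ⊆ X.powersetCard r) (huw : u ≠ w) (hu : u ∈ X) :
    clone E u w ⊆ X.powersetCard r := by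
  intro e he
  obtain ⟨-, he⟩ | ⟨hue, hwe, he⟩ := (mem_clone huw).1 he
  · exact hE he
  · obtain ⟨hX, hr⟩ := mem_powersetCard.1 (hE he)
    rw [card_insert_of_notMem fun h ↦ hwe (mem_of_mem_erase h), card_erase_add_one hue] at hr
    refine mem_powersetCard.2 ⟨?_, hr⟩
    rw [← insert_erase hue]
    exact insert_subset hu ((subset_insert _ _).trans hX)

lemma card_clone_add (E : Finset (Finset α)) (u w : α) :
    #(clone E u w) + degree E u + codegree E u w = #E + degree E w := by
  have hdisj : Disjoint (E.nonMemberSubfamily u)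
      (((E.nonMemberSubfamily u).memberSubfamily w).image (insert u)) := by
    simp only [disjoint_left, mem_nonMemberSubfamily, mem_image, not_exists, not_and]
    rintro e he S - rfl
    exact he.2 (mem_insert_self _ _)
  have hinj : Set.InjOn (insert u)
      ((E.nonMemberSubfamily u).memberSubfamily w : Set (Finset α)) := by
    intro S hS T hT hST
    have hu {S} (hS : S ∈ (E.nonMemberSubfamily u).memberSubfamily w) : u ∉ S := fun h ↦
      (mem_nonMemberSubfamily.1 (mem_memberSubfamily.1 hS).1).2 (mem_insert_of_mem h)
    rw [← erase_insert (hu hS), ← erase_insert (hu hT), hST]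
  have hu := card_memberSubfamily_add_card_nonMemberSubfamily u E
  have hw : degree (E.nonMemberSubfamily u) w + codegree E u w = degree E w := by
    have := card_filter_add_card_filter_not (s := {e ∈ E | w ∈ e}) (u ∈ ·)
    rw [filter_filter, filter_filter] at this
    simp only [degree, codegree, nonMemberSubfamily, filter_filter, and_comm] at this ⊢
    lia
  rw [card_memberSubfamily_eq_degree] at hu
  rw [clone, card_union_of_disjoint hdisj, card_image_of_injOn hinj,
    card_memberSubfamily_eq_degree]
  lia

lemma memberSubfamily_clone_of_ne (huw : u ≠ w) (hp : p ≠ u) :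
    (clone E u w).memberSubfamily p = clone (E.memberSubfamily p) u w := by
  ext S
  simp only [mem_memberSubfamily, mem_clone huw, mem_insert, mem_erase, hp.symm, false_or,
    erase_insert_of_ne hp, insert_comm w p]
  grind

lemma memberSubfamily_clone_self (huw : u ≠ w) :
    (clone E u w).memberSubfamily u = (clone E u w).memberSubfamily w := by
  ext S
  simp only [mem_memberSubfamily, mem_clone huw, mem_insert, huw, huw.symm]
  grind [erase_insert]

lemma SigmaFree.of_image {F : Finset (Finset β)} (hF : SigmaFree F) (σ : α → β)
    (hσ : ∀ e ∈ E, Set.InjOn σ e ∧ e.image σ ∈ F) : SigmaFree E := by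
  intro S x y e hx hy he hxy hxS hyS hxe hye
  have himage {x} (hx : insert x S ∈ E) (hxS : x ∉ S) :
      insert (σ x) (S.image σ) ∈ F ∧ σ x ∉ S.image σ := by
    refine ⟨image_insert σ x S ▸ (hσ _ hx).2, fun h ↦ ?_⟩
    obtain ⟨s, hs, hsx⟩ := mem_image.1 h
    exact hxS ((hσ _ hx).1 (mem_insert_of_mem hs) (mem_insert_self _ _) hsx ▸ hs)
  obtain ⟨hxF, hxSσ⟩ := himage hx hxS
  obtain ⟨hyF, hySσ⟩ := himage hy hyS
  exact hF hxF hyF (hσ e he).2 (fun h ↦ hxy ((hσ e he).1 hxe hye h)) hxSσ hySσ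
    (mem_image_of_mem σ hxe) (mem_image_of_mem σ hye)

protected lemma SigmaFree.clone (hE : SigmaFree E) (huw : u ≠ w) : SigmaFree (clone E u w) := by
  refine hE.of_image (Function.update id u w) fun e he ↦ ?_
  have hfix {S : Finset α} (hS : u ∉ S) : S.image (Function.update id u w) = S := by
    refine (image_congr fun x hx ↦ ?_).trans image_id
    exact Function.update_of_ne (ne_of_mem_of_not_mem hx hS) _ _
  obtain ⟨hue, heE⟩ | ⟨hue, hwe, heE⟩ := (mem_clone huw).1 he
  · refine ⟨fun x hx y hy hxy ↦ ?_, by rwa [hfix hue]⟩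
    rwa [Function.update_of_ne (ne_of_mem_of_not_mem hx hue),
      Function.update_of_ne (ne_of_mem_of_not_mem hy hue)] at hxy
  · refine ⟨fun x hx y hy hxy ↦ ?_, ?_⟩
    · simp only [Function.update_apply, id] at hxy
      grind
    · rwa [← insert_erase hue, image_insert, hfix (notMem_erase _ _), Function.update_self]

end Clone

section Collisions

open Finset

variable {α ι κ : Type*} [DecidableEq ι] [DecidableEq κ] {f : α → ι} {g : α → κ}
  {X : Finset α} {u w : α}

/-- The number of pairs in `X ×ˢ X` that `f` does not separate. -/
def collisions (f : α → ι) (X : Finset α) : ℕ := ∑ v ∈ X, #(colorClass f X (f v))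

lemma collisions_le (f : α → ι) (X : Finset α) : collisions f X ≤ #X ^ 2 := by
  rw [sq, ← smul_eq_mul]
  exact sum_le_card_nsmul _ _ _ fun v _ ↦ card_le_card (colorClass_subset f X _)

lemma collisions_insert [DecidableEq α] (f : α → ι) (hu : u ∉ X) :
    collisions f (insert u X) = collisions f X + 2 * #(colorClass f X (f u)) + 1 := by
  have hself : #(colorClass f (insert u X) (f u)) = #(colorClass f X (f u)) + 1 := by
    rw [colorClass, filter_insert, if_pos rfl, card_insert_of_notMem (by simp [hu])]
    rfl
  have hother (v : α) : #(colorClass f (insert u X) (f v)) =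
      #(colorClass f X (f v)) + if f v = f u then 1 else 0 := by
    rw [colorClass, filter_insert]
    split_ifs with h h' h'
    · rw [card_insert_of_notMem (by simp [hu])]; rfl
    · exact absurd h.symm h'
    · exact absurd h'.symm h
    · rfl
  rw [collisions, sum_insert hu, hself, sum_congr rfl fun v _ ↦ hother v, sum_add_distrib,
    ← card_filter]
  change _ + (collisions f X + #(colorClass f X (f u))) = _
  lia

lemma collisions_lt_collisions (hu : u ∈ X)
    (hoff : ∀ ⦃v v'⦄, v ≠ u → v' ≠ u → f v = f v' → g v = g v') (hf : f u ≠ f w) (hg : g u = g w)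
    (hle : #(colorClass f X (f u)) ≤ #(colorClass f X (f w))) :
    collisions f X < collisions g X := by
  classical
  obtain ⟨Y, huY, rfl⟩ : ∃ Y, u ∉ Y ∧ insert u Y = X :=
    ⟨X.erase u, notMem_erase _ _, insert_erase hu⟩
  have hwu : w ≠ u := fun h ↦ hf (congrArg f h.symm)
  have hne {v} (hv : v ∈ Y) : v ≠ u := ne_of_mem_of_not_mem hv huY
  have hclass : #(colorClass f Y (f u)) < #(colorClass f Y (f w)) := by
    simp only [colorClass, filter_insert, if_neg hf, if_true] at hle ⊢
    rwa [card_insert_of_notMem (by simp [huY])] at hle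
  have hclass' : colorClass f Y (f w) ⊆ colorClass g Y (g u) := fun v hv ↦ by
    obtain ⟨hvY, hvw⟩ := mem_filter.1 hv
    exact mem_filter.2 ⟨hvY, (hoff (hne hvY) hwu hvw).trans hg.symm⟩
  have hY : collisions f Y ≤ collisions g Y :=
    sum_le_sum fun v hv ↦ card_le_card fun v' hv' ↦ by
      obtain ⟨hvY, hvv⟩ := mem_filter.1 hv'
      exact mem_filter.2 ⟨hvY, hoff (hne hvY) (hne hv) hvv⟩
  have := card_le_card hclass'
  rw [collisions_insert f huY, collisions_insert g huY]
  lia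

end Collisions

section DisjointTransversal

open Finset

variable {ι κ α : Type*} [DecidableEq α] {P : ι → Finset α}

lemma card_transversals_univ [Fintype ι]
    (hP : Pairwise fun i j ↦ Disjoint (P i) (P j)) : #(transversals P univ) = ∏ i, #(P i) := by
  classical
  refine card_transversals_le.antisymm ?_
  rw [← Fintype.card_piFinset]
  refine card_le_card_of_injOn (univ.image ·) (fun f hf ↦ ?_) fun f hf g hg hfg ↦ ?_
  · exact mem_transversals.2 ⟨f, fun j _ ↦ Fintype.mem_piFinset.1 hf j, rfl⟩
  · funext j
    have hmem : f j ∈ univ.image g := by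
      rw [← show univ.image f = univ.image g from hfg]
      exact mem_image_of_mem f (mem_univ j)
    obtain ⟨k, -, hkj⟩ := mem_image.1 hmem
    obtain rfl : k = j := by
      by_contra hne
      exact disjoint_left.1 (hP hne) (Fintype.mem_piFinset.1 hg k)
        (hkj ▸ Fintype.mem_piFinset.1 hf j)
    exact hkj.symm

lemma transversals_comp_subset [Fintype κ] [Nonempty κ] [DecidableEq ι] {σ : κ → ι}
    (hσ : Function.Injective σ) : transversals (P ∘ σ) univ ⊆ transversals P (univ.image σ) := by
  intro S hS
  obtain ⟨f, hf, rfl⟩ := mem_transversals.1 hS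
  have hinv := Function.leftInverse_invFun hσ
  refine mem_transversals.2 ⟨f ∘ Function.invFun σ, forall_mem_image.2 fun j hj ↦ ?_, ?_⟩
  · simpa [hinv j] using hf j hj
  · rw [image_image, Function.comp_assoc, hinv.comp_eq_id, Function.comp_id]

end DisjointTransversal

section Twins

open Finset

variable {α : Type*} [DecidableEq α] {E : Finset (Finset α)} {X S B e : Finset α} {v : α}

/-- The link of the vertex `v`. Vertices with equal links, called twins, form the classes of the
colouring `link E`. -/
abbrev link (E : Finset (Finset α)) (v : α) : Finset (Finset α) := E.memberSubfamily v

lemma injOn_link (he : e ∈ E) : Set.InjOn (link E) e := by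
  intro v hv w hw hvw
  by_contra hne
  have hmem : e.erase v ∈ link E v := mem_memberSubfamily.2 ⟨by rwa [insert_erase hv], by simp⟩
  rw [hvw] at hmem
  exact (mem_memberSubfamily.1 hmem).2 (mem_erase.2 ⟨Ne.symm hne, hw⟩)

lemma image_union_mem_of_link_eq {g : α → α} (hg : ∀ v ∈ S, link E (g v) = link E v)
    (hdisj : Disjoint S B) (h : S ∪ B ∈ E) : S.image g ∪ B ∈ E := by
  induction S using Finset.induction_on generalizing B with
  | empty => simpa using h
  | insert x S hxS ih =>
    obtain ⟨hxB, hSB⟩ := disjoint_insert_left.1 hdisj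
    rw [insert_union] at h
    have hmem : S ∪ B ∈ link E x := mem_memberSubfamily.2 ⟨h, by simp [hxS, hxB]⟩
    rw [← hg x (mem_insert_self _ _)] at hmem
    obtain ⟨hgx, hgxSB⟩ := mem_memberSubfamily.1 hmem
    rw [image_insert, insert_union, ← union_insert]
    refine ih (fun v hv ↦ hg v (mem_insert_of_mem hv)) ?_ (by rwa [union_insert])
    exact disjoint_insert_right.2 ⟨fun h ↦ hgxSB (mem_union_left _ h), hSB⟩

lemma image_mem_of_link_eq {g : α → α} (he : e ∈ E) (hg : ∀ v ∈ e, link E (g v) = link E v) :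
    e.image g ∈ E := by
  simpa using image_union_mem_of_link_eq hg (disjoint_empty_right e) (by simpa using he)

/-- The hypergraph obtained from `E` by identifying twins; its vertices are the links of `E`. -/
def twinQuotient (E : Finset (Finset α)) : Finset (Finset (Finset (Finset α))) :=
  E.image fun e ↦ e.image (link E)

variable {T : Finset (Finset (Finset α))}

lemma image_mem_of_mem_twinQuotient (hT : T ∈ twinQuotient E) {f : Finset (Finset α) → α}
    (hf : ∀ i ∈ T, link E (f i) = i) : T.image f ∈ E := by
  obtain ⟨e, he, rfl⟩ := mem_image.1 hT
  rw [image_image]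
  exact image_mem_of_link_eq he fun v hv ↦ hf _ (mem_image_of_mem _ hv)

lemma transversals_subset_of_mem_twinQuotient (hT : T ∈ twinQuotient E) :
    transversals (colorClass (link E) X) T ⊆ E := by
  intro S hS
  obtain ⟨f, hf, rfl⟩ := mem_transversals.1 hS
  exact image_mem_of_mem_twinQuotient hT fun i hi ↦ (mem_filter.1 (hf i hi)).2

variable {r : ℕ} (hE : E ⊆ X.powersetCard r)
include hE

lemma twinQuotient_subset_powersetCard :
    twinQuotient E ⊆ (X.image (link E)).powersetCard r := by
  intro T hT
  obtain ⟨e, he, rfl⟩ := mem_image.1 hT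
  obtain ⟨heX, her⟩ := mem_powersetCard.1 (hE he)
  exact mem_powersetCard.2
    ⟨image_subset_image heX, by rw [card_image_of_injOn (injOn_link he), her]⟩

lemma memberSubfamily_twinQuotient_subset (i : Finset (Finset α)) :
    (twinQuotient E).memberSubfamily i ⊆ ((X.image (link E)).erase i).powersetCard (r - 1) := by
  intro T hT
  obtain ⟨hT, hiT⟩ := mem_memberSubfamily.1 hT
  obtain ⟨hsub, hcard⟩ := mem_powersetCard.1 (twinQuotient_subset_powersetCard hE hT)
  rw [card_insert_of_notMem hiT] at hcard
  exact mem_powersetCard.2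
    ⟨subset_erase.2 ⟨(subset_insert _ _).trans hsub, hiT⟩, Nat.eq_sub_of_add_eq hcard⟩

lemma degree_le_sum_twinQuotient :
    degree E v ≤ ∑ T ∈ (twinQuotient E).memberSubfamily (link E v),
      ∏ i ∈ T, #(colorClass (link E) X i) := by
  have hsub : E.memberSubfamily v ⊆ ((twinQuotient E).memberSubfamily (link E v)).biUnion
      (transversals (colorClass (link E) X)) := by
    intro S hS
    obtain ⟨hSE, hvS⟩ := mem_memberSubfamily.1 hS
    have hinj := injOn_link hSE
    have : Nonempty α := ⟨v⟩
    refine mem_biUnion.2 ⟨S.image (link E), mem_memberSubfamily.2 ⟨?_, fun h ↦ ?_⟩,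
      mem_transversals_image_of_injOn (hinj.mono (mod_cast subset_insert v S)) fun w hw ↦
        mem_filter.2 ⟨(mem_powersetCard.1 (hE hSE)).1 (mem_insert_of_mem hw), rfl⟩⟩
    · rw [← image_insert]
      exact mem_image_of_mem _ hSE
    · obtain ⟨w, hw, hwv⟩ := mem_image.1 h
      exact hvS (hinj (mem_insert_of_mem hw) (mem_insert_self _ _) hwv ▸ hw)
  rw [← card_memberSubfamily_eq_degree]
  exact (card_le_card hsub).trans <| card_biUnion_le.trans <|
    sum_le_sum fun T _ ↦ card_transversals_le

/- Two edges of the quotient lift to edges `S ∪ {x}` and `S ∪ {y}`, where `x` and `y` are not twins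
and hence are covered by a common edge. -/
lemma SigmaFree.eq_of_insert_mem_twinQuotient (hfree : SigmaFree E)
    (htwin : ∀ u ∈ X, ∀ w ∈ X, codegree E u w = 0 → link E u = link E w)
    {i j : Finset (Finset α)} (hi : insert i T ∈ twinQuotient E) (hj : insert j T ∈ twinQuotient E)
    (hiT : i ∉ T) (hjT : j ∉ T) : i = j := by
  by_contra hij
  have hmem {k} (hk : insert k T ∈ twinQuotient E) {l} (hl : l ∈ insert k T) :
      l ∈ X.image (link E) :=
    (mem_powersetCard.1 (twinQuotient_subset_powersetCard hE hk)).1 hl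
  obtain ⟨v, -, -⟩ := mem_image.1 (hmem hi (mem_insert_self _ _))
  have : Nonempty α := ⟨v⟩
  let ρ := Function.invFunOn (link E) X
  have hρ {k} (hk : k ∈ X.image (link E)) : ρ k ∈ X ∧ link E (ρ k) = k :=
    Function.invFunOn_pos (mem_image.1 hk)
  have hlift {k} (hk : insert k T ∈ twinQuotient E) (hkT : k ∉ T) :
      insert (ρ k) (T.image ρ) ∈ E ∧ ρ k ∉ T.image ρ := by
    refine ⟨?_, fun h ↦ ?_⟩
    · rw [← image_insert]
      exact image_mem_of_mem_twinQuotient hk fun l hl ↦ (hρ (hmem hk hl)).2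
    · obtain ⟨l, hl, hlk⟩ := mem_image.1 h
      rw [← (hρ (hmem hk (mem_insert_self _ _))).2, ← hlk,
        (hρ (hmem hk (mem_insert_of_mem hl))).2] at hkT
      exact hkT hl
  obtain ⟨hxX, hx⟩ := hρ (hmem hi (mem_insert_self _ _))
  obtain ⟨hyX, hy⟩ := hρ (hmem hj (mem_insert_self _ _))
  have hxy : link E (ρ i) ≠ link E (ρ j) := by rwa [hx, hy]
  obtain ⟨e, he⟩ := card_ne_zero.1 (mt (htwin _ hxX _ hyX) hxy)
  obtain ⟨he, hxe, hye⟩ := mem_filter.1 he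
  exact hfree (hlift hi hiT).1 (hlift hj hjT).1 he (ne_of_apply_ne _ hxy) (hlift hi hiT).2
    (hlift hj hjT).2 hxe hye

end Twins

section Symmetrized

open Finset

lemma sum_card_colorClass_image {α ι : Type*} [DecidableEq ι] (χ : α → ι) (X : Finset α) :
    ∑ i ∈ X.image χ, #(colorClass χ X i) = #X :=
  (card_eq_sum_card_image χ X).symm

variable {α : Type*} [DecidableEq α] {E : Finset (Finset α)} {X : Finset α}

lemma isDensePartition_colorClass_of_mem_twinQuotient {J : Finset (Finset (Finset α))}
    (hJ : J ∈ twinQuotient E) (hJcard : #J = 4)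
    (hdense : (1 / 256 - 1 / 10 ^ 8) * (#X : ℝ) ^ 4 ≤ ∏ i ∈ J, (#(colorClass (link E) X i) : ℝ)) :
    ∃ P, IsDensePartition E X P := by
  let σ : Fin 4 → Finset (Finset α) := fun j ↦ (J.equivFinOfCardEq hJcard).symm j
  have hσ : Function.Injective σ := Subtype.val_injective.comp (Equiv.injective _)
  have hσJ : univ.image σ = J := by
    refine eq_of_subset_of_card_le (image_subset_iff.2 fun j _ ↦ Subtype.property _) ?_
    rw [card_image_of_injective _ hσ, hJcard, card_fin]
  have hdisj : Pairwise fun i j ↦ Disjoint ((colorClass (link E) X ∘ σ) i)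
      ((colorClass (link E) X ∘ σ) j) := fun i j hij ↦
    pairwise_disjoint_colorClass _ X (hσ.ne hij)
  refine ⟨colorClass (link E) X ∘ σ, fun j ↦ colorClass_subset _ X _, hdisj, ?_⟩
  have hsub : transversals (colorClass (link E) X ∘ σ) univ ⊆ E :=
    (transversals_comp_subset hσ).trans (hσJ ▸ transversals_subset_of_mem_twinQuotient hJ)
  rw [inter_eq_right.2 hsub, card_transversals_univ hdisj]
  rw [← hσJ, prod_image hσ.injOn] at hdense
  exact mod_cast hdense

variable (hE : E ⊆ X.powersetCard 4)
  (hdeg : ∀ u ∈ X, ∀ w ∈ X, degree E w ≤ degree E u + codegree E u w)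
  (hX : 10 ^ 11 ≤ #X) (hcard : (1 / 256 - 1 / 10 ^ 11) * (#X : ℝ) ^ 4 ≤ #E)
include hE

include hdeg hX hcard in
lemma le_degree_of_forall_degree_le {v : α} (hv : v ∈ X) :
    (1 / 64 - 1 / 10 ^ 10) * (#X : ℝ) ^ 3 ≤ degree E v := by
  have hsum : 4 * #E ≤ #X * (degree E v + #X ^ 2) := by
    rw [← sum_degree hE, ← smul_eq_mul]
    refine sum_le_card_nsmul _ _ _ fun w hw ↦ ?_
    obtain rfl | hvw := eq_or_ne v w
    · exact Nat.le_add_right _ _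
    · exact (hdeg v hv w hw).trans (Nat.add_le_add_left (codegree_le hE hvw) _)
  have hsum' : 4 * (#E : ℝ) ≤ #X * (degree E v + (#X : ℝ) ^ 2) := mod_cast hsum
  have hn : (10 : ℝ) ^ 11 ≤ #X := mod_cast hX
  set n : ℝ := (#X : ℝ)
  have hn2 : n ^ 2 * 10 ^ 11 ≤ n ^ 2 * n := by gcongr
  have : n * ((1 / 64 - 4 / 10 ^ 11) * n ^ 3) ≤ n * (degree E v + n ^ 2) := by linarith
  have := le_of_mul_le_mul_left this (by linarith)
  linarith

lemma SigmaFree.pairwise_memberSubfamily_twinQuotient (hfree : SigmaFree E)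
    (htwin : ∀ u ∈ X, ∀ w ∈ X, codegree E u w = 0 → link E u = link E w)
    (i : Finset (Finset α)) :
    ((twinQuotient E).memberSubfamily i : Set (Finset (Finset (Finset α)))).Pairwise
      fun S T ↦ #(S ∩ T) ≤ 1 := by
  intro S hS T hT hST
  by_contra! hcard
  have hsub := memberSubfamily_twinQuotient_subset hE i
  obtain ⟨-, hS3⟩ := mem_powersetCard.1 (hsub hS)
  obtain ⟨-, hT3⟩ := mem_powersetCard.1 (hsub hT)
  obtain ⟨hS, hiS⟩ := mem_memberSubfamily.1 hS
  obtain ⟨hT, hiT⟩ := mem_memberSubfamily.1 hT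
  have hlt : #(S ∩ T) < 3 := by
    by_contra! h3
    have hSi : S ∩ T = S := eq_of_subset_of_card_le inter_subset_left (by lia)
    have hTi : S ∩ T = T := eq_of_subset_of_card_le inter_subset_right (by lia)
    exact hST (hSi.symm.trans hTi)
  have hS1 : #(S \ T) = 1 := by have := card_sdiff_add_card_inter S T; lia
  have hT1 : #(T \ S) = 1 := by have := card_sdiff_add_card_inter T S; rw [inter_comm] at this; lia
  obtain ⟨j, hj⟩ := card_eq_one.1 hS1
  obtain ⟨k, hk⟩ := card_eq_one.1 hT1
  have hjm : j ∈ S \ T := hj ▸ mem_singleton_self j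
  have hkm : k ∈ T \ S := hk ▸ mem_singleton_self k
  have hSeq : insert j (insert i (S ∩ T)) = insert i S := by
    rw [insert_comm, insert_eq j, ← hj, sdiff_union_inter]
  have hTeq : insert k (insert i (S ∩ T)) = insert i T := by
    rw [insert_comm, insert_eq k, ← hk, inter_comm, sdiff_union_inter]
  obtain ⟨hjS, hjT⟩ := mem_sdiff.1 hjm
  obtain ⟨hkT, hkS⟩ := mem_sdiff.1 hkm
  have hjk := SigmaFree.eq_of_insert_mem_twinQuotient hE hfree htwin (hSeq ▸ hS) (hTeq ▸ hT)
    (by simp [hjT, ne_of_mem_of_not_mem hjS hiS]) (by simp [hkS, ne_of_mem_of_not_mem hkT hiT])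
  exact hkS (hjk ▸ hjS)

include hdeg hX hcard in
lemma SigmaFree.exists_isDensePartition_of_twins (hfree : SigmaFree E)
    (htwin : ∀ u ∈ X, ∀ w ∈ X, codegree E u w = 0 → link E u = link E w) :
    ∃ P, IsDensePartition E X P := by
  let C := colorClass (link E) X
  have hn : (0 : ℝ) < #X := mod_cast lt_of_lt_of_le (by norm_num) hX
  obtain ⟨v, hv, hmax⟩ := exists_max_image X (fun v ↦ #(C (link E v))) (card_pos.1 (by lia))
  set i₀ := link E v
  have hi₀X : i₀ ∈ X.image (link E) := mem_image_of_mem _ hv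
  have hCle (i) : (#(C i) : ℝ) ≤ #X := mod_cast card_le_card (colorClass_subset _ X i)
  have hG := memberSubfamily_twinQuotient_subset hE i₀
  have hG3 {T} (hT : T ∈ (twinQuotient E).memberSubfamily i₀) : #T = 3 :=
    (mem_powersetCard.1 (hG hT)).2
  have hweight (i) (hi : i ∈ (X.image (link E)).erase i₀) :
      #(C i) / (#X : ℝ) ≤ #(C i₀) / (#X : ℝ) := by
    obtain ⟨w, hw, rfl⟩ := mem_image.1 (mem_of_mem_erase hi)
    have := hmax w hw
    gcongr
  have hsum : ∑ i ∈ (X.image (link E)).erase i₀, #(C i) / (#X : ℝ) = 1 - #(C i₀) / (#X : ℝ) := by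
    have hsum : (∑ i ∈ X.image (link E), #(C i) : ℝ) = #X :=
      mod_cast sum_card_colorClass_image (link E) X
    rw [← sum_div, sum_erase_eq_sub hi₀X, hsum, sub_div, div_self hn.ne']
  have hL : 1 / 64 - 1 / 10 ^ 10 ≤ ∑ T ∈ (twinQuotient E).memberSubfamily i₀,
      ∏ i ∈ T, (#(C i) / (#X : ℝ)) := by
    have hcount : (degree E v : ℝ) ≤ ∑ T ∈ (twinQuotient E).memberSubfamily i₀,
        ∏ i ∈ T, (#(C i) : ℝ) := mod_cast degree_le_sum_twinQuotient hE
    rw [sum_congr rfl fun T hT ↦ by rw [prod_div_distrib, prod_const, hG3 hT], ← sum_div,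
      le_div_iff₀ (by positivity)]
    exact (le_degree_of_forall_degree_le hE hdeg hX hcard hv).trans hcount
  obtain ⟨T, hT, hprod⟩ := exists_triple_of_sum_prod_ge (fun i ↦ by positivity) (by positivity)
    ((div_le_one hn).2 (hCle i₀)) hweight hsum hG
    (hfree.pairwise_memberSubfamily_twinQuotient hE htwin i₀) hL
  obtain ⟨hT', hiT⟩ := mem_memberSubfamily.1 hT
  refine isDensePartition_colorClass_of_mem_twinQuotient hT'
    (by rw [card_insert_of_notMem hiT, hG3 hT]) ?_
  rw [prod_div_distrib, prod_const, hG3 hT, div_mul_div_comm, ← pow_succ',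
    le_div_iff₀ (by positivity)] at hprod
  rwa [prod_insert hiT]

end Symmetrized

section Stability

open Finset

variable {α : Type*} [DecidableEq α] {E : Finset (Finset α)} {X : Finset α}

lemma codegree_comm (u w : α) : codegree E u w = codegree E w u := by
  rw [codegree, filter_congr fun _ _ ↦ and_comm, codegree]

lemma link_eq_of_collisions_clone_le {u w : α} (hu : u ∈ X)
    (hclass : #(colorClass (link E) X (link E u)) ≤ #(colorClass (link E) X (link E w)))
    (hle : u ≠ w → collisions (link (clone E u w)) X ≤ collisions (link E) X) :
    link E u = link E w := by
  by_contra hlink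
  have hne : u ≠ w := ne_of_apply_ne _ hlink
  refine (hle hne).not_gt <| collisions_lt_collisions hu (fun v v' hv hv' hvv ↦ ?_) hlink
    (memberSubfamily_clone_self hne) hclass
  rw [link, link, memberSubfamily_clone_of_ne hne hv, memberSubfamily_clone_of_ne hne hv']
  exact congrArg (clone · u w) hvv

/- Maximize `#F`, and subject to that the number of pairs of twins. -/
lemma exists_symmetrized {𝓤 : Finset (Finset α)} {p : Finset (Finset α) → Prop}
    (hp : ∀ F, p F → F ⊆ 𝓤)
    (hclone : ∀ F, p F → ∀ u ∈ X, ∀ w ∈ X, u ≠ w → #F ≤ #(clone F u w) → p (clone F u w))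
    (hE : p E) :
    ∃ F, p F ∧ (∀ u ∈ X, ∀ w ∈ X, degree F w ≤ degree F u + codegree F u w) ∧
      ∀ u ∈ X, ∀ w ∈ X, codegree F u w = 0 → link F u = link F w := by
  classical
  obtain ⟨F, hF, hmax⟩ := exists_max_image {F ∈ 𝓤.powerset | p F}
    (fun F ↦ #F * (#X ^ 2 + 1) + collisions (link F) X)
    ⟨E, mem_filter.2 ⟨mem_powerset.2 (hp E hE), hE⟩⟩
  replace hF := (mem_filter.1 hF).2
  have hle {u w} (hu : u ∈ X) (hw : w ∈ X) (huw : u ≠ w) (hc : #F ≤ #(clone F u w)) :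
      #(clone F u w) * (#X ^ 2 + 1) + collisions (link (clone F u w)) X ≤
        #F * (#X ^ 2 + 1) + collisions (link F) X := by
    have hpc := hclone F hF u hu w hw huw hc
    exact hmax _ (mem_filter.2 ⟨mem_powerset.2 (hp _ hpc), hpc⟩)
  have hdeg (u) (hu : u ∈ X) (w) (hw : w ∈ X) : degree F w ≤ degree F u + codegree F u w := by
    obtain rfl | huw := eq_or_ne u w
    · exact Nat.le_add_right _ _
    have hclone_le : #(clone F u w) ≤ #F := by
      by_contra! hlt
      have := hle hu hw huw hlt.le
      have := collisions_le (link F) X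
      have : (#F + 1) * (#X ^ 2 + 1) ≤ #(clone F u w) * (#X ^ 2 + 1) := Nat.mul_le_mul_right _ hlt
      lia
    have := card_clone_add F u w
    lia
  have hcoll {u w} (hu : u ∈ X) (hw : w ∈ X) (hcod : codegree F u w = 0) (huw : u ≠ w) :
      collisions (link (clone F u w)) X ≤ collisions (link F) X := by
    have hcard : #(clone F u w) = #F := by
      have := hdeg u hu w hw
      have := codegree_comm (E := F) u w ▸ hdeg w hw u hu
      have := card_clone_add F u w
      lia
    simpa [hcard] using hle hu hw huw hcard.ge
  refine ⟨F, hF, hdeg, fun u hu w hw hcod ↦ ?_⟩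
  obtain h | h := le_total #(colorClass (link F) X (link F u)) #(colorClass (link F) X (link F w))
  · exact link_eq_of_collisions_clone_le hu h (hcoll hu hw hcod)
  · exact (link_eq_of_collisions_clone_le hw h
      (hcoll hw hu (codegree_comm (E := F) u w ▸ hcod))).symm

lemma transversals_congr_off {E F : Finset (Finset α)} {ι : Type*} {P : ι → Finset α} {J : Finset ι}
    {u : α} (hEF : ∀ e, u ∉ e → (e ∈ E ↔ e ∈ F)) (hu : ∀ i, u ∉ P i) :
    E ∩ transversals P J = F ∩ transversals P J := by
  ext e
  simp only [mem_inter, and_congr_left_iff]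
  intro he
  obtain ⟨f, hf, rfl⟩ := mem_transversals.1 he
  refine hEF _ fun hmem ↦ ?_
  obtain ⟨j, hj, rfl⟩ := mem_image.1 hmem
  exact hu j (hf j hj)

lemma NearlyFourPartite.of_clone (hE : E ⊆ X.powersetCard 4) (hfree : TriangleFree E)
    (hX : 10 ^ 11 ≤ #X) {u w : α} (hu : u ∈ X) (huw : u ≠ w)
    (hcard : (1 / 256 - 1 / 10 ^ 11) * (#X : ℝ) ^ 4 ≤ #(clone E u w))
    (h : NearlyFourPartite (clone E u w) X) : NearlyFourPartite E X := by
  obtain ⟨P, hP, huP⟩ :=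
    h.exists_isDensePartition (clone_subset_powersetCard hE huw hu) hcard hX u
  have hPE : IsDensePartition E X P := ⟨hP.subset, hP.pairwise_disjoint, by
    rw [← transversals_congr_off (fun e he ↦ mem_clone_of_notMem huw he) huP]
    exact hP.dense⟩
  exact hPE.nearlyFourPartite hE hfree (by lia)

lemma SigmaFree.nearlyFourPartite (hfree : SigmaFree E) (hE : E ⊆ X.powersetCard 4)
    (hX : 10 ^ 11 ≤ #X) (hcard : (1 / 256 - 1 / 10 ^ 11) * (#X : ℝ) ^ 4 ≤ #E) :
    NearlyFourPartite E X := by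
  by_contra hbad
  have hclone (F) (h : F ⊆ X.powersetCard 4 ∧ SigmaFree F ∧
      (1 / 256 - 1 / 10 ^ 11) * (#X : ℝ) ^ 4 ≤ #F ∧ ¬NearlyFourPartite F X) (u) (hu : u ∈ X)
      (w) (_ : w ∈ X) (huw : u ≠ w) (hle : #F ≤ #(clone F u w)) :
      clone F u w ⊆ X.powersetCard 4 ∧ SigmaFree (clone F u w) ∧
        (1 / 256 - 1 / 10 ^ 11) * (#X : ℝ) ^ 4 ≤ #(clone F u w) ∧
        ¬NearlyFourPartite (clone F u w) X := by
    obtain ⟨hF, hFfree, hFcard, hFbad⟩ := h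
    have hcard' : (1 / 256 - 1 / 10 ^ 11) * (#X : ℝ) ^ 4 ≤ #(clone F u w) :=
      hFcard.trans (mod_cast hle)
    exact ⟨clone_subset_powersetCard hF huw hu, hFfree.clone huw, hcard', fun h ↦
      hFbad (h.of_clone hF hFfree.triangleFree hX hu huw hcard')⟩
  obtain ⟨F, ⟨hF, hFfree, hFcard, hFbad⟩, hdeg, htwin⟩ :=
    exists_symmetrized (fun _ h ↦ h.1) hclone ⟨hE, hfree, hcard, hbad⟩
  obtain ⟨P, hP⟩ := hFfree.exists_isDensePartition_of_twins hF hdeg hX hFcard htwin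
  exact hFbad (hP.nearlyFourPartite hF hFfree.triangleFree (by lia))

/- If `x` and `y` have large codegree then some edge through `x` and `y` avoids any given `S`. -/
lemma TriangleFree.codegree_le_of_insert_mem {r : ℕ} (hfree : TriangleFree E)
    (hE : E ⊆ X.powersetCard (r + 1)) {S : Finset α} {x y : α} (hx : insert x S ∈ E)
    (hy : insert y S ∈ E) (hxy : x ≠ y) (hxS : x ∉ S) (hyS : y ∉ S) :
    codegree E x y ≤ r * #X ^ (r - 2) := by
  have hS : #S = r := by
    have := (mem_powersetCard.1 (hE hx)).2
    rwa [card_insert_of_notMem hxS, add_left_inj] at this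
  have hsub : {e ∈ E | x ∈ e ∧ y ∈ e} ⊆ S.biUnion fun s ↦ {e ∈ E | {x, y, s} ⊆ e} := by
    intro e he
    obtain ⟨he, hxe, hye⟩ := mem_filter.1 he
    obtain ⟨s, hs, hse⟩ := not_disjoint_iff.1 (hfree hx hy he hxy hxe hye)
    exact mem_biUnion.2 ⟨s, hs, mem_filter.2 ⟨he, by simp [insert_subset_iff, hxe, hye, hse]⟩⟩
  refine (card_le_card hsub).trans (hS ▸ card_biUnion_le_card_mul _ _ _ fun s hs ↦ ?_)
  have hcard : #{x, y, s} = 3 := card_eq_three.2 ⟨x, y, s, hxy, ne_of_mem_of_not_mem hs hxS |>.symm,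
    ne_of_mem_of_not_mem hs hyS |>.symm, rfl⟩
  simpa [hcard, hS] using card_filter_superset_le hE {x, y, s}

/- Deleting all edges through a pair of small codegree gains an uncovered pair. -/
lemma TriangleFree.exists_sigmaFree (hfree : TriangleFree E) (hE : E ⊆ X.powersetCard 4) :
    ∃ F ⊆ E, SigmaFree F ∧ #E ≤ #F + (3 * #X + 1) * #X ^ 2 := by
  let uncovered (F : Finset (Finset α)) : Finset (α × α) := {p ∈ X ×ˢ X | codegree F p.1 p.2 = 0}
  obtain ⟨F, hF, hmax⟩ := exists_max_image E.powerset
    (fun F ↦ #F + (3 * #X + 1) * #(uncovered F)) ⟨E, mem_powerset_self E⟩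
  rw [mem_powerset] at hF
  refine ⟨F, hF, fun S x y e hx hy he hxy hxS hyS hxe hye ↦ ?_, ?_⟩
  · set F' := {e ∈ F | ¬(x ∈ e ∧ y ∈ e)}
    have hF' : F' ⊆ F := filter_subset _ _
    have hsub : insert (x, y) (uncovered F) ⊆ uncovered F' := by
      have heX := (mem_powersetCard.1 (hE (hF he))).1
      refine insert_subset (mem_filter.2 ⟨mem_product.2 ⟨heX hxe, heX hye⟩, ?_⟩) fun p hp ↦ ?_
      · rw [codegree, filter_filter, filter_false_of_mem fun _ _ h ↦ h.1 h.2, card_empty]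
      · obtain ⟨hpX, hp⟩ := mem_filter.1 hp
        exact mem_filter.2 ⟨hpX, Nat.eq_zero_of_le_zero <|
          hp ▸ card_le_card (filter_subset_filter _ hF')⟩
    have hnot : (x, y) ∉ uncovered F := fun h ↦
      card_ne_zero_of_mem (mem_filter.2 ⟨he, hxe, hye⟩) (mem_filter.1 h).2
    have hgain := card_le_card hsub
    rw [card_insert_of_notMem hnot] at hgain
    have hlost : codegree F x y + #F' = #F := card_filter_add_card_filter_not _
    have hcod : codegree F x y ≤ 3 * #X := by
      simpa using (hfree.mono hF).codegree_le_of_insert_mem (hF.trans hE) hx hy hxy hxS hyS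
    have := hmax F' (mem_powerset.2 (hF'.trans hF))
    have := Nat.mul_le_mul_left (3 * #X + 1) hgain
    lia
  · have := hmax E (mem_powerset_self E)
    have hle : #(uncovered F) ≤ #X ^ 2 := (card_filter_le _ _).trans_eq (by rw [card_product, sq])
    have := Nat.mul_le_mul_left (3 * #X + 1) hle
    lia

lemma TriangleFree.exists_isDensePartition (hfree : TriangleFree E) (hE : E ⊆ X.powersetCard 4)
    (hX : 10 ^ 12 ≤ #X) (hcard : (1 / 256 - 5 / 10 ^ 12) * (#X : ℝ) ^ 4 ≤ #E) :
    ∃ P, IsDensePartition E X P := by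
  obtain ⟨F, hFE, hF, hEF⟩ := hfree.exists_sigmaFree hE
  obtain rfl | hne := X.eq_empty_or_nonempty
  · simp at hX
  have hFcard : (1 / 256 - 1 / 10 ^ 11) * (#X : ℝ) ^ 4 ≤ #F := by
    have hEF : (#E : ℝ) ≤ #F + (3 * #X + 1) * (#X : ℝ) ^ 2 := mod_cast hEF
    have hX : 10 ^ 12 ≤ (#X : ℝ) := mod_cast hX
    set n : ℝ := (#X : ℝ)
    have hquad : (3 * n + 1) * n ^ 2 ≤ 4 * n ^ 3 := by nlinarith [sq_nonneg n]
    have hcub : n ^ 3 * 10 ^ 12 ≤ n ^ 3 * n := by gcongr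
    have : n ^ 3 * n = n ^ 4 := by ring
    have : 0 ≤ n ^ 4 := by positivity
    linarith
  have hFX := hFE.trans hE
  obtain ⟨P, hP, -⟩ := (hF.nearlyFourPartite hFX (by lia) hFcard).exists_isDensePartition hFX hFcard
    (by lia) hne.choose
  exact ⟨P, hP.mono hFE⟩

end Stability

section BalancedProduct

open Finset

/-- The number of edges of the Turán `k`-graph `T_k(m, k)`: the product of `k` numbers with sum `m`
which differ by at most one. -/
def balancedProd (k m : ℕ) : ℕ := (m / k) ^ (k - m % k) * (m / k + 1) ^ (m % k)

variable {ι : Type*} [Fintype ι] {f : ι → ℕ} {k : ℕ}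

lemma prod_eq_balancedProd (hf : ((univ : Finset ι) : Set ι).EquitableOn f) :
    ∏ i, f i = balancedProd (Fintype.card ι) (∑ i, f i) := by
  obtain h0 | hι := (Fintype.card ι).eq_zero_or_pos
  · have := Fintype.card_eq_zero_iff.1 h0
    simp [balancedProd]
  set q := (∑ i, f i) / Fintype.card ι with hq
  set s := #{i | f i = q + 1}
  have hf' (i : ι) : f i = if f i = q + 1 then q + 1 else q := by
    have := (Finset.equitableOn_iff.1 hf) i (mem_univ i)
    rw [card_univ, ← hq] at this
    grind
  have hcompl : s + #{i | f i ≠ q + 1} = Fintype.card ι := card_filter_add_card_filter_not _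
  have hsum : ∑ i, f i = s + Fintype.card ι * q := by
    rw [sum_congr rfl fun i _ ↦ hf' i, sum_ite, sum_const, sum_const, ← hcompl]
    simp only [smul_eq_mul]
    ring
  have hlt : s < Fintype.card ι := by
    refine lt_of_le_of_ne (hcompl ▸ Nat.le_add_right _ _) fun h ↦ ?_
    have : (∑ i, f i) / Fintype.card ι = q + 1 := by
      rw [hsum, h, Nat.add_mul_div_left _ _ hι, Nat.div_self hι, add_comm]
    lia
  have hmod : (∑ i, f i) % Fintype.card ι = s := by
    rw [hsum, Nat.add_mul_mod_self_left, Nat.mod_eq_of_lt hlt]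
  rw [balancedProd, hmod, ← hq, prod_congr rfl fun i _ ↦ hf' i, prod_ite, prod_const, prod_const,
    mul_comm, ← hcompl, Nat.add_sub_cancel_left]

lemma equitableOn_of_forall_prod_le (hf : 0 < ∏ i, f i)
    (hmax : ∀ g : ι → ℕ, ∑ i, g i = ∑ i, f i → ∏ i, g i ≤ ∏ i, f i) :
    ((univ : Finset ι) : Set ι).EquitableOn f := by
  classical
  intro j i _ _
  by_contra! hlt
  have hij : i ≠ j := by rintro rfl; lia
  let g := Function.update (Function.update f i (f i + 1)) j (f j - 1)
  have hgi : g i = f i + 1 := by simp [g, hij]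
  have hgj : g j = f j - 1 := by simp [g]
  have hg : ∀ l ∈ (univ.erase i).erase j, g l = f l := by
    intro l hl
    simp only [mem_erase] at hl
    simp [g, hl.1, hl.2.1]
  have hj : j ∈ univ.erase i := mem_erase.2 ⟨hij.symm, mem_univ j⟩
  have hprod (h : ι → ℕ) : ∏ l, h l = h i * (h j * ∏ l ∈ (univ.erase i).erase j, h l) := by
    rw [mul_prod_erase _ h hj, mul_prod_erase _ h (mem_univ i)]
  have hsum (h : ι → ℕ) : ∑ l, h l = h i + (h j + ∑ l ∈ (univ.erase i).erase j, h l) := by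
    rw [add_sum_erase _ h hj, add_sum_erase _ h (mem_univ i)]
  have hle := hmax g (by rw [hsum, hsum f, sum_congr rfl hg]; lia)
  rw [hprod, hprod f, prod_congr rfl hg, hgi, hgj, ← mul_assoc, ← mul_assoc] at hle
  rw [hprod, ← mul_assoc] at hf
  have := Nat.le_of_mul_le_mul_right hle (Nat.pos_of_mul_pos_left hf)
  obtain ⟨d, hd⟩ := Nat.exists_eq_add_of_lt hlt
  simp only [hd, Nat.add_sub_cancel] at this
  nlinarith

lemma balancedProd_pos {m : ℕ} (hk : 0 < k) (hkm : k ≤ m) : 0 < balancedProd k m :=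
  Nat.mul_pos (Nat.pow_pos (Nat.div_pos hkm hk)) (Nat.pow_pos (Nat.succ_pos _))

lemma exists_prod_max (f : ι → ℕ) : ∃ g : ι → ℕ, ∑ i, g i = ∑ i, f i ∧
    ∀ h : ι → ℕ, ∑ i, h i = ∑ i, f i → ∏ i, h i ≤ ∏ i, g i := by
  classical
  obtain ⟨g, hg, hmax⟩ := exists_max_image (piAntidiag univ (∑ i, f i)) (fun g ↦ ∏ i, g i)
    ⟨f, by simp⟩
  exact ⟨g, by simpa using hg, fun h hh ↦ hmax h (by simpa using hh)⟩

lemma prod_le_balancedProd (f : ι → ℕ) :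
    ∏ i, f i ≤ balancedProd (Fintype.card ι) (∑ i, f i) := by
  obtain ⟨g, hg, hmax⟩ := exists_prod_max f
  obtain h0 | hpos := (∏ i, g i).eq_zero_or_pos
  · exact (hmax f rfl).trans (h0 ▸ Nat.zero_le _)
  · rw [← hg, ← prod_eq_balancedProd (equitableOn_of_forall_prod_le hpos (hg ▸ hmax))]
    exact hmax f rfl

lemma equitableOn_of_prod_eq (hι : 0 < Fintype.card ι) (hcard : Fintype.card ι ≤ ∑ i, f i)
    (hf : ∏ i, f i = balancedProd (Fintype.card ι) (∑ i, f i)) :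
    ((univ : Finset ι) : Set ι).EquitableOn f :=
  equitableOn_of_forall_prod_le (hf ▸ balancedProd_pos hι hcard) fun g hg ↦ by
    rw [hf, ← hg]
    exact prod_le_balancedProd g

lemma balancedProd_succ (k m : ℕ) : balancedProd (k + 1) (m + 1) = balancedProd (k + 1) m +
    (m / (k + 1)) ^ (k - m % (k + 1)) * (m / (k + 1) + 1) ^ (m % (k + 1)) := by
  have hlt := Nat.mod_lt m k.succ_pos
  have hm := Nat.div_add_mod m (k + 1)
  set q := m / (k + 1)
  set r := m % (k + 1)
  obtain hr | hr := (Nat.le_of_lt_succ hlt).lt_or_eq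
  · have hdiv : (m + 1) / (k + 1) = q := Nat.div_eq_of_lt_le (by lia) (by lia)
    have hmod : (m + 1) % (k + 1) = r + 1 := by
      have := Nat.div_add_mod (m + 1) (k + 1)
      rw [hdiv] at this
      lia
    have hbal : balancedProd (k + 1) m = q ^ (k + 1 - r) * (q + 1) ^ r := rfl
    rw [hbal, balancedProd, hdiv, hmod]
    have : k + 1 - r = k - r + 1 := by lia
    rw [Nat.add_sub_add_right, this]
    ring
  · have hdiv : (m + 1) / (k + 1) = q + 1 := Nat.div_eq_of_lt_le (by lia) (by lia)
    have hmod : (m + 1) % (k + 1) = 0 := by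
      have := Nat.div_add_mod (m + 1) (k + 1)
      rw [hdiv] at this
      lia
    have hbal : balancedProd (k + 1) m = q ^ (k + 1 - r) * (q + 1) ^ r := rfl
    rw [hbal, balancedProd, hdiv, hmod, hr, Nat.sub_self, Nat.sub_zero, Nat.add_sub_cancel_left]
    ring

lemma balancedProd_mono (k : ℕ) : Monotone (balancedProd (k + 1)) :=
  monotone_nat_of_le_succ fun m ↦ balancedProd_succ k m ▸ Nat.le_add_right _ _

lemma balancedProd_add_pow_le_succ (k m : ℕ) :
    balancedProd (k + 1) m + (m / (k + 1)) ^ k ≤ balancedProd (k + 1) (m + 1) := by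
  have hr : m % (k + 1) ≤ k := Nat.le_of_lt_succ (Nat.mod_lt m k.succ_pos)
  rw [balancedProd_succ]
  gcongr
  calc (m / (k + 1)) ^ k
      = (m / (k + 1)) ^ (k - m % (k + 1)) * (m / (k + 1)) ^ (m % (k + 1)) := by
        rw [← pow_add, Nat.sub_add_cancel hr]
    _ ≤ _ := by gcongr; exact Nat.le_succ _

lemma sub_three_div_four_le (m : ℕ) : ((m : ℝ) - 3) / 4 ≤ ((m / 4 : ℕ) : ℝ) := by
  have : (m : ℝ) ≤ 4 * ((m / 4 : ℕ) : ℝ) + 3 := mod_cast (by lia : m ≤ 4 * (m / 4) + 3)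
  linarith

lemma le_balancedProd_four {m : ℕ} (hm : 10 ^ 12 ≤ m) :
    (1 / 256 - 1 / 10 ^ 12) * (m : ℝ) ^ 4 ≤ balancedProd 4 m := by
  have hpow : (m / 4) ^ 4 ≤ balancedProd 4 m := by
    have hr : m % 4 ≤ 4 := (Nat.mod_lt m four_pos).le
    calc (m / 4) ^ 4 = (m / 4) ^ (4 - m % 4) * (m / 4) ^ (m % 4) := by
          rw [← pow_add, Nat.sub_add_cancel hr]
      _ ≤ _ := by rw [balancedProd]; gcongr; exact Nat.le_succ _
  have hm : 10 ^ 12 ≤ (m : ℝ) := mod_cast hm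
  have hbernoulli : (1 - 4 * (3 / m : ℝ)) ≤ (1 - 3 / m) ^ 4 := by
    have := one_add_mul_le_pow (a := -(3 / m : ℝ)) ?_ 4
    · push_cast at this
      linarith
    · have : 3 / (m : ℝ) ≤ 1 := (div_le_one (by positivity)).2 (by linarith)
      linarith
  have hsmall : 3 / (m : ℝ) ≤ 3 / 10 ^ 12 := by gcongr
  calc (1 / 256 - 1 / 10 ^ 12) * (m : ℝ) ^ 4 ≤ (1 - 3 / m) ^ 4 / 256 * (m : ℝ) ^ 4 := by
        gcongr
        linarith
    _ = (((m : ℝ) - 3) / 4) ^ 4 := by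
        field_simp
        ring
    _ ≤ ((m / 4 : ℕ) : ℝ) ^ 4 := by
        gcongr
        · linarith
        · exact sub_three_div_four_le m
    _ ≤ balancedProd 4 m := mod_cast hpow

lemma lt_div_four_pow_three {m d : ℕ} (hm : 10 ^ 12 ≤ m)
    (hd : (d : ℝ) < ((m + 1 : ℕ) : ℝ) ^ 3 / 100) : d < (m / 4) ^ 3 := by
  have hm : 10 ^ 12 ≤ (m : ℝ) := mod_cast hm
  suffices (d : ℝ) < ((m / 4 : ℕ) : ℝ) ^ 3 from mod_cast this
  have hcube : (0.24 * ((m : ℝ) + 1)) ^ 3 ≤ ((m / 4 : ℕ) : ℝ) ^ 3 := by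
    gcongr
    linarith [sub_three_div_four_le m]
  have : 0 < ((m : ℝ) + 1) ^ 3 := by positivity
  rw [mul_pow] at hcube
  push_cast at hd
  norm_num at hcube
  linarith

end BalancedProduct

section ExactTuran

open Finset

variable {α : Type*} [DecidableEq α] {E : Finset (Finset α)} {X : Finset α}

/-- `E` is (the edge set of) a balanced complete four-partite 4-graph on `X`, i.e. a copy of
`T_4(#X, 4)`; the parts are the colour classes of `χ`. -/
def IsTuran (E : Finset (Finset α)) (X : Finset α) : Prop :=
  ∃ χ : α → Fin 4, ((univ : Finset (Fin 4)) : Set (Fin 4)).EquitableOn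
    (fun i ↦ #(colorClass χ X i)) ∧ E = transversals (colorClass χ X) univ

lemma card_transversals_colorClass_le (χ : α → Fin 4) (X : Finset α) :
    #(transversals (colorClass χ X) univ) ≤ balancedProd 4 #X := by
  rw [card_transversals_univ (pairwise_disjoint_colorClass χ X), ← sum_card_colorClass χ X]
  exact prod_le_balancedProd _

lemma IsTuran.card_eq (h : IsTuran E X) : #E = balancedProd 4 #X := by
  obtain ⟨χ, hχ, rfl⟩ := h
  rw [card_transversals_univ (pairwise_disjoint_colorClass χ X), ← sum_card_colorClass χ X]
  exact prod_eq_balancedProd hχ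

lemma isTuran_of_balancedProd_le_card {χ : α → Fin 4} (hχ : ∀ e ∈ E, Set.InjOn χ e)
    (hE : E ⊆ X.powersetCard 4) (hX : 4 ≤ #X) (hcard : balancedProd 4 #X ≤ #E) : IsTuran E X := by
  have hsub : E ⊆ transversals (colorClass χ X) univ := fun e he ↦
    mem_transversals_colorClass.2 ⟨hE he, hχ e he⟩
  have hle := card_transversals_colorClass_le χ X
  refine ⟨χ, ?_, eq_of_subset_of_card_le hsub (hle.trans hcard)⟩
  refine equitableOn_of_prod_eq (by simp) (by simpa [sum_card_colorClass] using hX) ?_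
  rw [← card_transversals_univ (pairwise_disjoint_colorClass χ X), sum_card_colorClass]
  exact le_antisymm hle (hcard.trans (card_le_card hsub))

lemma card_filter_notMem_add_degree (E : Finset (Finset α)) (v : α) :
    #{e ∈ E | v ∉ e} + degree E v = #E := by
  rw [add_comm]
  exact card_filter_add_card_filter_not _

lemma filter_notMem_subset_powersetCard {r : ℕ} (hE : E ⊆ X.powersetCard r) (v : α) :
    {e ∈ E | v ∉ e} ⊆ (X.erase v).powersetCard r := by
  intro e he
  obtain ⟨he, hve⟩ := mem_filter.1 he
  obtain ⟨heX, hcard⟩ := mem_powersetCard.1 (hE he)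
  exact mem_powersetCard.2 ⟨subset_erase.2 ⟨heX, hve⟩, hcard⟩

lemma TriangleFree.isTuran_or_exists_degree_lt (hfree : TriangleFree E)
    (hE : E ⊆ X.powersetCard 4) {m : ℕ} (hX : #X = m + 1) (hm : 10 ^ 12 ≤ m)
    (hcard : balancedProd 4 (m + 1) ≤ #E) :
    IsTuran E X ∨ ∃ v ∈ X, degree E v < (m / 4) ^ 3 := by
  have hdense : (1 / 256 - 5 / 10 ^ 12) * (#X : ℝ) ^ 4 ≤ #E := by
    have := le_balancedProd_four (m := m + 1) (by lia)
    rw [hX]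
    calc ((1 / 256 - 5 / 10 ^ 12) * ((m + 1 : ℕ) : ℝ) ^ 4 : ℝ)
        ≤ (1 / 256 - 1 / 10 ^ 12) * ((m + 1 : ℕ) : ℝ) ^ 4 := by gcongr; norm_num
      _ ≤ balancedProd 4 (m + 1) := this
      _ ≤ #E := mod_cast hcard
  obtain ⟨P, hP⟩ := hfree.exists_isDensePartition hE (by lia) hdense
  obtain ⟨χ, hχ⟩ := hP.exists_coloring hE hfree (by lia)
  by_cases hall : ∀ v ∈ X, (#X : ℝ) ^ 3 / 100 ≤ degree E v
  · refine .inl <| isTuran_of_balancedProd_le_card (fun e he ↦ hχ e he fun v hv ↦ hall v ?_) hE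
      (by lia) (hX ▸ hcard)
    exact (mem_powersetCard.1 (hE he)).1 hv
  · push Not at hall
    obtain ⟨v, hv, hdeg⟩ := hall
    exact .inr ⟨v, hv, lt_div_four_pow_three hm (hX ▸ hdeg)⟩

/- Deleting a vertex of small degree raises the excess of `#E` over `balancedProd 4 #X`, and this
can happen at most `N.choose 4` times. -/
lemma TriangleFree.card_le_balancedProd_add {N : ℕ} (hN : 10 ^ 12 ≤ N) {j : ℕ}
    (hfree : TriangleFree E) (hE : E ⊆ X.powersetCard 4) (hX : #X = N + j) :
    #E ≤ balancedProd 4 (N + j) + (N.choose 4 - j) := by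
  induction j generalizing E X with
  | zero =>
    have := card_le_card hE
    rw [card_powersetCard, hX] at this
    exact this.trans (Nat.le_add_left _ _)
  | succ j ih =>
    rw [← add_assoc] at hX ⊢
    obtain hlt | hcard := lt_or_ge #E (balancedProd 4 (N + j + 1))
    · lia
    obtain h | ⟨v, hv, hdeg⟩ := hfree.isTuran_or_exists_degree_lt hE hX (by lia) hcard
    · rw [h.card_eq, hX]
      exact Nat.le_add_right _ _
    · have := ih (hfree.mono (filter_subset _ _)) (filter_notMem_subset_powersetCard hE v)
        (by rw [card_erase_of_mem hv, hX, Nat.add_sub_cancel])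
      have := card_filter_notMem_add_degree E v
      have := balancedProd_add_pow_le_succ 3 (N + j)
      lia

lemma TriangleFree.card_le_balancedProd {N : ℕ} (hN : 10 ^ 12 ≤ N) (hfree : TriangleFree E)
    (hE : E ⊆ X.powersetCard 4) (hX : N + N.choose 4 ≤ #X) : #E ≤ balancedProd 4 #X := by
  obtain ⟨j, hj⟩ := Nat.exists_eq_add_of_le (by lia : N ≤ #X)
  have := hfree.card_le_balancedProd_add hN hE hj
  lia

lemma TriangleFree.isTuran {N : ℕ} (hN : 10 ^ 12 ≤ N) (hfree : TriangleFree E)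
    (hE : E ⊆ X.powersetCard 4) (hX : N + N.choose 4 < #X) (hcard : balancedProd 4 #X ≤ #E) :
    IsTuran E X := by
  obtain ⟨m, hm⟩ := Nat.exists_eq_add_of_lt (Nat.zero_lt_of_lt hX)
  rw [zero_add] at hm
  obtain h | ⟨v, hv, hdeg⟩ := hfree.isTuran_or_exists_degree_lt hE hm (by lia) (hm ▸ hcard)
  · exact h
  · have hv' : #(X.erase v) = m := by rw [card_erase_of_mem hv, hm, Nat.add_sub_cancel]
    have := (hfree.mono (filter_subset _ _)).card_le_balancedProd hN
      (filter_notMem_subset_powersetCard hE v) (by lia)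
    have := card_filter_notMem_add_degree E v
    have := balancedProd_add_pow_le_succ 3 m
    rw [hm] at hcard
    rw [hv'] at *
    lia

end ExactTuran

section Matching

open Finset

variable {α : Type*} [DecidableEq α] {E F : Finset (Finset α)} {X Y : Finset α} {m t : ℕ}

/-- `E` contains `k` generalized triangles whose vertex sets are pairwise disjoint subsets of `X`;
each is located inside a set of seven vertices, the size of a generalized triangle. -/
def HasTriangleMatching (E : Finset (Finset α)) (X : Finset α) (k : ℕ) : Prop :=
  ∃ S : Fin k → Finset α, (∀ i, S i ⊆ X ∧ #(S i) = 7) ∧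
    Pairwise (fun i j ↦ Disjoint (S i) (S j)) ∧ ∀ i, ¬TriangleFree {e ∈ E | e ⊆ S i}

/-- `E` is the join of the complete 4-graph on `t` vertices and a balanced complete 4-partite
4-graph on the other vertices of `X`. -/
def IsJoinTuran (E : Finset (Finset α)) (X : Finset α) (t : ℕ) : Prop :=
  ∃ K ⊆ X, #K = t ∧ IsTuran {e ∈ E | Disjoint e K} (X \ K) ∧
    {e ∈ E | ¬Disjoint e K} = {e ∈ X.powersetCard 4 | ¬Disjoint e K}

lemma exists_card_eq_seven_of_not_triangleFree (hE : E ⊆ X.powersetCard 4)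
    (h : ¬TriangleFree E) : ∃ S ⊆ X, #S = 7 ∧ ¬TriangleFree {e ∈ E | e ⊆ S} := by
  unfold TriangleFree at h
  push Not at h
  obtain ⟨S, x, y, e, hxS, hyS, he, hxy, hxe, hye, hdisj⟩ := h
  obtain ⟨hxSX, hxS4⟩ := mem_powersetCard.1 (hE hxS)
  obtain ⟨heX, he4⟩ := mem_powersetCard.1 (hE he)
  refine ⟨S ∪ e, union_subset ((subset_insert x S).trans hxSX) heX, ?_, fun hfree ↦ ?_⟩
  · rw [card_insert_of_notMem fun hx ↦ disjoint_left.1 hdisj hx hxe] at hxS4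
    rw [card_union_of_disjoint hdisj]
    lia
  · have mem {f : Finset α} (hf : f ∈ E) (hfS : f ⊆ S ∪ e) : f ∈ {f ∈ E | f ⊆ S ∪ e} :=
      mem_filter.2 ⟨hf, hfS⟩
    exact hfree (mem hxS <| insert_subset (mem_union_right _ hxe) subset_union_left)
      (mem hyS <| insert_subset (mem_union_right _ hye) subset_union_left)
      (mem he subset_union_right) hxy hxe hye hdisj

lemma filter_subset_powersetCard {r : ℕ} (hE : E ⊆ X.powersetCard r) (Y : Finset α) :
    {e ∈ E | e ⊆ Y} ⊆ Y.powersetCard r := fun _ he ↦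
  mem_powersetCard.2 ⟨(mem_filter.1 he).2, (mem_powersetCard.1 (hE (mem_filter.1 he).1)).2⟩

lemma exists_triangleFree_sdiff (hE : E ⊆ X.powersetCard 4) (hFE : F ⊆ E) (hYX : Y ⊆ X)
    (hF : HasTriangleMatching F Y t) (hno : ¬HasTriangleMatching E X (t + 1)) :
    ∃ B ⊆ Y, #B = 7 * t ∧ TriangleFree {e ∈ E | e ⊆ X \ B} := by
  obtain ⟨S, hS, hdisj, htri⟩ := hF
  refine ⟨univ.biUnion S, biUnion_subset.2 fun i _ ↦ (hS i).1, ?_, ?_⟩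
  · rw [card_biUnion fun i _ j _ hij ↦ hdisj hij, sum_congr rfl fun i _ ↦ (hS i).2]
    simp [mul_comm]
  by_contra hnot
  obtain ⟨A, hA, hA7, hAtri⟩ :=
    exists_card_eq_seven_of_not_triangleFree (filter_subset_powersetCard hE _) hnot
  have hAS (i : Fin t) : Disjoint A (S i) :=
    disjoint_of_subset_right (subset_biUnion_of_mem S (mem_univ i)) (subset_sdiff.1 hA).2
  refine hno ⟨Fin.cons A S, Fin.cases ⟨hA.trans sdiff_subset, hA7⟩
    fun i ↦ ⟨(hS i).1.trans hYX, (hS i).2⟩, fun i j ↦ ?_, Fin.cases ?_ fun i h ↦ ?_⟩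
  · cases i using Fin.cases <;> cases j using Fin.cases <;> intro hij
    · exact absurd rfl hij
    · exact hAS _
    · exact (hAS _).symm
    · exact hdisj fun h ↦ hij (congrArg Fin.succ h)
  · exact fun h ↦ hAtri (h.mono (filter_subset_filter _ (filter_subset _ _)))
  · exact htri i (h.mono (filter_subset_filter _ hFE))

lemma degree_le_degree_filter_sdiff_add {r : ℕ} (hE : E ⊆ X.powersetCard r) {B : Finset α} {v : α}
    (hv : v ∉ B) : degree E v ≤ degree {e ∈ E | e ⊆ X \ B} v + #B * #X ^ (r - 2) := by
  have hsub : {e ∈ E | v ∈ e} ⊆ {e ∈ {e ∈ E | e ⊆ X \ B} | v ∈ e} ∪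
      {e ∈ E | v ∈ e ∧ ∃ w ∈ B, w ≠ v ∧ w ∈ e} := by
    intro e he
    obtain ⟨heE, hve⟩ := mem_filter.1 he
    by_cases hB : Disjoint e B
    · have heX := (mem_powersetCard.1 (hE heE)).1
      exact mem_union_left _ (mem_filter.2 ⟨mem_filter.2 ⟨heE, subset_sdiff.2 ⟨heX, hB⟩⟩, hve⟩)
    · obtain ⟨w, hwe, hwB⟩ := not_disjoint_iff.1 hB
      exact mem_union_right _
        (mem_filter.2 ⟨heE, hve, w, hwB, ne_of_mem_of_not_mem hwB hv, hwe⟩)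
  exact (card_le_card hsub).trans <| (card_union_le _ _).trans <|
    Nat.add_le_add_left (card_filter_meets_le hE B v) _

lemma seven_mul_mul_pow_le {m t : ℝ} (ht : 0 ≤ t) (htm : 10 ^ 13 * t ≤ m) {k : ℕ} (hk : k ≤ 3) :
    7 * t * (m + t) ^ k ≤ m ^ (k + 1) / 10 ^ 12 := by
  have hm : 0 ≤ m := le_trans (by positivity) htm
  calc 7 * t * (m + t) ^ k ≤ 7 * (m / 10 ^ 13) * (1.1 * m) ^ k := by
        gcongr <;> linarith
    _ = 7 / 10 ^ 13 * 1.1 ^ k * m ^ (k + 1) := by rw [mul_pow]; ring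
    _ ≤ 7 / 10 ^ 13 * 1.1 ^ 3 * m ^ (k + 1) := by
        gcongr
        norm_num
    _ ≤ m ^ (k + 1) / 10 ^ 12 := by
        have : 0 ≤ m ^ (k + 1) := by positivity
        linarith

lemma TriangleFree.degree_le_of_sdiff (hE : E ⊆ X.powersetCard 4) (hX : #X = m + t)
    (hm : 10 ^ 13 ≤ m) (htm : 10 ^ 13 * t ≤ m) (hcard : balancedProd 4 m ≤ #E) {B : Finset α}
    (hBX : B ⊆ X) (hB : #B = 7 * t) (hfree : TriangleFree {e ∈ E | e ⊆ X \ B}) {v : α}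
    (hv : v ∉ B) : (degree E v : ℝ) ≤ 0.021 * (m : ℝ) ^ 3 := by
  set E' := {e ∈ E | e ⊆ X \ B}
  have hEX (e) (he : e ∈ E) : e ⊆ X := (mem_powersetCard.1 (hE he)).1
  have hE'X : E' ⊆ (X \ B).powersetCard 4 := filter_subset_powersetCard hE _
  have hq : #(X \ B) = m - 6 * t := by rw [card_sdiff_of_subset hBX]; lia
  have hqm : (#(X \ B) : ℝ) ≤ m := mod_cast (by lia : #(X \ B) ≤ m)
  have htm' : (10 : ℝ) ^ 13 * t ≤ m := mod_cast htm
  have hloss {k : ℕ} (hk : k ≤ 3) : (#B * #X ^ k : ℝ) ≤ (m : ℝ) ^ (k + 1) / 10 ^ 12 := by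
    have := seven_mul_mul_pow_le t.cast_nonneg htm' hk
    rwa [hB, hX, Nat.cast_mul, Nat.cast_add, Nat.cast_ofNat]
  have hEE' : (#E : ℝ) ≤ #E' + #B * #X ^ 3 := by
    have hsum : ∑ w ∈ B, degree E w ≤ #B * #X ^ 3 :=
      sum_le_card_nsmul _ _ _ fun w _ ↦ degree_le hE w
    exact_mod_cast (card_le_card_filter_sdiff_add hEX B).trans (Nat.add_le_add_left hsum _)
  have hdense : (1 / 256 - 5 / 10 ^ 12) * (#(X \ B) : ℝ) ^ 4 ≤ #E' := by
    have hE4 : (1 / 256 - 1 / 10 ^ 12) * (m : ℝ) ^ 4 ≤ #E :=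
      (le_balancedProd_four (by lia)).trans (mod_cast hcard)
    have hq4 : (#(X \ B) : ℝ) ^ 4 ≤ (m : ℝ) ^ 4 := by gcongr
    have := hloss le_rfl
    have : 0 ≤ (m : ℝ) ^ 4 := by positivity
    linarith
  obtain ⟨P, hP⟩ := hfree.exists_isDensePartition hE'X (by lia) hdense
  calc (degree E v : ℝ) ≤ degree E' v + #B * #X ^ 2 :=
        mod_cast degree_le_degree_filter_sdiff_add hE hv
    _ ≤ 0.02 * (#(X \ B) : ℝ) ^ 3 + (m : ℝ) ^ 3 / 10 ^ 12 :=
        add_le_add (hP.degree_le hE'X hfree (by lia) v) (hloss (by norm_num))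
    _ ≤ 0.02 * (m : ℝ) ^ 3 + (m : ℝ) ^ 3 / 10 ^ 12 := by gcongr
    _ ≤ 0.021 * (m : ℝ) ^ 3 := by
        have : 0 ≤ (m : ℝ) ^ 3 := by positivity
        linarith

lemma choose_succ_add_mul_choose_le (m t r : ℕ) :
    m.choose (r + 1) + t * m.choose r ≤ (m + t).choose (r + 1) := by
  induction t with
  | zero => simp
  | succ t ih =>
    have : m.choose r ≤ (m + t).choose r := Nat.choose_le_choose r (Nat.le_add_right m t)
    rw [← add_assoc, Nat.choose_succ_succ, Nat.succ_mul]
    lia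

lemma le_choose_three (hm : 10 ^ 12 ≤ m) : 0.16 * (m : ℝ) ^ 3 ≤ m.choose 3 := by
  have hm' : (10 : ℝ) ^ 12 ≤ m := mod_cast hm
  have hcast : ((m + 1 - 3 : ℕ) : ℝ) = m - 2 := by
    rw [Nat.cast_sub (by lia)]
    push_cast
    ring
  calc 0.16 * (m : ℝ) ^ 3 = (0.96 : ℝ) * m ^ 3 / 6 := by ring
    _ ≤ ((0.99 : ℝ) * m) ^ 3 / 6 := by rw [mul_pow]; gcongr; norm_num
    _ ≤ (m - 2 : ℝ) ^ 3 / 6 := by gcongr; linarith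
    _ ≤ m.choose 3 := by
        have := Nat.pow_le_choose (α := ℝ) 3 m
        rw [hcast] at this
        simpa [Nat.factorial] using this

lemma card_add_choose_lt_of_degree_le {N : ℕ} (hN : 10 ^ 12 ≤ N) (hE : E ⊆ X.powersetCard 4)
    (ht : 0 < t) (hX : #X = m + t) (hm : 10 ^ 13 ≤ m) (hmN : 2 * (N + N.choose 4) ≤ m)
    (htm : 10 ^ 13 * t ≤ m) {B : Finset α} (hBX : B ⊆ X) (hB : #B = 7 * t)
    (hfree : TriangleFree {e ∈ E | e ⊆ X \ B})
    (hdeg : ∀ v ∈ X, (degree E v : ℝ) ≤ 0.021 * (m : ℝ) ^ 3) :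
    #E + m.choose 4 < (m + t).choose 4 + balancedProd 4 m := by
  have hq : #(X \ B) = m - 6 * t := by rw [card_sdiff_of_subset hBX]; lia
  have hE' : #{e ∈ E | e ⊆ X \ B} ≤ balancedProd 4 m :=
    calc #{e ∈ E | e ⊆ X \ B} ≤ balancedProd 4 #(X \ B) :=
          hfree.card_le_balancedProd hN (filter_subset_powersetCard hE _) (by lia)
      _ ≤ balancedProd 4 m := balancedProd_mono 3 (by lia)
  have hEcard : (#E : ℝ) ≤ balancedProd 4 m + 7 * t * (0.021 * (m : ℝ) ^ 3) := by
    calc (#E : ℝ) ≤ #{e ∈ E | e ⊆ X \ B} + ∑ v ∈ B, (degree E v : ℝ) :=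
          mod_cast card_le_card_filter_sdiff_add (fun e he ↦ (mem_powersetCard.1 (hE he)).1) B
      _ ≤ balancedProd 4 m + #B • (0.021 * (m : ℝ) ^ 3) := by
          gcongr
          exact sum_le_card_nsmul _ _ _ fun v hv ↦ hdeg v (hBX hv)
      _ = balancedProd 4 m + 7 * t * (0.021 * (m : ℝ) ^ 3) := by
          rw [hB, nsmul_eq_mul, Nat.cast_mul, Nat.cast_ofNat]
  have hchoose : (m.choose 4 : ℝ) + t * (0.16 * (m : ℝ) ^ 3) ≤ (m + t).choose 4 := by
    calc (m.choose 4 : ℝ) + t * (0.16 * (m : ℝ) ^ 3) ≤ m.choose 4 + t * m.choose 3 := by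
          gcongr
          exact le_choose_three (by lia)
      _ ≤ (m + t).choose 4 := mod_cast choose_succ_add_mul_choose_le m t 3
  have hpos : 0 < (t : ℝ) * (m : ℝ) ^ 3 := by
    have : 0 < m := by lia
    positivity
  suffices (#E + m.choose 4 : ℝ) < (m + t).choose 4 + balancedProd 4 m from mod_cast this
  linarith

end Matching

section JoinTuran

open Finset

variable {α : Type*} [DecidableEq α] {E : Finset (Finset α)} {X : Finset α} {m t : ℕ}

lemma degree_powersetCard {v : α} (hv : v ∈ X) (r : ℕ) :
    degree (X.powersetCard (r + 1)) v = (#X - 1).choose r := by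
  have hdel : {e ∈ X.powersetCard (r + 1) | v ∉ e} = (X.erase v).powersetCard (r + 1) := by
    ext e
    simp only [mem_filter, mem_powersetCard, subset_erase]
    tauto
  have hsum := card_filter_notMem_add_degree (X.powersetCard (r + 1)) v
  have hpos := card_pos.2 ⟨v, hv⟩
  rw [hdel, card_powersetCard, card_powersetCard, card_erase_of_mem hv,
    ← Nat.sub_add_cancel hpos, Nat.choose_succ_succ, Nat.add_sub_cancel] at hsum
  lia

lemma IsJoinTuran.card_add_choose (h : IsJoinTuran E X t) (hX : #X = m + t) :
    #E + m.choose 4 = (m + t).choose 4 + balancedProd 4 m := by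
  obtain ⟨K, hKX, hK, hturan, hmeet⟩ := h
  have hm : #(X \ K) = m := by rw [card_sdiff_of_subset hKX, hX, hK, Nat.add_sub_cancel]
  have havoid : {e ∈ X.powersetCard 4 | Disjoint e K} = (X \ K).powersetCard 4 := by
    ext e
    simp only [mem_filter, mem_powersetCard, subset_sdiff]
    tauto
  have hE := card_filter_add_card_filter_not (s := E) fun e ↦ Disjoint e K
  have hX4 := card_filter_add_card_filter_not (s := X.powersetCard 4) fun e ↦ Disjoint e K
  rw [hturan.card_eq, hmeet, hm] at hE
  rw [havoid, card_powersetCard, card_powersetCard, hm, hX] at hX4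
  lia

lemma IsTuran.isJoinTuran (h : IsTuran E X) : IsJoinTuran E X 0 :=
  ⟨∅, empty_subset X, card_empty, by simpa using h, by simp⟩

lemma IsJoinTuran.of_erase {v : α} (hv : v ∈ X)
    (h : IsJoinTuran {e ∈ E | v ∉ e} (X.erase v) t)
    (hstar : {e ∈ E | v ∈ e} = {e ∈ X.powersetCard 4 | v ∈ e}) : IsJoinTuran E X (t + 1) := by
  obtain ⟨K, hKX, hK, hturan, hmeet⟩ := h
  have hvK : v ∉ K := fun hvK ↦ notMem_erase v X (hKX hvK)
  refine ⟨insert v K, insert_subset hv (hKX.trans (erase_subset v X)),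
    by rw [card_insert_of_notMem hvK, hK], ?_, ?_⟩
  · have hX : X \ insert v K = X.erase v \ K := by rw [erase_sdiff_comm, sdiff_insert]
    simpa only [hX, filter_filter, disjoint_insert_right] using hturan
  · ext e
    by_cases hve : v ∈ e
    · simpa [hve] using Finset.ext_iff.1 hstar e
    · simpa [hve, mem_powersetCard, subset_erase] using Finset.ext_iff.1 hmeet e

/- If deleting any vertex left a matching of size `t`, its `7 * t` vertices would form a set whose
removal makes `E` triangle-free, so every degree would be close to that of a dense triangle-free
4-graph, which is far below `m.choose 3`. -/
lemma exists_not_hasTriangleMatching_erase {N : ℕ} (hN : 10 ^ 12 ≤ N)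
    (hE : E ⊆ X.powersetCard 4) (ht : 0 < t) (hX : #X = m + t) (hm : 10 ^ 13 ≤ m)
    (hmN : 2 * (N + N.choose 4) ≤ m) (htm : 10 ^ 13 * t ≤ m)
    (hno : ¬HasTriangleMatching E X (t + 1))
    (hcard : (m + t).choose 4 + balancedProd 4 m ≤ #E + m.choose 4) :
    ∃ v ∈ X, ¬HasTriangleMatching {e ∈ E | v ∉ e} (X.erase v) t := by
  by_contra! hall
  have hcover (v) (hv : v ∈ X) := exists_triangleFree_sdiff hE (filter_subset _ _)
    (erase_subset v X) (hall v hv) hno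
  have hbal : balancedProd 4 m ≤ #E := by
    have := Nat.choose_le_choose 4 (Nat.le_add_right m t)
    lia
  have hdeg (v) (hv : v ∈ X) : (degree E v : ℝ) ≤ 0.021 * (m : ℝ) ^ 3 := by
    obtain ⟨B, hBX, hB, hfree⟩ := hcover v hv
    exact hfree.degree_le_of_sdiff hE hX hm htm hbal (hBX.trans (erase_subset v X)) hB
      fun hvB ↦ notMem_erase v X (hBX hvB)
  obtain ⟨v, hv⟩ : X.Nonempty := card_pos.1 (by lia)
  obtain ⟨B, hBX, hB, hfree⟩ := hcover v hv
  exact absurd hcard (card_add_choose_lt_of_degree_le hN hE ht hX hm hmN htm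
    (hBX.trans (erase_subset v X)) hB hfree hdeg).not_ge

lemma isJoinTuran_of_not_hasTriangleMatching {N : ℕ} (hN : 10 ^ 12 ≤ N)
    (hE : E ⊆ X.powersetCard 4) (hX : #X = m + t) (hm : 10 ^ 13 ≤ m)
    (hmN : 2 * (N + N.choose 4) ≤ m) (htm : 10 ^ 13 * t ≤ m)
    (hno : ¬HasTriangleMatching E X (t + 1))
    (hcard : (m + t).choose 4 + balancedProd 4 m ≤ #E + m.choose 4) : IsJoinTuran E X t := by
  induction t generalizing E X with
  | zero =>
    have hempty : HasTriangleMatching E X 0 :=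
      ⟨Fin.elim0, (Fin.elim0 ·), (Fin.elim0 ·), (Fin.elim0 ·)⟩
    obtain ⟨B, -, hB, hfree⟩ := exists_triangleFree_sdiff hE Subset.rfl Subset.rfl hempty hno
    have hEX : {e ∈ E | e ⊆ X} = E :=
      filter_true_of_mem fun e he ↦ (mem_powersetCard.1 (hE he)).1
    rw [card_eq_zero.1 hB, sdiff_empty, hEX] at hfree
    exact (hfree.isTuran hN hE (by lia) (by rw [hX]; lia)).isJoinTuran
  | succ t ih =>
    obtain ⟨v, hv, hnov⟩ :=
      exists_not_hasTriangleMatching_erase hN hE t.succ_pos hX hm hmN htm hno hcard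
    have hXv : #(X.erase v) = m + t := by rw [card_erase_of_mem hv, hX]; lia
    have hstar : {e ∈ E | v ∈ e} ⊆ {e ∈ X.powersetCard 4 | v ∈ e} := filter_subset_filter _ hE
    have hfull : degree (X.powersetCard 4) v = (m + t).choose 3 := by
      simpa [hX] using degree_powersetCard hv 3
    have hdel := card_filter_notMem_add_degree E v
    have hdeg : degree E v ≤ (m + t).choose 3 := hfull ▸ card_le_card hstar
    rw [← add_assoc, Nat.choose_succ_succ] at hcard
    have hjoin := ih (filter_notMem_subset_powersetCard hE v) hXv (by lia) hnov (by lia)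
    have hjoin_card := hjoin.card_add_choose hXv
    refine hjoin.of_erase hv (eq_of_subset_of_card_le hstar ?_)
    change degree (X.powersetCard 4) v ≤ degree E v
    lia

lemma triangleFree_transversals_colorClass {ι : Type*} [Fintype ι] [DecidableEq ι] (χ : α → ι)
    (U : Finset α) : TriangleFree (transversals (colorClass χ U) univ) := by
  intro S x y e hxS hyS he hxy hxe hye hdisj
  obtain ⟨hyS', hinjy⟩ := mem_transversals_colorClass.1 hyS
  have hχ : χ x ∈ (insert y S).image χ := by
    rw [eq_univ_of_card _ ((card_image_of_injOn hinjy).trans (mem_powersetCard.1 hyS').2)]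
    exact mem_univ _
  obtain ⟨w, hw, hwx⟩ := mem_image.1 hχ
  obtain rfl | hwS := mem_insert.1 hw
  · exact hxy ((mem_transversals_colorClass.1 he).2 hxe hye hwx.symm)
  · have := (mem_transversals_colorClass.1 hxS).2 (mem_insert_of_mem hwS) (mem_insert_self x S) hwx
    exact disjoint_left.1 hdisj (this ▸ hwS) hxe

lemma IsJoinTuran.not_hasTriangleMatching (h : IsJoinTuran E X t) :
    ¬HasTriangleMatching E X (t + 1) := by
  obtain ⟨K, -, hK, ⟨χ, -, hχ⟩, -⟩ := h
  rintro ⟨S, -, hdisj, htri⟩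
  have hmeet (i) : ∃ v ∈ S i, v ∈ K := by
    rw [← not_disjoint_iff]
    refine fun hSK ↦ htri i ((triangleFree_transversals_colorClass χ (X \ K)).mono ?_)
    rw [← hχ]
    exact monotone_filter_right E fun _ _ heS ↦ disjoint_of_subset_left heS hSK
  choose f hfS hfK using hmeet
  have hf : Function.Injective f := fun i j hij ↦ by
    by_contra hne
    exact disjoint_left.1 (hdisj hne) (hfS i) (hij ▸ hfS j)
  have := card_le_card_of_injOn (s := univ) f (fun i _ ↦ hfK i) hf.injOn
  rw [card_univ, Fintype.card_fin, hK] at this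
  lia

end JoinTuran

section Labelling

open Finset

variable {α β ι : Type*} {X : Finset α}

lemma card_colorClass_comp [DecidableEq ι] {Y : Finset β} {f : α → β} (hf : Set.BijOn f X Y)
    (ℓ : β → ι) (i : ι) : #(colorClass (ℓ ∘ f) X i) = #(colorClass ℓ Y i) := by
  refine card_nbij f (fun v hv ↦ ?_) (hf.injOn.mono (coe_subset.2 (colorClass_subset _ X i)))
    fun w hw ↦ ?_
  · obtain ⟨hvX, hvi⟩ := mem_filter.1 hv
    exact mem_filter.2 ⟨hf.mapsTo hvX, hvi⟩
  · obtain ⟨hwY, hwi⟩ := mem_filter.1 hw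
    obtain ⟨v, hv, rfl⟩ := hf.surjOn hwY
    exact ⟨v, mem_filter.2 ⟨hv, hwi⟩, rfl⟩

lemma exists_bijOn_of_card_colorClass_eq [DecidableEq ι] [Nonempty β] {Y : Finset β} {ℓ : α → ι}
    {ℓ' : β → ι} (h : ∀ i, #(colorClass ℓ X i) = #(colorClass ℓ' Y i)) :
    ∃ f : α → β, Set.BijOn f X Y ∧ ∀ v ∈ X, ℓ' (f v) = ℓ v := by
  have hclass (i : ι) : ∃ f : α → β, Set.BijOn f (colorClass ℓ X i) (colorClass ℓ' Y i) :=
    (finite_toSet _).exists_bijOn_of_encard_eq (by simp [Set.encard_coe_eq_coe_finsetCard, h i])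
  choose g hg using hclass
  have hgX {v : α} (hv : v ∈ X) : g (ℓ v) v ∈ Y ∧ ℓ' (g (ℓ v) v) = ℓ v :=
    mem_filter.1 ((hg (ℓ v)).mapsTo (mem_filter.2 ⟨hv, rfl⟩))
  refine ⟨fun v ↦ g (ℓ v) v, ⟨fun v hv ↦ (hgX hv).1, fun u hu v hv huv ↦ ?_, fun w hw ↦ ?_⟩,
    fun v hv ↦ (hgX hv).2⟩
  · have hℓ : ℓ u = ℓ v := by
      rw [← (hgX hu).2, ← (hgX hv).2]
      exact congr_arg ℓ' huv
    refine (hg (ℓ u)).injOn (mem_filter.2 ⟨hu, rfl⟩) (mem_filter.2 ⟨hv, hℓ.symm⟩) (huv.trans ?_)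
    simp only [hℓ]
  · obtain ⟨v, hv, hvw⟩ := (hg (ℓ' w)).surjOn (mem_filter.2 ⟨hw, rfl⟩)
    obtain ⟨hvX, hvℓ⟩ := mem_filter.1 hv
    refine ⟨v, hvX, ?_⟩
    rw [← hvw, ← hvℓ]

lemma exists_perm_of_equitableOn [Fintype ι] {a b : ι → ℕ}
    (ha : ((univ : Finset ι) : Set ι).EquitableOn a)
    (hb : ((univ : Finset ι) : Set ι).EquitableOn b) (hab : ∑ i, a i = ∑ i, b i) :
    ∃ σ : Equiv.Perm ι, ∀ i, b (σ i) = a i := by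
  classical
  rw [equitableOn_iff] at ha hb
  rw [← hab] at hb
  set q := (∑ i, a i) / #(univ : Finset ι)
  have hsum {c : ι → ℕ} (hc : ∀ i ∈ univ, c i = q ∨ c i = q + 1) :
      ∑ i, c i = Fintype.card ι * q + Fintype.card {i // c i = q + 1} := by
    have hci (i : ι) : c i = q + if c i = q + 1 then 1 else 0 := by
      split_ifs with h
      · exact h
      · exact (hc i (mem_univ i)).resolve_right h
    rw [sum_congr rfl fun i _ ↦ hci i, sum_add_distrib, Fintype.card_subtype]
    simp
  have hcard : Fintype.card {i // a i = q + 1} = Fintype.card {i // b i = q + 1} := by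
    have := hsum ha
    have := hsum hb
    lia
  obtain ⟨e⟩ := Fintype.card_eq.1 hcard
  refine ⟨e.extendSubtype, fun i ↦ ?_⟩
  by_cases hi : a i = q + 1
  · rw [e.extendSubtype_mem i hi, hi]
  · rw [(ha i (mem_univ i)).resolve_right hi]
    exact (hb _ (mem_univ _)).resolve_right (e.extendSubtype_not_mem i hi)

variable {K : Finset α} {E : Finset (Finset α)} {t : ℕ} {χ : α → Fin 4} {ℓ : α → Option (Fin 4)}

/-- The edges of the join, on the vertex set `X`, of the complete 4-graph on the vertices labelled
`none` and the complete 4-partite 4-graph whose parts are the vertices labelled `some i`. Whether a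
4-set is an edge depends only on the set of its labels. -/
def joinEdges (ℓ : α → Option (Fin 4)) (X : Finset α) : Finset (Finset α) :=
  {e ∈ X.powersetCard 4 | none ∈ e.image ℓ ∨ #(e.image ℓ) = 4}

lemma mem_joinEdges {e : Finset α} :
    e ∈ joinEdges ℓ X ↔ e ∈ X.powersetCard 4 ∧ (none ∈ e.image ℓ ∨ #(e.image ℓ) = 4) :=
  mem_filter

lemma image_mem_powersetCard [DecidableEq β] {Y : Finset β} {f : α → β} (hf : Set.BijOn f X Y)
    {r : ℕ} {e : Finset α} (he : e ∈ X.powersetCard r) : e.image f ∈ Y.powersetCard r := by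
  obtain ⟨heX, her⟩ := mem_powersetCard.1 he
  refine mem_powersetCard.2 ⟨image_subset_iff.2 fun v hv ↦ hf.mapsTo (heX hv), ?_⟩
  rw [card_image_of_injOn (hf.injOn.mono (coe_subset.2 heX)), her]

lemma joinEdges_optionMap_comp {g : Fin 4 → Fin 4} (hg : Function.Injective g)
    (ℓ : α → Option (Fin 4)) (X : Finset α) : joinEdges (Option.map g ∘ ℓ) X = joinEdges ℓ X := by
  refine filter_congr fun e _ ↦ ?_
  rw [← image_image, card_image_of_injective _ (Option.map_injective hg)]
  simp

lemma mem_joinEdges_iff (hK : ∀ v ∈ X, ℓ v = none ↔ v ∈ K)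
    (hχ : ∀ v ∈ X, v ∉ K → ℓ v = some (χ v)) {e : Finset α} :
    e ∈ joinEdges ℓ X ↔ e ∈ X.powersetCard 4 ∧ (Disjoint e K → Set.InjOn χ e) := by
  rw [mem_joinEdges]
  refine and_congr_right fun he ↦ ?_
  obtain ⟨heX, he4⟩ := mem_powersetCard.1 he
  have hnone : none ∈ e.image ℓ ↔ ¬Disjoint e K := by
    simp only [mem_image, not_disjoint_iff]
    exact exists_congr fun v ↦ and_congr_right fun hv ↦ hK v (heX hv)
  rw [hnone, ← imp_iff_not_or]
  refine imp_congr_right fun hdisj ↦ ?_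
  have himage : e.image ℓ = (e.image χ).image some := by
    rw [image_image]
    exact image_congr fun v hv ↦ hχ v (heX hv) (disjoint_left.1 hdisj hv)
  rw [himage, card_image_of_injective _ (Option.some_injective _)]
  exact ⟨fun h ↦ card_image_iff.1 (h.trans he4.symm), fun h ↦ (card_image_of_injOn h).trans he4⟩

lemma colorClass_none (hKX : K ⊆ X) (hK : ∀ v ∈ X, ℓ v = none ↔ v ∈ K) :
    colorClass ℓ X none = K := by
  ext v
  exact mem_filter.trans
    ⟨fun ⟨hv, hvK⟩ ↦ (hK v hv).1 hvK, fun hvK ↦ ⟨hKX hvK, (hK v (hKX hvK)).2 hvK⟩⟩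

variable [DecidableEq α]

lemma colorClass_some (hK : ∀ v ∈ X, ℓ v = none ↔ v ∈ K)
    (hχ : ∀ v ∈ X, v ∉ K → ℓ v = some (χ v)) (i : Fin 4) :
    colorClass ℓ X (some i) = colorClass χ (X \ K) i := by
  ext v
  simp only [colorClass, mem_filter, Finset.mem_sdiff]
  refine ⟨fun ⟨hv, hi⟩ ↦ ?_, fun ⟨⟨hv, hvK⟩, hi⟩ ↦ ⟨hv, by rw [hχ v hv hvK, hi]⟩⟩
  have hvK : v ∉ K := fun h ↦ by simp [(hK v hv).2 h] at hi
  exact ⟨⟨hv, hvK⟩, Option.some_injective _ ((hχ v hv hvK).symm.trans hi)⟩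

lemma eq_joinEdges_iff (hK : ∀ v ∈ X, ℓ v = none ↔ v ∈ K)
    (hχ : ∀ v ∈ X, v ∉ K → ℓ v = some (χ v)) :
    E = joinEdges ℓ X ↔ {e ∈ E | Disjoint e K} = transversals (colorClass χ (X \ K)) univ ∧
      {e ∈ E | ¬Disjoint e K} = {e ∈ X.powersetCard 4 | ¬Disjoint e K} := by
  simp only [Finset.ext_iff, mem_joinEdges_iff hK hχ, mem_filter, mem_transversals_colorClass,
    Fintype.card_fin, mem_powersetCard, subset_sdiff, ← forall_and]
  refine forall_congr' fun e ↦ ?_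
  tauto

lemma isJoinTuran_iff_exists_label :
    IsJoinTuran E X t ↔ ∃ ℓ : α → Option (Fin 4), #(colorClass ℓ X none) = t ∧
      ((univ : Finset (Fin 4)) : Set (Fin 4)).EquitableOn (fun i ↦ #(colorClass ℓ X (some i))) ∧
      E = joinEdges ℓ X := by
  constructor
  · rintro ⟨K, hKX, hKt, ⟨χ, hχ, hE⟩, hE'⟩
    set ℓ : α → Option (Fin 4) := fun v ↦ if v ∈ K then none else some (χ v) with hℓ
    have hℓK : ∀ v ∈ X, ℓ v = none ↔ v ∈ K := fun v _ ↦ by simp [hℓ]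
    have hℓχ : ∀ v ∈ X, v ∉ K → ℓ v = some (χ v) := fun v _ hv ↦ if_neg hv
    refine ⟨ℓ, by rw [colorClass_none hKX hℓK, hKt], ?_, (eq_joinEdges_iff hℓK hℓχ).2 ⟨hE, hE'⟩⟩
    simpa only [colorClass_some hℓK hℓχ] using hχ
  · rintro ⟨ℓ, hℓt, hℓ, hE⟩
    have hℓK : ∀ v ∈ X, ℓ v = none ↔ v ∈ colorClass ℓ X none := fun v hv ↦ by
      simp [colorClass, hv]
    have hℓχ : ∀ v ∈ X, v ∉ colorClass ℓ X none → ℓ v = some ((ℓ v).getD 0) := fun v hv hvK ↦ by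
      obtain ⟨i, hi⟩ := Option.ne_none_iff_exists'.1 (mt (hℓK v hv).1 hvK)
      simp [hi]
    obtain ⟨hE, hE'⟩ := (eq_joinEdges_iff hℓK hℓχ).1 hE
    refine ⟨colorClass ℓ X none, colorClass_subset ℓ X none, hℓt, ⟨_, ?_, hE⟩, hE'⟩
    simpa only [colorClass_some hℓK hℓχ] using hℓ

/- The Turán parts may appear in different orders, so the labels are permuted before matching. -/
lemma IsJoinTuran.exists_bijOn [DecidableEq β] [Nonempty β] {Y : Finset β} {F : Finset (Finset β)}
    (hE : IsJoinTuran E X t) (hF : IsJoinTuran F Y t) (hXY : #X = #Y) :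
    ∃ f : α → β, Set.BijOn f X Y ∧ ∀ e ∈ X.powersetCard 4, e ∈ E ↔ e.image f ∈ F := by
  obtain ⟨ℓ, hℓt, hℓ, rfl⟩ := isJoinTuran_iff_exists_label.1 hE
  obtain ⟨ℓ', hℓt', hℓ', rfl⟩ := isJoinTuran_iff_exists_label.1 hF
  have hsum : ∑ i, #(colorClass ℓ X (some i)) = ∑ i, #(colorClass ℓ' Y (some i)) := by
    have := sum_card_colorClass ℓ X
    have := sum_card_colorClass ℓ' Y
    rw [Fintype.sum_option] at *
    lia
  obtain ⟨σ, hσ⟩ := exists_perm_of_equitableOn hℓ hℓ' hsum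
  have hclass (i : Option (Fin 4)) :
      #(colorClass ℓ X i) = #(colorClass (Option.map σ.symm ∘ ℓ') Y i) := by
    have heq : colorClass (Option.map σ.symm ∘ ℓ') Y i = colorClass ℓ' Y (i.map σ) :=
      filter_congr fun v _ ↦ by cases i <;> simp [Option.map_eq_some_iff, Equiv.symm_apply_eq]
    cases i with
    | none => simp [heq, hℓt, hℓt']
    | some i => simp [heq, hσ]
  obtain ⟨f, hf, hfℓ⟩ := exists_bijOn_of_card_colorClass_eq hclass
  refine ⟨f, hf, fun e he ↦ ?_⟩
  obtain ⟨heX, -⟩ := mem_powersetCard.1 he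
  have himage : (e.image f).image (Option.map σ.symm ∘ ℓ') = e.image ℓ := by
    rw [image_image]
    exact image_congr fun v hv ↦ hfℓ v (heX hv)
  rw [← joinEdges_optionMap_comp σ.symm.injective ℓ', mem_joinEdges, mem_joinEdges, himage,
    and_iff_right he, and_iff_right (image_mem_powersetCard hf he)]

lemma IsJoinTuran.of_bijOn [DecidableEq β] {Y : Finset β} {F : Finset (Finset β)}
    (hF : IsJoinTuran F Y t) {f : α → β} (hf : Set.BijOn f X Y) (hE : E ⊆ X.powersetCard 4)
    (hEF : ∀ e ∈ X.powersetCard 4, e ∈ E ↔ e.image f ∈ F) : IsJoinTuran E X t := by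
  obtain ⟨ℓ, hℓt, hℓ, rfl⟩ := isJoinTuran_iff_exists_label.1 hF
  refine isJoinTuran_iff_exists_label.2 ⟨ℓ ∘ f, ?_, ?_, ?_⟩
  · rw [card_colorClass_comp hf, hℓt]
  · simpa only [card_colorClass_comp hf] using hℓ
  · ext e
    rw [mem_joinEdges, ← image_image]
    refine ⟨fun he ↦ ⟨hE he, (mem_joinEdges.1 ((hEF e (hE he)).1 he)).2⟩, fun ⟨he, hℓe⟩ ↦ ?_⟩
    exact (hEF e he).2 (mem_joinEdges.2 ⟨image_mem_powersetCard hf he, hℓe⟩)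

end Labelling

section Translation

open Finset

variable {r : ℕ} {G H : HGraph r}

lemma HGraph.edges_subset_powersetCard (H : HGraph r) : H.edges ⊆ H.verts.powersetCard r :=
  fun e he ↦ mem_powersetCard.2 ⟨H.edges_sub e he, H.edges_card e he⟩

lemma HGraph.edges_induce (H : HGraph r) (S : Finset ℕ) :
    (H.induce S).edges = {e ∈ H.edges | e ⊆ S} :=
  filter_true_of_mem fun e he ↦
    have ⟨heH, heS⟩ := mem_filter.1 he
    ⟨subset_inter (H.edges_sub e heH) heS, H.edges_card e heH⟩

lemma verts_genTri_four : (genTri 4).verts = {1, 2, 3} ∪ {4, 5, 6, 7} := by decide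

lemma edges_genTri_four : (genTri 4).edges = {{4, 1, 2, 3}, {5, 1, 2, 3}, {4, 5, 6, 7}} := by
  decide

lemma not_triangleFree_of_isCopyIn_genTri {H : HGraph 4} (h : (genTri 4).IsCopyIn H) :
    ¬TriangleFree H.edges := by
  obtain ⟨f, hinj, -, hedge⟩ := h
  rw [verts_genTri_four, coe_union] at hinj
  simp only [edges_genTri_four, forall_mem_insert, mem_singleton, forall_eq] at hedge
  obtain ⟨h₄, h₅, h₄₅⟩ := hedge
  rw [image_insert] at h₄ h₅
  refine fun hfree ↦ hfree h₄ h₅ h₄₅ (fun h ↦ ?_) (by simp) (by simp) ?_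
  · simpa using hinj (by simp) (by simp) h
  · rw [disjoint_iff_inter_eq_empty, ← image_inter_of_injOn _ _ hinj]
    rfl

/- The copy sends `1, 2, 3` to the common triple, `4, 5` to the two apexes and `6, 7` to the
remaining vertices of the third edge. -/
lemma isCopyIn_genTri_of_not_triangleFree {H : HGraph 4} (h : ¬TriangleFree H.edges) :
    (genTri 4).IsCopyIn H := by
  simp only [TriangleFree, not_forall, not_not] at h
  obtain ⟨S, x, y, e, hxS, hyS, he, hxy, hxe, hye, hdisj⟩ := h
  have hS3 : #S = 3 := by
    have := H.edges_card _ hxS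
    rw [card_insert_of_notMem fun hx ↦ disjoint_left.1 hdisj hx hxe] at this
    lia
  have hyex : y ∈ e.erase x := mem_erase.2 ⟨hxy.symm, hye⟩
  have hrest2 : #((e.erase x).erase y) = 2 := by
    rw [card_erase_of_mem hyex, card_erase_of_mem hxe, H.edges_card e he]
  obtain ⟨a, b, c, -, -, -, rfl⟩ := card_eq_three.1 hS3
  obtain ⟨z, w, -, hzw⟩ := card_eq_two.1 hrest2
  obtain rfl : e = {x, y, z, w} := by rw [← hzw, insert_erase hyex, insert_erase hxe]
  set f : ℕ → ℕ := fun k ↦ [a, b, c, x, y, z, w].getD (k - 1) 0 with hf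
  have hS : ({1, 2, 3} : Finset ℕ).image f = {a, b, c} := by simp [hf]
  have he' : ({4, 5, 6, 7} : Finset ℕ).image f = {x, y, z, w} := by simp [hf]
  have hedges : ∀ e ∈ (genTri 4).edges, e.image f ∈ H.edges := by
    simp only [edges_genTri_four, forall_mem_insert, mem_singleton, forall_eq, he', he, and_true]
    rw [image_insert (a := 4), image_insert (a := 5), hS]
    exact ⟨hxS, hyS⟩
  refine ⟨f, ?_, fun v hv ↦ ?_, hedges⟩
  · rw [← card_image_iff, verts_genTri_four, image_union, hS, he', card_union_of_disjoint hdisj,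
      hS3, H.edges_card _ he]
    rfl
  · obtain ⟨e, he, hve⟩ : ∃ e ∈ (genTri 4).edges, v ∈ e := by
      revert v
      decide
    exact H.edges_sub _ (hedges e he) (mem_image_of_mem f hve)

lemma hasMatching_genTri_iff {H : HGraph 4} {k : ℕ} :
    (genTri 4).HasMatching H k ↔ HasTriangleMatching H.edges H.verts k := by
  have hcopy (S : Finset ℕ) :
      (genTri 4).IsCopyIn (H.induce S) ↔ ¬TriangleFree {e ∈ H.edges | e ⊆ S} := by
    rw [← H.edges_induce]
    exact ⟨not_triangleFree_of_isCopyIn_genTri, isCopyIn_genTri_of_not_triangleFree⟩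
  have hcard : #(genTri 4).verts = 7 := by decide
  simp only [HGraph.HasMatching, HasTriangleMatching, hcopy, hcard, Pairwise]

lemma HGraph.Iso.card_verts (h : G.Iso H) : #G.verts = #H.verts := by
  obtain ⟨f, hf, -⟩ := h
  exact card_nbij f hf.mapsTo hf.injOn hf.surjOn

lemma iso_iff_isJoinTuran {G T : HGraph 4} {t : ℕ} (hT : IsJoinTuran T.edges T.verts t) :
    G.Iso T ↔ #G.verts = #T.verts ∧ IsJoinTuran G.edges G.verts t := by
  refine ⟨fun h ↦ ⟨h.card_verts, ?_⟩, fun ⟨hcard, hG⟩ ↦ hG.exists_bijOn hT hcard⟩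
  obtain ⟨f, hf, hGT⟩ := h
  exact hT.of_bijOn hf G.edges_subset_powersetCard hGT

lemma card_filter_Ico_eq {r : ℕ} [NeZero r] (a k : ℕ) (i : Fin r) :
    #{v ∈ Ico a (a + k) | Fin.ofNat r v = i} + (a / r + if (i : ℕ) < a % r then 1 else 0) =
      (a + k) / r + if (i : ℕ) < (a + k) % r then 1 else 0 := by
  have hcount (b : ℕ) : #{v ∈ range b | Fin.ofNat r v = i} =
      b / r + if (i : ℕ) < b % r then 1 else 0 := by
    have hi : (i : ℕ) % r = i := Nat.mod_eq_of_lt i.2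
    rw [← Nat.count_eq_card_filter_range]
    simpa only [Nat.ModEq, hi, Fin.ext_iff, Fin.val_ofNat] using
      Nat.count_modEq_card b (NeZero.pos r) i
  rw [← hcount, ← hcount, range_eq_Ico, range_eq_Ico,
    ← Ico_union_Ico_eq_Ico a.zero_le (Nat.le_add_right a k), filter_union,
    card_union_of_disjoint (disjoint_filter_filter (Ico_disjoint_Ico_consecutive 0 a (a + k))),
    add_comm]

lemma equitableOn_card_filter_Ico (r : ℕ) [NeZero r] (a k : ℕ) :
    ((univ : Finset (Fin r)) : Set (Fin r)).EquitableOn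
      fun i ↦ #{v ∈ Ico a (a + k) | Fin.ofNat r v = i} := by
  intro i j _ _
  have hi := card_filter_Ico_eq a k i
  have hj := card_filter_Ico_eq a k j
  dsimp only
  split_ifs at hi hj <;> lia

lemma mem_edges_join_turanOn {ℓ : ℕ} {V W e : Finset ℕ} :
    e ∈ ((completeOn r V).join (turanOn r ℓ W)).edges ↔
      e ∈ (V ∪ W).powersetCard r ∧ (Disjoint e V → Set.InjOn (· % ℓ) (e : Set ℕ)) := by
  unfold HGraph.join completeOn turanOn HGraph.ofEdges
  simp only [mem_filter, Finset.mem_union, mem_powersetCard]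
  constructor
  · rintro ⟨(hV | hW) | hVW, he⟩ <;> refine ⟨he, fun hdisj ↦ ?_⟩
    · simp [disjoint_self_iff_empty e |>.1 (hdisj.mono_right hV.1.1)]
    · exact fun u hu v hv ↦ hW.1.2 u hu v hv
    · exact absurd hdisj (not_disjoint_iff_nonempty_inter.2 hVW.2.1)
  · rintro ⟨⟨heVW, he⟩, hinj⟩
    refine ⟨?_, heVW, he⟩
    by_cases hdisj : Disjoint e V
    · have heW : e ⊆ W := hdisj.left_le_of_le_sup_left heVW
      exact .inl (.inr ⟨⟨⟨heW, he⟩, fun u hu v hv ↦ hinj hdisj hu hv⟩, heW, he⟩)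
    by_cases heV : e ⊆ V
    · exact .inl (.inl ⟨⟨heV, he⟩, heV, he⟩)
    · obtain ⟨v, hve, hvV⟩ := not_subset.1 heV
      refine .inr ⟨⟨heVW, he⟩, not_disjoint_iff_nonempty_inter.1 hdisj, v, ?_⟩
      exact mem_inter.2 ⟨hve, (Finset.mem_union.1 (heVW hve)).resolve_left hvV⟩

lemma verts_join_turanOn (r ℓ : ℕ) {t n : ℕ} (htn : t ≤ n) :
    ((completeOn r (range t)).join (turanOn r ℓ (Ico t n))).verts = range n := by
  change range t ∪ Ico t n = range n
  simp only [range_eq_Ico, Ico_union_Ico_eq_Ico t.zero_le htn]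

lemma isJoinTuran_join_turanOn {t n : ℕ} (htn : t ≤ n) :
    IsJoinTuran ((completeOn 4 (range t)).join (turanOn 4 4 (Ico t n))).edges (range n) t := by
  have hunion : range t ∪ Ico t n = range n := verts_join_turanOn 4 4 htn
  obtain ⟨k, rfl⟩ := Nat.exists_eq_add_of_le htn
  have hsdiff : range (t + k) \ range t = Ico t (t + k) := by
    ext v
    simp only [Finset.mem_sdiff, mem_range, mem_Ico]
    lia
  set ℓ : ℕ → Option (Fin 4) := fun v ↦ if v ∈ range t then none else some (Fin.ofNat 4 v) with hℓ
  have hℓK : ∀ v ∈ range (t + k), ℓ v = none ↔ v ∈ range t := fun v _ ↦ by simp [hℓ]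
  have hℓχ : ∀ v ∈ range (t + k), v ∉ range t → ℓ v = some (Fin.ofNat 4 v) :=
    fun v _ hv ↦ if_neg hv
  refine isJoinTuran_iff_exists_label.2 ⟨ℓ, ?_, ?_, ?_⟩
  · rw [colorClass_none (range_subset_range.2 (Nat.le_add_right t k)) hℓK, card_range]
  · simp only [colorClass_some hℓK hℓχ, hsdiff]
    exact equitableOn_card_filter_Ico 4 t k
  · ext e
    rw [mem_edges_join_turanOn, mem_joinEdges_iff hℓK hℓχ, hunion]
    simp only [Set.InjOn, Fin.ext_iff, Fin.val_ofNat]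

end Translation

section Extremal

open Finset

variable {H T : HGraph 4} {N m t : ℕ}

lemma card_add_choose_le_of_not_hasMatching (hN : 10 ^ 12 ≤ N) (hm : 10 ^ 13 ≤ m)
    (hmN : 2 * (N + N.choose 4) ≤ m) (htm : 10 ^ 13 * t ≤ m) (hH : #H.verts = m + t)
    (hno : ¬(genTri 4).HasMatching H (t + 1)) :
    #H.edges + m.choose 4 ≤ (m + t).choose 4 + balancedProd 4 m := by
  by_contra! hlt
  have hjoin := isJoinTuran_of_not_hasTriangleMatching hN H.edges_subset_powersetCard hH hm hmN htm
    (mt hasMatching_genTri_iff.2 hno) hlt.le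
  exact hlt.ne' (hjoin.card_add_choose hH)

lemma exMatchN_add_choose (hN : 10 ^ 12 ≤ N) (hm : 10 ^ 13 ≤ m) (hmN : 2 * (N + N.choose 4) ≤ m)
    (htm : 10 ^ 13 * t ≤ m) (hT : #T.verts = m + t) (hjoin : IsJoinTuran T.edges T.verts t) :
    exMatchN 4 (m + t) t (genTri 4) + m.choose 4 = (m + t).choose 4 + balancedProd 4 m := by
  have hcard := hjoin.card_add_choose hT
  suffices exMatchN 4 (m + t) t (genTri 4) = #T.edges by rw [this, hcard]
  refine IsGreatest.csSup_eq
    ⟨⟨T, hT, mt hasMatching_genTri_iff.1 hjoin.not_hasTriangleMatching, rfl⟩, ?_⟩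
  rintro _ ⟨H, hH, hno, rfl⟩
  have := card_add_choose_le_of_not_hasMatching hN hm hmN htm hH hno
  lia

lemma isExtremalMatchingFree_genTri_iff (hN : 10 ^ 12 ≤ N) (hm : 10 ^ 13 ≤ m)
    (hmN : 2 * (N + N.choose 4) ≤ m) (htm : 10 ^ 13 * t ≤ m) (hT : #T.verts = m + t)
    (hjoin : IsJoinTuran T.edges T.verts t) :
    IsExtremalMatchingFree 4 (m + t) t (genTri 4) H ↔
      #H.verts = m + t ∧ IsJoinTuran H.edges H.verts t := by
  have hex := exMatchN_add_choose hN hm hmN htm hT hjoin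
  refine and_congr_right fun hH ↦ ⟨?_, fun h ↦ ?_⟩
  · rintro ⟨hno, hcard : #H.edges = _⟩
    exact isJoinTuran_of_not_hasTriangleMatching hN H.edges_subset_powersetCard hH hm hmN htm
      (mt hasMatching_genTri_iff.2 hno) (by rw [hcard, hex])
  · have := h.card_add_choose hH
    exact ⟨mt hasMatching_genTri_iff.1 h.not_hasTriangleMatching, by lia⟩

lemma exists_eq_add_of_cast_le_one_div_mul {Q n : ℕ} (hQ : 0 < Q)
    (h : (t : ℝ) ≤ 1 / (2 * Q) * n) : ∃ m, n = m + t ∧ Q * t ≤ m := by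
  have hQ' : (0 : ℝ) < 2 * Q := by positivity
  rw [one_div_mul_eq_div, le_div_iff₀' hQ'] at h
  have hn : 2 * Q * t ≤ n := by exact_mod_cast h
  have ht : t ≤ Q * t := Nat.le_mul_of_pos_left t hQ
  exact ⟨n - t, by lia, by lia⟩

end Extremal

/-- the density Corrádi–Hajnal theorem for the 4-uniform
generalized triangle. -/
theorem statement_8 :
    ∃ N₀ : ℕ, ∃ c : ℝ, 0 < c ∧ ∀ n : ℕ, N₀ ≤ n → ∀ t : ℕ, (t : ℝ) ≤ c * n →
      ∀ H : HGraph 4, IsExtremalMatchingFree 4 n t (genTri 4) H ↔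
        H.Iso ((completeOn 4 (Finset.range t)).join (turanOn 4 4 (Finset.Ico t n))) := by
  obtain ⟨N, hN⟩ : ∃ N, 10 ^ 12 ≤ N := ⟨_, le_rfl⟩
  refine ⟨2 * (2 * (N + N.choose 4) + 10 ^ 13), 1 / (2 * (10 ^ 13 : ℕ)), by positivity,
    fun n hn t ht H ↦ ?_⟩
  obtain ⟨m, rfl, htm⟩ := exists_eq_add_of_cast_le_one_div_mul (by positivity) ht
  have htn : t ≤ m + t := Nat.le_add_left t m
  have hverts := verts_join_turanOn 4 4 htn
  have hcard := (congrArg Finset.card hverts).trans (Finset.card_range _)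
  have hjoin := isJoinTuran_join_turanOn htn
  rw [← hverts] at hjoin
  rw [isExtremalMatchingFree_genTri_iff hN (by lia) (by lia) htm hcard hjoin,
    iso_iff_isJoinTuran hjoin, hcard]

end DensityCH
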